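/- Value of the marker game when the fast player holds the marker: let W(v) denote the value of the marker game in which player I has speed bound 1 and holds the marker while player II has speed bound v ≤ 1. Then (i) for v ∈ [1/1000, 618/1000], W(v) = (4v²+16v+8)/(1+v)²; (ii) for v ∈ [619/1000, 805/1000], W(v) = (16v²+28v+8)/(1+v)³; (iii) for v ∈ [807/1000, 966/1000], W(v) = (24v²+52v+20)/((v+1)²(3v+1)). In particular, in cases (i) and (ii) the marker is not useful: W(v) equals the value of the game without marker. -/

import Mathlib

/-! *Upper bounds.* Explicit trajectories with at most four linear pieces attain the three values
(`values_slow`, `values_middle`, `value_fast`). In the first two the marker plays no role, and the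
same trajectories serve for the game without marker.

*Lower bounds.* A profile gives rise to a finite list of events: the drop of the marker, the
moments at which agents find it, and the four rendezvous. By continuity, an agent finding the
marker has crossed from its starting side and hence goes on with velocity `-o * v`, which fixes
its rendezvous equation (`met_of_agentTraj`). All that is kept of the trajectories is the position
`x` of the fast player and the displacement `y` of the slow one at these events, subject to the
speed bounds between any two of them (`Worldline`). Once the set of agents finding the marker and
enough of the order of the events are fixed, this is a linear program in the event times and
positions, and the bound on its minimum is a linear combination of speed bounds with nonnegative
multipliers (Farkas). The multipliers are polynomials in `v`; where one of them changes sign the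
speed interval is split and another dual solution is used. All three candidate values are treated
together: the combination refutes the assumption `Below v S` that the sum `S` of the rendezvous
times is less than each of them. In the first two regimes the marker can therefore not help.

Reflecting the line and exchanging the two directions of player II act on the sixteen sets of
agents finding the marker; up to these symmetries the seven lemmas `caseA`, …, `caseG` cover all
of them (`not_below`).

*Numbering in these lemmas.* Event `0` is the start and event `1` the drop of the marker, at
`(z, m, w)`. The agents `(1, 1)`, `(1, -1)`, `(-1, 1)`, `(-1, -1)` find the marker, if they do, at
events `2`, `3`, `4`, `5` (times `s2`, …, `s5`) and are met at events `6`, `7`, `8`, `9` (times `t6`,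
…, `t9`). `hij` states that event `i` is not later than event `j`, and `Ei` that the worldline passes
through event `i`. Each leaf of a case tree is one certificate.
-/

open Set

/-- `Strat α` is the set of trajectories with speed bound `α`: functions starting at `0`
which are `α`-Lipschitz on `[0, ∞)`. -/
def Strat (α : ℝ) : Set (ℝ → ℝ) :=
  {f | f 0 = 0 ∧ ∀ s t : ℝ, 0 ≤ s → 0 ≤ t → |f s - f t| ≤ α * |s - t|}

/-- The set of times at which player I (trajectory `f`) meets the agent of player II
starting at `o` with forward direction `b` (trajectory `o + b • g`). -/
def meetSet (f g : ℝ → ℝ) (o b : ℝ) : Set ℝ := {t | 0 ≤ t ∧ f t = o + b * g t}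

/-- The rendezvous time with the agent `(o, b)`. -/
noncomputable def meetTime (f g : ℝ → ℝ) (o b : ℝ) : ℝ := sInf (meetSet f g o b)

/-- All four rendezvous times are finite, i.e. the four meeting sets are nonempty. -/
def AllFinite (f g : ℝ → ℝ) : Prop :=
  (meetSet f g 1 1).Nonempty ∧ (meetSet f g 1 (-1)).Nonempty ∧
    (meetSet f g (-1) 1).Nonempty ∧ (meetSet f g (-1) (-1)).Nonempty

/-- The sum `t¹ + t² + t³ + t⁴` of the four rendezvous times. -/
noncomputable def sumTimes (f g : ℝ → ℝ) : ℝ :=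
  meetTime f g 1 1 + meetTime f g 1 (-1) + meetTime f g (-1) 1 + meetTime f g (-1) (-1)

/-- The multiset of the four rendezvous times of the pair `(f, g)`. -/
noncomputable def timesMultiset (f g : ℝ → ℝ) : Multiset ℝ :=
  {meetTime f g 1 1, meetTime f g 1 (-1), meetTime f g (-1) 1, meetTime f g (-1) (-1)}

/-- The rendezvous value of the game: infimum of `t¹ + t² + t³ + t⁴` over all pairs of
strategies with finite rendezvous times, for slow-player speed bound `v`. -/
noncomputable def V (v : ℝ) : ℝ :=
  sInf {S | ∃ f ∈ Strat v, ∃ g ∈ Strat 1, AllFinite f g ∧ S = sumTimes f g}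

/-- `PiecewiseLin S g` : `g` starts at `0` and is piecewise linear with finitely many
pieces, each slope belonging to `S` (the last piece extending to `+∞`). -/
def PiecewiseLin (S : Set ℝ) (g : ℝ → ℝ) : Prop :=
  g 0 = 0 ∧ ∃ (n : ℕ) (τ : ℕ → ℝ) (c : ℕ → ℝ),
    τ 0 = 0 ∧ (∀ i, i < n → τ i ≤ τ (i + 1)) ∧ (∀ i, i ≤ n → c i ∈ S) ∧
    (∀ i, i < n → ∀ t, τ i ≤ t → t ≤ τ (i + 1) → g t = g (τ i) + c i * (t - τ i)) ∧
    (∀ t, τ n ≤ t → g t = g (τ n) + c n * (t - τ n))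

/-- `AgentTraj f g z sAfter o b p` : `p` is the trajectory of the agent of player II
with starting point `o` and forward direction `b`, when player I moves along `f` and
drops a marker at position `f z` at time `z`, and player II's strategy is `g`. The agent
follows `o + b • g` until the first time `τ ≥ z` (if any, occurring before its rendezvous
with player I) at which it stands on the marker; from then on it moves at speed `sAfter`
in its direction of motion at time `τ⁻`. -/
def AgentTraj (f g : ℝ → ℝ) (z sAfter o b : ℝ) (p : ℝ → ℝ) : Prop :=
  -- either the agent never finds the marker before its rendezvous and `p = o + b • g` …
  ((∀ t, p t = o + b * g t) ∧
    ¬∃ τ, z ≤ τ ∧ o + b * g τ = f z ∧ ∀ t, 0 ≤ t → t < τ → f t ≠ o + b * g t) ∨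
  -- … or it finds the marker at time `τ`, before its rendezvous, and continues at
  -- speed `sAfter` in its direction `d` of motion at time `τ⁻` (of left slope `c`).
  ∃ τ c d, z ≤ τ ∧ o + b * g τ = f z ∧
    (∀ t, 0 ≤ t → t < τ → f t ≠ o + b * g t) ∧
    (∀ t, z ≤ t → t < τ → o + b * g t ≠ f z) ∧
    (0 < τ → ∃ ε > 0, ∀ s, τ - ε ≤ s → s ≤ τ → o + b * g s = o + b * g τ + c * (s - τ)) ∧
    (d = sAfter ∨ d = -sAfter) ∧ (0 < c → d = sAfter) ∧ (c < 0 → d = -sAfter) ∧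
    (∀ t, 0 ≤ t → t ≤ τ → p t = o + b * g t) ∧
    (∀ t, τ ≤ t → p t = o + b * g τ + d * (t - τ))

/-- The rendezvous time of player I (at `f`) with an agent moving along `p`. -/
noncomputable def rdvTime (f p : ℝ → ℝ) : ℝ := sInf {t | 0 ≤ t ∧ f t = p t}

/-- A full strategy profile for the marker game: player I plays a piecewise linear
trajectory `f` with slopes in `Sf` and drops the marker at time `z ≥ 0`; player II plays
a piecewise linear `g` with slopes in `Sg`; `p o b` is the resulting trajectory of the
agent `(o, b)`, which moves at speed `sAfter` after finding the marker, and each of the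
four rendezvous times is finite. -/
def MarkerProfile (Sf Sg : Set ℝ) (sAfter : ℝ) (f g : ℝ → ℝ) (z : ℝ)
    (p : ℝ → ℝ → ℝ → ℝ) : Prop :=
  PiecewiseLin Sf f ∧ PiecewiseLin Sg g ∧ 0 ≤ z ∧
    ∀ o b : ℝ, (o = 1 ∨ o = -1) → (b = 1 ∨ b = -1) →
      AgentTraj f g z sAfter o b (p o b) ∧ {t | 0 ≤ t ∧ f t = p o b t}.Nonempty

/-- The sum of the four rendezvous times in the marker game. -/
noncomputable def markerSum (f : ℝ → ℝ) (p : ℝ → ℝ → ℝ → ℝ) : ℝ :=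
  rdvTime f (p 1 1) + rdvTime f (p 1 (-1)) + rdvTime f (p (-1) 1) + rdvTime f (p (-1) (-1))

/-- The value of the marker game: infimum of the sum of the four rendezvous times. -/
noncomputable def markerValue (Sf Sg : Set ℝ) (sAfter : ℝ) : ℝ :=
  sInf {S | ∃ f g z p, MarkerProfile Sf Sg sAfter f g z p ∧ S = markerSum f p}

/-- `Vm v` : value of the marker game where the slow player (speed bound `v`) holds the
marker and the fast player (speed bound `1`, always moving at full speed) searches. -/
noncomputable def Vm (v : ℝ) : ℝ := markerValue (Icc (-v) v) {-1, 1} 1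

/-- `W v` : value of the marker game where the fast player (speed bound `1`) holds the
marker and the slow player (speed bound `v`) searches, moving at maximal speed `v` after
finding the marker. -/
noncomputable def W (v : ℝ) : ℝ := markerValue (Icc (-1) 1) (Icc (-v) v) v

namespace FastMarker

/-! ### Worldlines and multipliers -/

/-- An abstraction of a pair of trajectories: `P t x y` says that at time `t` the fast player is
at `x` and the slow player's displacement is `y`. Only these points and the speed bounds `1` and
`v` between them matter for the lower bound. -/
structure Worldline (v : ℝ) (P : ℝ → ℝ → ℝ → Prop) : Prop where
  origin : P 0 0 0
  nonneg : ∀ {t x y}, P t x y → 0 ≤ t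
  fast : ∀ {t x y t' x' y'}, P t x y → P t' x' y' → t ≤ t' → |x' - x| ≤ t' - t
  slow : ∀ {t x y t' x' y'}, P t x y → P t' x' y' → t ≤ t' → |y' - y| ≤ v * (t' - t)

namespace Worldline

variable {v : ℝ} {P : ℝ → ℝ → ℝ → Prop} {t x y t' x' y' : ℝ}

/-- The upper speed bound for the fast player, with a nonnegative multiplier `p`. This and its
three companions are the inequalities combined in the certificates below. -/
theorem xU (W : Worldline v P) (p : ℝ) (h : P t x y) (h' : P t' x' y')
    (hle : t ≤ t' := by assumption) (hp : 0 ≤ p := by positivity) : 0 ≤ p * (t' - t - (x' - x)) :=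
  mul_nonneg hp (by linarith [le_abs_self (x' - x), W.fast h h' hle])

theorem xL (W : Worldline v P) (p : ℝ) (h : P t x y) (h' : P t' x' y')
    (hle : t ≤ t' := by assumption) (hp : 0 ≤ p := by positivity) : 0 ≤ p * (t' - t + (x' - x)) :=
  mul_nonneg hp (by linarith [neg_abs_le (x' - x), W.fast h h' hle])

theorem yU (W : Worldline v P) (p : ℝ) (h : P t x y) (h' : P t' x' y')
    (hle : t ≤ t' := by assumption) (hp : 0 ≤ p := by positivity) :
    0 ≤ p * (v * (t' - t) - (y' - y)) :=
  mul_nonneg hp (by linarith [le_abs_self (y' - y), W.slow h h' hle])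

theorem yL (W : Worldline v P) (p : ℝ) (h : P t x y) (h' : P t' x' y')
    (hle : t ≤ t' := by assumption) (hp : 0 ≤ p := by positivity) :
    0 ≤ p * (v * (t' - t) + (y' - y)) :=
  mul_nonneg hp (by linarith [neg_abs_le (y' - y), W.slow h h' hle])

end Worldline

/-- The union of the three speed intervals, extended down to `0`. The two gaps isolate the
speeds at which the minimum of the three candidate values switches. -/
structure Range (v : ℝ) : Prop where
  pos : 0 < v
  le : v ≤ 966 / 1000
  gap1 : v ≤ 618 / 1000 ∨ 619 / 1000 ≤ v
  gap2 : v ≤ 805 / 1000 ∨ 807 / 1000 ≤ v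

/-- In the first gap lies the root of `v ^ 2 + v = 1`, where the values without marker cross. -/
theorem Range.golden {v : ℝ} (R : Range v) :
    v ≤ 618 / 1000 ∧ 0 ≤ 1 - v - v ^ 2 ∨ 619 / 1000 ≤ v ∧ 0 ≤ -1 + v + v ^ 2 :=
  R.gap1.imp (fun h => ⟨h, by nlinarith [R.pos]⟩) fun h => ⟨h, by nlinarith⟩

/-- The sum `S` is smaller than all three candidate values. The minimum of these is the value
of the game, so excluding `Below v S` gives the lower bound in all regimes at once. -/
def Below (v S : ℝ) : Prop :=
  S * (1 + v) ^ 2 < 4 * v ^ 2 + 16 * v + 8 ∧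
    S * (1 + v) ^ 3 < 16 * v ^ 2 + 28 * v + 8 ∧
    S * ((v + 1) ^ 2 * (3 * v + 1)) < 24 * v ^ 2 + 52 * v + 20

namespace Below

variable {v S : ℝ}

/-- One of the three strict bounds with a positive multiplier `p`; each certificate below uses
exactly one of `s1`, `s2`, `s3`. -/
theorem s1 (H : Below v S) (p : ℝ) (hp : 0 < p := by positivity) :
    0 < p * (4 * v ^ 2 + 16 * v + 8 - S * (1 + v) ^ 2) :=
  mul_pos hp (sub_pos.2 H.1)

theorem s2 (H : Below v S) (p : ℝ) (hp : 0 < p := by positivity) :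
    0 < p * (16 * v ^ 2 + 28 * v + 8 - S * (1 + v) ^ 3) :=
  mul_pos hp (sub_pos.2 H.2.1)

theorem s3 (H : Below v S) (p : ℝ) (hp : 0 < p := by positivity) :
    0 < p * (24 * v ^ 2 + 52 * v + 20 - S * ((v + 1) ^ 2 * (3 * v + 1))) :=
  mul_pos hp (sub_pos.2 H.2.2)

end Below

/-- A nonnegative slack, put in the same form as the other terms of a certificate. -/
theorem pos (p : ℝ) (hp : 0 ≤ p := by positivity) : 0 ≤ p := hp

/-- Bernstein basis polynomials of `[l, u]` are nonnegative on it. A multiplier is shown to be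
nonnegative by writing it as a nonnegative combination of them. -/
theorem box {v l u : ℝ} (hl : l ≤ v) (hu : v ≤ u) (i j : ℕ) :
    0 ≤ (v - l) ^ i * (u - v) ^ j :=
  mul_nonneg (pow_nonneg (sub_nonneg.2 hl) i) (pow_nonneg (sub_nonneg.2 hu) j)

/-- The fast player stands at time `t` where the agent `(o, b)` is if it has not found the
marker. -/
def Unmarked (P : ℝ → ℝ → ℝ → Prop) (o b t : ℝ) : Prop :=
  ∃ y, P t (o + b * y) y

/-- The agent `(o, b)` finds the marker, which lies at `m` from time `z` on, at time `s` and is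
met at time `t ≥ s`. It has crossed from its starting side, so it continues with velocity
`-o * v`. The coordinates `x`, `y` are those left free at the two events. -/
def MarkedAt (v : ℝ) (P : ℝ → ℝ → ℝ → Prop) (z m o b s t : ℝ) : Prop :=
  ∃ x y, z ≤ s ∧ s ≤ t ∧ P s x (b * (m - o)) ∧ P t (m - o * v * (t - s)) y

/-- With `brk0_ge`: the multiplier `1 + v - 3 * v ^ 2 - v ^ 3` has its only sign change in
`[67 / 100, 17 / 25]`. -/
theorem brk0_le {v : ℝ} (hb : v ≤ 966 / 1000) (hq : 0 ≤ 1 + v - 3 * v ^ 2 - v ^ 3) :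
    v ≤ 17 / 25 := by
  by_contra! h
  linarith only [hq, box h.le hb 0 3, box h.le hb 1 2, box h.le hb 2 1, box h.le hb 3 0]

theorem brk0_ge {v : ℝ} (h0 : 0 < v) (hq : 1 + v - 3 * v ^ 2 - v ^ 3 ≤ 0) :
    67 / 100 ≤ v := by
  by_contra! h
  linarith only [hq, box h0.le h.le 0 3, box h0.le h.le 1 2, box h0.le h.le 2 1, box h0.le h.le 3 0]

/-- With `brk1_ge`: the multiplier `3 - 4 * v - 3 * v ^ 2` has its only sign change in
`[13 / 25, 27 / 50]`. -/
theorem brk1_le {v : ℝ} (hb : v ≤ 966 / 1000) (hq : 0 ≤ 3 - 4 * v - 3 * v ^ 2) :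
    v ≤ 27 / 50 := by
  by_contra! h
  linarith only [hq, box h.le hb 0 2, box h.le hb 1 1, box h.le hb 2 0]

theorem brk1_ge {v : ℝ} (h0 : 0 < v) (hq : 3 - 4 * v - 3 * v ^ 2 ≤ 0) :
    13 / 25 ≤ v := by
  by_contra! h
  linarith only [hq, box h0.le h.le 0 2, box h0.le h.le 1 1, box h0.le h.le 2 0]

/-- With `brk2_ge`: the multiplier `1 - v ^ 2 - v ^ 3` has its only sign change in
`[3 / 4, 77 / 100]`. -/
theorem brk2_le {v : ℝ} (hb : v ≤ 966 / 1000) (hq : 0 ≤ 1 - v ^ 2 - v ^ 3) :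
    v ≤ 77 / 100 := by
  by_contra! h
  linarith only [hq, box h.le hb 0 3, box h.le hb 1 2, box h.le hb 2 1, box h.le hb 3 0]

theorem brk2_ge {v : ℝ} (h0 : 0 < v) (hq : 1 - v ^ 2 - v ^ 3 ≤ 0) :
    3 / 4 ≤ v := by
  by_contra! h
  linarith only [hq, box h0.le h.le 0 3, box h0.le h.le 1 2, box h0.le h.le 2 1, box h0.le h.le 3 0]

/-! ### The seven patterns of agents finding the marker -/

set_option maxHeartbeats 0 in
/-- No agent finds the marker, and `(1, 1)` is met first. This is the game without marker. -/
theorem caseA {v : ℝ} {P : ℝ → ℝ → ℝ → Prop} (R : Range v) (W : Worldline v P)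
    {t6 t7 t8 t9 : ℝ} (A6 : Unmarked P 1 1 t6)
    (A7 : Unmarked P 1 (-1) t7)
    (A8 : Unmarked P (-1) 1 t8)
    (A9 : Unmarked P (-1) (-1) t9)
    (h67 : t6 ≤ t7)
    (h68 : t6 ≤ t8)
    (h69 : t6 ≤ t9)
    (H : Below v (t6 + t7 + t8 + t9)) : False := by
  obtain ⟨y6, E6⟩ := A6
  obtain ⟨y7, E7⟩ := A7
  obtain ⟨y8, E8⟩ := A8
  obtain ⟨y9, E9⟩ := A9
  have E0 := W.origin
  have h06 := W.nonneg E6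
  have h07 := W.nonneg E7
  have h08 := W.nonneg E8
  have h09 := W.nonneg E9
  have h0 := R.pos
  have hb := R.le
  have h1 : 0 < 1 - v := by linarith
  have : 0 ≤ 2 - v ^ 2 := by linarith only [box h0.le hb 0 2, box h0.le hb 1 1, box h0.le hb 2 0]
  have : 0 ≤ 3 + 4 * v - 3 * v ^ 2 := by
    linarith only [box h0.le hb 0 2, box h0.le hb 1 1, box h0.le hb 2 0]
  have : 0 ≤ 3 - v := by linarith only [box h0.le hb 0 1, box h0.le hb 1 0]
  have : 0 ≤ 2 - v := by linarith only [box h0.le hb 0 1, box h0.le hb 1 0]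
  have : 0 ≤ 1 + v - v ^ 2 := by
    linarith only [box h0.le hb 0 2, box h0.le hb 1 1, box h0.le hb 2 0]
  have : 0 ≤ 7 + v + v ^ 2 - v ^ 3 := by
    linarith only [box h0.le hb 0 3, box h0.le hb 1 2, box h0.le hb 2 1, box h0.le hb 3 0]
  have : 0 ≤ 2 - 5 * v + 2 * v ^ 2 + 7 * v ^ 3 + 2 * v ^ 4 := by
    linarith only [box h0.le hb 0 5, box h0.le hb 1 4, box h0.le hb 2 3, box h0.le hb 3 2,
      box h0.le hb 4 1, box h0.le hb 5 0]
  have : 0 ≤ 1 + 3 * v - v ^ 2 - v ^ 3 := by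
    linarith only [box h0.le hb 0 3, box h0.le hb 1 2, box h0.le hb 2 1, box h0.le hb 3 0]
  refine lt_irrefl (0 : ℝ) ?_
  rcases le_total t7 t9 with h79 | h97
  · rcases le_total t8 t9 with h89 | h98
    · rcases le_total t7 t8 with h78 | h87
      · rcases le_total 0 (1 + v - 3 * v ^ 2 - v ^ 3) with hq1 | hq1
        · have hb1 := brk0_le hb hq1
          linear_combination W.xU ((1 + v) * (2 + 4 * v + v ^ 2)) E0 E6 +
            W.xU ((1 + v) * (2 - v ^ 2)) E0 E7 + W.xL (1 + v - 3 * v ^ 2 - v ^ 3) E6 E7 +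
            W.yU ((1 + v) * (3 + 2 * v)) E6 E7 + W.yU (2 * v) E6 E8 + W.xL (1 + 3 * v) E7 E8 +
            W.xL (1 + v) E7 E9 + W.yL (1 + v) E8 E9 + H.s1 1
        · have ha1 := brk0_ge h0 hq1
          have : 0 ≤ -1 - v + 3 * v ^ 2 + v ^ 3 := by linarith
          linear_combination W.xU (1 + 13 * v + 27 * v ^ 2 + 7 * v ^ 3) E0 E6 +
            W.yL (4 * (-1 - v + 3 * v ^ 2 + v ^ 3)) E0 E6 +
            W.xU ((1 + v) * (3 + 4 * v - 3 * v ^ 2)) E0 E7 +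
            W.yU ((1 + v) * (5 + 10 * v + v ^ 2)) E6 E7 + W.yU (2 * v * (1 + v) ^ 2) E6 E8 +
            W.xL ((1 + v) ^ 2 * (1 + 3 * v)) E7 E8 + W.xL ((1 + v) ^ 3) E7 E9 +
            W.yL ((1 + v) ^ 3) E8 E9 + H.s2 (1 + v) + pos (4 * v ^ 2 * (1 - v))
      · linear_combination W.xU (4 * (1 + 2 * v)) E0 E6 + W.yL (4 * v) E0 E6 +
          W.yU (2 * (1 + v)) E6 E7 + W.xL (3 - v) E6 E8 + W.yU (5 + v) E6 E8 + W.xL (1 + v) E7 E9 +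
          W.yL (1 + v) E7 E9 + W.xU (2 * (1 + v)) E8 E7 + H.s1 1 + pos (4 * (1 - v) * (2 + v))
    · have h78 := h79.trans h98
      rcases R.golden with ⟨hb1, k1⟩ | ⟨ha1, k1⟩
      · linear_combination W.xU ((1 + v) ^ 2 * (2 + v)) E0 E6 + W.xU ((1 + v) ^ 2 * (2 - v)) E0 E7 +
          W.xL ((1 + v) * (1 - v - v ^ 2)) E6 E7 + W.yU ((1 + v) * (3 + 2 * v)) E6 E7 +
          W.xL (1 + v) E7 E8 + W.xL (1 + 3 * v) E7 E9 + W.yL (2 * v) E7 E9 + W.yU (1 + v) E9 E8 +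
          H.s1 1
      · linear_combination W.xU (1 + 12 * v + 7 * v ^ 2) E0 E6 + W.yL (4 * (-1 + v + v ^ 2)) E0 E6 +
          W.xU ((1 + v) * (3 + v)) E0 E7 + W.yU ((1 + v) * (5 + 3 * v)) E6 E7 +
          W.xL ((1 + v) ^ 2) E7 E8 + W.xL ((1 + v) * (1 + 3 * v)) E7 E9 +
          W.yL (2 * v * (1 + v)) E7 E9 + W.yU ((1 + v) ^ 2) E9 E8 + H.s2 1
  · rcases le_total t7 t8 with h78 | h87
    · linear_combination W.xU (4 * (1 + v - v ^ 2)) E0 E6 + W.yL (7 + 12 * v + v ^ 2) E0 E6 +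
        W.yL ((1 + v) * (1 + 3 * v)) E0 E9 + W.xL ((1 + v) * (3 + 5 * v)) E6 E9 +
        W.xL ((1 + v) ^ 2) E7 E8 + W.yU ((1 + v) ^ 2) E7 E8 + W.xU (2 * (1 + v)) E9 E7 +
        W.yU (2 * (1 + v) * (2 + v)) E9 E7 + H.s2 1 + pos (8 * (1 + v) * (1 - v))
    · rcases le_total t8 t9 with h89 | h98
      · linear_combination W.xU (4 * (1 + 2 * v)) E0 E6 + W.yL (4 * (1 + 3 * v + v ^ 2)) E0 E6 +
          W.xL (2 * (1 + v + 2 * v ^ 2)) E6 E8 + W.yU (3 + 2 * v + 3 * v ^ 2) E6 E8 +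
          W.xL ((1 + v) * (1 + 3 * v)) E6 E9 + W.xU ((1 + v) ^ 2) E8 E7 +
          W.yL (2 * v * (1 + v)) E8 E9 + W.yU ((1 + v) ^ 2) E9 E7 + H.s2 1 + pos (4 * (1 - v))
      · rcases le_total 0 (3 - 4 * v - 3 * v ^ 2) with hq1 | hq1
        · have hb1 := brk1_le hb hq1
          linear_combination W.xU (2 * (1 - v) * (2 + v + v ^ 2)) E0 E6 +
            W.yL (7 + v + v ^ 2 - v ^ 3) E0 E6 + W.yU ((1 + v) * (3 - 4 * v - 3 * v ^ 2)) E0 E9 +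
            W.xL ((1 + v) * (3 + v ^ 2)) E6 E9 + W.xU ((1 + v) ^ 2 * (1 - v)) E8 E7 +
            W.yU ((1 + v) ^ 2 * (1 - v)) E9 E7 + W.xL (2 * (1 + v) * (1 - v)) E9 E8 +
            W.yU ((1 + v) * (1 - v) * (3 + v)) E9 E8 + H.s1 ((1 + v) * (1 - v)) +
            pos (2 * (2 - 5 * v + 2 * v ^ 2 + 7 * v ^ 3 + 2 * v ^ 4))
        · have ha1 := brk1_ge h0 hq1
          have : 0 ≤ -3 + 4 * v + 3 * v ^ 2 := by linarith
          linear_combination W.xU (4 * (1 + 3 * v - v ^ 2 - v ^ 3)) E0 E6 +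
            W.yL (7 + 27 * v + 13 * v ^ 2 + v ^ 3) E0 E6 +
            W.yL ((1 + v) * (-3 + 4 * v + 3 * v ^ 2)) E0 E9 + W.xL (2 * (1 + v) ^ 2) E6 E8 +
            W.xL ((1 + v) * (1 + 10 * v + 5 * v ^ 2)) E6 E9 + W.xU ((1 + v) ^ 3) E8 E7 +
            W.yU ((1 + v) ^ 3) E8 E7 + W.yU (2 * (1 + v) ^ 2 * (2 + v)) E9 E8 + H.s2 (1 + v) +
            pos (4 * (1 - v) * (1 + 4 * v + 2 * v ^ 2))

set_option maxHeartbeats 0 in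
/-- Only `(1, 1)` finds the marker. This is the pattern of the optimal profile for fast `v`. -/
theorem caseB {v : ℝ} {P : ℝ → ℝ → ℝ → Prop} (R : Range v) (W : Worldline v P)
    {z m w s2 t6 t7 t8 t9 : ℝ} (E1 : P z m w)
    (A6 : MarkedAt v P z m 1 1 s2 t6)
    (A7 : Unmarked P 1 (-1) t7)
    (A8 : Unmarked P (-1) 1 t8)
    (A9 : Unmarked P (-1) (-1) t9)
    (H : Below v (t6 + t7 + t8 + t9)) : False := by
  obtain ⟨x2, y6, h12, h26, E2, E6⟩ := A6
  obtain ⟨y7, E7⟩ := A7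
  obtain ⟨y8, E8⟩ := A8
  obtain ⟨y9, E9⟩ := A9
  have E0 := W.origin
  have h01 := W.nonneg E1
  have h02 := W.nonneg E2
  have h06 := W.nonneg E6
  have h07 := W.nonneg E7
  have h08 := W.nonneg E8
  have h09 := W.nonneg E9
  have h0 := R.pos
  have hb := R.le
  have h1 : 0 < 1 - v := by linarith
  have : 0 ≤ 2 - v ^ 2 := by linarith only [box h0.le hb 0 2, box h0.le hb 1 1, box h0.le hb 2 0]
  have : 0 ≤ 3 + 4 * v - 3 * v ^ 2 := by
    linarith only [box h0.le hb 0 2, box h0.le hb 1 1, box h0.le hb 2 0]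
  have : 0 ≤ 2 - v := by linarith only [box h0.le hb 0 1, box h0.le hb 1 0]
  have : 0 ≤ 3 - v := by linarith only [box h0.le hb 0 1, box h0.le hb 1 0]
  have : 0 ≤ 1 + v - v ^ 2 := by
    linarith only [box h0.le hb 0 2, box h0.le hb 1 1, box h0.le hb 2 0]
  have : 0 ≤ 3 + v - v ^ 2 := by
    linarith only [box h0.le hb 0 2, box h0.le hb 1 1, box h0.le hb 2 0]
  have : 0 ≤ 1 + 3 * v - v ^ 2 - v ^ 3 := by
    linarith only [box h0.le hb 0 3, box h0.le hb 1 2, box h0.le hb 2 1, box h0.le hb 3 0]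
  have : 0 ≤ 5 - v ^ 2 := by linarith only [box h0.le hb 0 2, box h0.le hb 1 1, box h0.le hb 2 0]
  have : 0 ≤ 1 - 2 * v + v ^ 2 + v ^ 3 := by
    linarith only [box h0.le hb 0 3, box h0.le hb 1 2, box h0.le hb 2 1, box h0.le hb 3 0]
  have : 0 ≤ 3 + 10 * v - v ^ 2 - 4 * v ^ 3 := by
    linarith only [box h0.le hb 0 3, box h0.le hb 1 2, box h0.le hb 2 1, box h0.le hb 3 0]
  have : 0 ≤ 2 + v - v ^ 3 := by
    linarith only [box h0.le hb 0 3, box h0.le hb 1 2, box h0.le hb 2 1, box h0.le hb 3 0]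
  have : 0 ≤ 3 + 12 * v - 3 * v ^ 2 - 4 * v ^ 3 := by
    linarith only [box h0.le hb 0 3, box h0.le hb 1 2, box h0.le hb 2 1, box h0.le hb 3 0]
  have : 0 ≤ 1 - 3 * v + 4 * v ^ 2 := by
    linarith only [box h0.le hb 0 3, box h0.le hb 1 2, box h0.le hb 2 1, box h0.le hb 3 0]
  refine lt_irrefl (0 : ℝ) ?_
  rcases le_total s2 t8 with h28 | h82
  · rcases le_total t7 t9 with h79 | h97
    · rcases le_total t7 t8 with h78 | h87
      · rcases le_total s2 t7 with h27 | h72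
        · have h16 := h12.trans h26
          have h17 := h12.trans h27
          rcases le_total t8 t9 with h89 | h98
          · rcases le_total 0 (1 + v - 3 * v ^ 2 - v ^ 3) with hq1 | hq1
            · have hb1 := brk0_le hb hq1
              linear_combination W.xU (1 + 3 * v + v ^ 2) E0 E1 +
                W.xU (v * (2 + 4 * v + v ^ 2)) E0 E2 + W.xU (1 + v) E0 E6 +
                W.xU ((1 + v) * (2 - v ^ 2)) E0 E7 + W.xL (v * (2 + 4 * v + v ^ 2)) E1 E2 +
                W.xL (1 + v - 3 * v ^ 2 - v ^ 3) E1 E7 + W.yU ((1 + v) * (3 + 2 * v)) E2 E7 +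
                W.yU (2 * v) E2 E8 + W.xL (1 + 3 * v) E7 E8 + W.xL (1 + v) E7 E9 +
                W.yL (1 + v) E8 E9 + H.s1 1
            · have ha1 := brk0_ge h0 hq1
              have : 0 ≤ -1 - v + 3 * v ^ 2 + v ^ 3 := by linarith
              linear_combination W.xU ((1 + v) * (5 + 12 * v + 3 * v ^ 2)) E0 E1 +
                W.yL (4 * (-1 - v + 3 * v ^ 2 + v ^ 3)) E0 E2 +
                W.xU (4 * (-1 - v + 3 * v ^ 2 + v ^ 3)) E0 E6 +
                W.xU ((1 + v) * (3 + 4 * v - 3 * v ^ 2)) E0 E7 +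
                W.xL ((1 + v) * (5 + 12 * v + 3 * v ^ 2)) E1 E6 +
                W.yU ((1 + v) * (5 + 10 * v + v ^ 2)) E2 E7 + W.yU (2 * v * (1 + v) ^ 2) E2 E8 +
                W.xL ((1 + v) ^ 2 * (1 + 3 * v)) E7 E8 + W.xL ((1 + v) ^ 3) E7 E9 +
                W.yL ((1 + v) ^ 3) E8 E9 + H.s2 (1 + v) + pos (4 * v ^ 2 * (1 - v))
          · rcases R.golden with ⟨hb1, k1⟩ | ⟨ha1, k1⟩
            · linear_combination W.xU ((1 + v) ^ 2) E0 E1 + W.xU (v * (1 + v) * (2 + v)) E0 E2 +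
                W.xU (1 + v) E0 E6 + W.xU ((1 + v) ^ 2 * (2 - v)) E0 E7 +
                W.xL (v * (1 + v) * (2 + v)) E1 E2 + W.xL ((1 + v) * (1 - v - v ^ 2)) E1 E7 +
                W.yU ((1 + v) * (3 + 2 * v)) E2 E7 + W.xL (1 + v) E7 E8 + W.xL (1 + 3 * v) E7 E9 +
                W.yL (2 * v) E7 E9 + W.yU (1 + v) E9 E8 + H.s1 1
            · linear_combination W.xU ((1 + v) * (5 + 3 * v)) E0 E1 +
                W.yL (4 * (-1 + v + v ^ 2)) E0 E2 + W.xU (4 * (-1 + v + v ^ 2)) E0 E6 +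
                W.xU ((1 + v) * (3 + v)) E0 E7 + W.xL ((1 + v) * (5 + 3 * v)) E1 E6 +
                W.yU ((1 + v) * (5 + 3 * v)) E2 E7 + W.xL ((1 + v) ^ 2) E7 E8 +
                W.xL ((1 + v) * (1 + 3 * v)) E7 E9 + W.yL (2 * v * (1 + v)) E7 E9 +
                W.yU ((1 + v) ^ 2) E9 E8 + H.s2 1
        · rcases le_total t8 t9 with h89 | h98
          · have h18 := h12.trans h28
            have h29 := h28.trans h89
            rcases R.golden with ⟨hb1, k1⟩ | ⟨ha1, k1⟩
            · have : 0 ≤ 1 - v ^ 2 - v ^ 3 := by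
                linarith only [box h0.le hb1 0 3, box h0.le hb1 1 2, box h0.le hb1 2 1,
                  box h0.le hb1 3 0]
              linear_combination W.xU (1 + 3 * v + v ^ 2) E0 E1 + W.xU (1 - v ^ 2 - v ^ 3) E0 E2 +
                W.xU ((1 + v) ^ 2 * (2 + v)) E0 E7 + W.xL (v ^ 2) E1 E2 + W.xL (1 + 3 * v) E1 E8 +
                W.xU (1 + v) E2 E6 + W.yU (2 * v) E2 E8 + W.xL (1 + v) E2 E9 +
                W.xL ((1 + v) * (1 - v - v ^ 2)) E7 E2 + W.yL ((1 + v) * (3 + 2 * v)) E7 E2 +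
                W.yL (1 + v) E8 E9 + H.s1 1
            · linear_combination W.xU (2 * (1 + v) ^ 2) E0 E1 + W.xU ((1 + v) * (1 - v)) E0 E2 +
                W.xU (1 + 12 * v + 7 * v ^ 2) E0 E7 + W.yU (4 * (-1 + v + v ^ 2)) E0 E7 +
                W.xL ((1 + v) * (1 - v)) E1 E2 + W.xL ((1 + v) * (1 + 3 * v)) E1 E8 +
                W.xU ((1 + v) ^ 2) E2 E6 + W.yU (2 * v * (1 + v)) E2 E8 + W.xL ((1 + v) ^ 2) E2 E9 +
                W.yL ((1 + v) * (5 + 3 * v)) E7 E2 + W.yL ((1 + v) ^ 2) E8 E9 + H.s2 1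
          · rcases le_total t6 t9 with h69 | h96
            · have h29 := h26.trans h69
              have h68 := h69.trans h98
              have h76 := h72.trans h26
              rcases le_total 0 (1 + v - 3 * v ^ 2 - v ^ 3) with hq1 | hq1
              · have hb1 := brk0_le hb hq1
                linear_combination W.xU ((1 + v) * (2 - v ^ 2)) E0 E6 +
                  W.xU ((1 + v) * (2 + 4 * v + v ^ 2)) E0 E7 + W.yL (2 * v) E2 E9 +
                  W.xL (1 + v) E6 E8 + W.xL (1 + 3 * v) E6 E9 + W.yL ((1 + 2 * v) * (3 + v)) E7 E2 +
                  W.xL (1 + v - 3 * v ^ 2 - v ^ 3) E7 E6 + W.yU (1 + v) E9 E8 + H.s1 1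
              · have ha1 := brk0_ge h0 hq1
                have : 0 ≤ -1 - v + 3 * v ^ 2 + v ^ 3 := by linarith
                linear_combination W.xU ((1 + v) * (3 + 4 * v - 3 * v ^ 2)) E0 E6 +
                  W.xU (1 + 13 * v + 27 * v ^ 2 + 7 * v ^ 3) E0 E7 +
                  W.yU (4 * (-1 - v + 3 * v ^ 2 + v ^ 3)) E0 E7 + W.yL (2 * v * (1 + v) ^ 2) E2 E9 +
                  W.xL ((1 + v) ^ 3) E6 E8 + W.xL ((1 + v) ^ 2 * (1 + 3 * v)) E6 E9 +
                  W.yL ((1 + v) * (5 + 12 * v + 3 * v ^ 2)) E7 E2 + W.yU ((1 + v) ^ 3) E9 E8 +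
                  H.s2 (1 + v) + pos (4 * v ^ 2 * (1 - v))
            · rcases le_total t6 t8 with h68 | h86
              · linear_combination W.xU (4 * (1 + 3 * v + v ^ 2)) E0 E7 +
                  W.yU (4 * v * (2 + v)) E0 E7 + W.xL ((1 + v) ^ 2) E6 E8 +
                  W.yL ((1 + v) * (3 + v)) E7 E2 + W.xL (3 + 2 * v + 3 * v ^ 2) E7 E9 +
                  W.yL (2 * (2 + v + v ^ 2)) E7 E9 + W.xU (2 * (1 + v)) E9 E6 +
                  W.yU ((1 + v) ^ 2) E9 E8 + H.s2 1 + pos (4 * (1 - v) * (2 + v))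
              · have h18 := h12.trans h28
                linear_combination W.xU (2 * (1 + v)) E0 E1 +
                  W.xU (2 * (1 + 5 * v + 2 * v ^ 2)) E0 E7 + W.yU (4 * v * (2 + v)) E0 E7 +
                  W.xL (2 * (1 + v)) E1 E8 + W.yU (2 * (1 + v)) E2 E8 +
                  W.yL ((1 + v) * (3 + v)) E7 E2 + W.xL ((1 + v) * (1 + 3 * v)) E7 E9 +
                  W.yL (2 * v * (1 + v)) E7 E9 + W.xU ((1 + v) ^ 2) E8 E6 +
                  W.yU ((1 + v) ^ 2) E9 E8 + H.s2 1 + pos (4 * (1 + v) * (1 - v))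
      · have h17 := (h12.trans h28).trans h87
        have h18 := h12.trans h28
        linear_combination W.xU (3 + 7 * v) E0 E1 + W.yL (4 * v) E0 E1 + W.xU (1 + v) E0 E6 +
          W.yU (2 * (1 - v)) E1 E2 + W.yL (4 * (1 + v)) E1 E2 + W.yU (2 * (1 + v)) E1 E7 +
          W.xL (3 - v) E1 E8 + W.yU (5 + v) E2 E8 + W.xL (1 + v) E7 E9 + W.yL (1 + v) E7 E9 +
          W.xU (2 * (1 + v)) E8 E7 + H.s1 1 + pos (4 * (1 - v) * (2 + v))
    · rcases le_total t8 t9 with h89 | h98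
      · have h29 := h28.trans h89
        have h87 := h89.trans h97
        linear_combination W.xU (3 * (1 + v) ^ 2) E0 E1 + W.xU ((1 - v) * (1 + 3 * v)) E0 E2 +
          W.yL (4 * (1 + 3 * v + v ^ 2)) E0 E2 + W.xL (3 * (1 + v) ^ 2) E1 E2 +
          W.xU ((1 + v) ^ 2) E2 E6 + W.xL (2 * (1 + v + 2 * v ^ 2)) E2 E8 +
          W.yU (3 + 2 * v + 3 * v ^ 2) E2 E8 + W.xL ((1 + v) * (1 + 3 * v)) E2 E9 +
          W.xU ((1 + v) ^ 2) E8 E7 + W.yL (2 * v * (1 + v)) E8 E9 + W.yU ((1 + v) ^ 2) E9 E7 +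
          H.s2 1 + pos (4 * (1 - v))
      · rcases le_total t6 t9 with h69 | h96
        · rcases le_total t7 t8 with h78 | h87
          · linear_combination W.yL (7 + 12 * v + v ^ 2) E0 E2 + W.xU (4 * (1 + v - v ^ 2)) E0 E6 +
              W.yL ((1 + v) * (1 + 3 * v)) E0 E9 + W.xL ((1 + v) * (3 + 5 * v)) E6 E9 +
              W.xL ((1 + v) ^ 2) E7 E8 + W.yU ((1 + v) ^ 2) E7 E8 + W.xU (2 * (1 + v)) E9 E7 +
              W.yU (2 * (1 + v) * (2 + v)) E9 E7 + H.s2 1 + pos (8 * (1 + v) * (1 - v))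
          · have h17 := (h12.trans h28).trans h87
            have h19 := (h12.trans h26).trans h69
            have h68 := h69.trans h98
            rcases le_total v (27 / 50) with hb1 | ha1
            · have : 0 ≤ 4 - 5 * v - 3 * v ^ 2 := by
                linarith only [box h0.le hb1 0 2, box h0.le hb1 1 1, box h0.le hb1 2 0]
              linear_combination W.xU (8 * v * (1 + v)) E0 E1 + W.yL (4 * (7 + 5 * v)) E0 E2 +
                W.xU (4 * (1 - v) * (4 + 3 * v)) E0 E6 + W.yU (4 * (1 + v)) E1 E7 +
                W.yL (4 * (1 + v)) E1 E9 + W.xU (4 * v ^ 2 * (1 + v)) E2 E6 +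
                W.xL (4 * v ^ 2 * (1 + v)) E2 E8 + W.xL (4 * (1 + v) * (3 + v - v ^ 2)) E6 E9 +
                W.xU ((1 + v) ^ 3) E8 E7 + W.xU ((1 + v) * (1 - v) * (3 + v)) E9 E7 +
                W.xL (5 * (1 + v) ^ 2 * (1 - v)) E9 E8 + W.yU (2 * (1 + v) * (3 + v)) E9 E8 +
                H.s1 4 + pos (4 * (4 - 5 * v - 3 * v ^ 2))
            · have : 0 ≤ -3 + 4 * v + 3 * v ^ 2 := by
                linarith only [box ha1 hb 0 2, box ha1 hb 1 1, box ha1 hb 2 0]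
              linear_combination W.yL (7 + 27 * v + 13 * v ^ 2 + v ^ 3) E0 E2 +
                W.xU (4 * (1 + 3 * v - v ^ 2 - v ^ 3)) E0 E6 +
                W.yL ((1 + v) * (-3 + 4 * v + 3 * v ^ 2)) E0 E9 + W.xL (2 * (1 + v) ^ 2) E6 E8 +
                W.xL ((1 + v) * (1 + 10 * v + 5 * v ^ 2)) E6 E9 + W.xU ((1 + v) ^ 3) E8 E7 +
                W.yU ((1 + v) ^ 3) E8 E7 + W.yU (2 * (1 + v) ^ 2 * (2 + v)) E9 E8 + H.s2 (1 + v) +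
                pos (4 * (1 - v) * (1 + 4 * v + 2 * v ^ 2))
        · rcases le_total s2 t7 with h27 | h72
          · rcases le_total z t9 with h19 | h91
            · rcases le_total t7 t8 with h78 | h87
              · linear_combination W.xU (4 * (1 + v) ^ 2) E0 E1 +
                  W.yL ((1 + v) * (5 + 7 * v)) E0 E2 + W.yL ((1 + v) * (7 + 5 * v)) E0 E9 +
                  W.xL (4 * (1 + v) ^ 2) E1 E9 + W.yU ((1 + v) * (3 + v)) E2 E7 +
                  W.yU ((1 + v) * (1 + 3 * v)) E2 E8 + W.xL ((1 + v) * (1 + 3 * v)) E7 E8 +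
                  W.xU ((1 + v) * (1 + 3 * v)) E9 E6 + W.xU (2 * (1 + 3 * v)) E9 E7 +
                  W.yU (2 * v * (3 + v)) E9 E7 + H.s3 1
              · rcases le_total t6 t8 with h68 | h86
                · linear_combination W.xU (4 * (1 + 2 * v + 4 * v ^ 2 + v ^ 3)) E0 E1 +
                    W.yL ((1 + v) ^ 2 * (9 + 7 * v)) E0 E2 +
                    W.yL (7 + 7 * v + 13 * v ^ 2 + 5 * v ^ 3) E0 E9 +
                    W.xL (4 * (1 + 2 * v + 4 * v ^ 2 + v ^ 3)) E1 E9 +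
                    W.yU ((1 + v) ^ 2 * (1 + 3 * v)) E2 E7 +
                    W.yU (3 + 3 * v + 9 * v ^ 2 + v ^ 3) E2 E8 +
                    W.xL (2 * (1 + v) * (1 + 3 * v)) E6 E8 +
                    W.xU ((1 + v) ^ 2 * (1 + 3 * v)) E8 E7 +
                    W.xU ((1 + 3 * v) * (3 + v ^ 2)) E9 E6 +
                    W.yU (2 * v * (5 + 2 * v + v ^ 2)) E9 E8 + H.s3 (1 + v) + pos (4 * (1 - v))
                · have h18 := h12.trans h28
                  linear_combination W.xU (4 * (1 + v) * (2 + v)) E0 E1 +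
                    W.yL (2 * (1 + v) * (5 + 3 * v)) E0 E2 + W.yL (2 * (1 + v) ^ 2) E0 E9 +
                    W.xL ((1 + v) * (5 - v ^ 2)) E1 E8 + W.xL ((1 + v) ^ 2 * (3 + v)) E1 E9 +
                    W.yU (4 * (1 + v) * (2 + v)) E2 E8 + W.xU (2 * (1 + v) ^ 2) E8 E6 +
                    W.xU ((1 + v) ^ 3) E8 E7 + W.xU ((1 + v) ^ 2 * (1 - v)) E9 E7 +
                    W.yU (2 * (1 + v) ^ 2) E9 E7 + H.s2 2 + pos (4 * (1 - v) * (4 + 3 * v))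
            · have h16 := h12.trans h26
              rcases le_total t7 t8 with h78 | h87
              · have h17 := h12.trans h27
                rcases le_total v (1 / 2) with hb1 | ha1
                · have : 0 ≤ 1 - 2 * v ^ 2 := by
                    linarith only [box h0.le hb1 0 2, box h0.le hb1 1 1, box h0.le hb1 2 0]
                  have : 0 ≤ 3 - 4 * v - 3 * v ^ 2 := by
                    linarith only [box h0.le hb1 0 2, box h0.le hb1 1 1, box h0.le hb1 2 0]
                  linear_combination W.xL (4 * (1 - 2 * v ^ 2)) E0 E9 +
                    W.yL (4 * (1 + v - v ^ 2)) E0 E9 + W.xL ((1 + v) ^ 2) E1 E6 +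
                    W.xU (2 * (1 - v)) E1 E7 + W.yU (2 * v * (1 + v)) E2 E7 +
                    W.yU ((1 + v) * (1 - v)) E2 E8 + W.xL ((1 + v) * (1 - v)) E7 E8 +
                    W.xU (3 + v ^ 2) E9 E1 + W.yU (3 - 4 * v - 3 * v ^ 2) E9 E7 + H.s1 (1 - v) +
                    pos (4 * (1 - 2 * v + v ^ 2 + v ^ 3))
                · rcases R.gap2 with hb2 | ha2
                  · have : 0 ≤ -1 + 2 * v := by linarith
                    have : 0 ≤ -1 + 2 * v + v ^ 2 := by
                      linarith only [box ha1 hb2 0 2, box ha1 hb2 1 1, box ha1 hb2 2 0]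
                    have : 0 ≤ 1 + 3 * v + 3 * v ^ 2 - 6 * v ^ 3 - 5 * v ^ 4 := by
                      linarith only [box ha1 hb2 0 4, box ha1 hb2 1 3, box ha1 hb2 2 2,
                        box ha1 hb2 3 1, box ha1 hb2 4 0]
                    linear_combination W.yL (3 * (1 + v) ^ 3 * (-1 + 2 * v)) E0 E1 +
                      W.xL (4 * (1 + v) ^ 2 * (1 + v - v ^ 2)) E0 E9 +
                      W.yL ((1 + v) ^ 2 * (7 + 13 * v + 2 * v ^ 2)) E0 E9 +
                      W.yL (6 * v * (1 + v) ^ 3) E1 E2 +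
                      W.xU ((1 + v) ^ 2 * (1 + v + 2 * v ^ 2)) E1 E6 +
                      W.xU (2 * (1 + v) ^ 2 * (1 + v - v ^ 2)) E1 E7 +
                      W.yU (3 * (1 + v) ^ 3) E1 E7 +
                      W.xU (v * (1 + v) ^ 2 * (-1 + 2 * v + v ^ 2)) E2 E7 +
                      W.xL (v * (1 + v) ^ 2 * (-1 + 2 * v + v ^ 2)) E2 E8 +
                      W.yU ((1 + v) ^ 2 * (1 + v + 2 * v ^ 2)) E2 E8 +
                      W.xL ((1 + v) ^ 3 * (1 + v - v ^ 2)) E7 E8 +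
                      W.xU (3 * (1 + v) ^ 3 * (1 + 2 * v)) E9 E1 + H.s2 (1 + v + 2 * v ^ 2) +
                      pos (4 * (1 + 3 * v + 3 * v ^ 2 - 6 * v ^ 3 - 5 * v ^ 4))
                  · have : 0 ≤ -1 + 2 * v := by linarith
                    have : 0 ≤ -1 + 2 * v + v ^ 2 := by
                      linarith only [box ha2 hb 0 2, box ha2 hb 1 1, box ha2 hb 2 0]
                    have : 0 ≤ -2 - 2 * v + 5 * v ^ 2 + 3 * v ^ 3 := by
                      linarith only [box ha2 hb 0 3, box ha2 hb 1 2, box ha2 hb 2 1, box ha2 hb 3 0]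
                    linear_combination W.yL (3 * (1 + v) ^ 2 * (1 + 3 * v) * (-1 + 2 * v)) E0 E1 +
                      W.xL (4 * (1 + v) * (1 + 3 * v) * (1 + v - v ^ 2)) E0 E9 +
                      W.yL ((1 + v) * (1 + 3 * v) * (7 + 13 * v + 2 * v ^ 2)) E0 E9 +
                      W.yL (6 * v * (1 + v) ^ 2 * (1 + 3 * v)) E1 E2 +
                      W.xU ((1 + v) * (1 + 3 * v) * (1 + v + 2 * v ^ 2)) E1 E6 +
                      W.xU (2 * (1 + v) * (1 + 3 * v) * (1 + v - v ^ 2)) E1 E7 +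
                      W.yU (3 * (1 + v) ^ 2 * (1 + 3 * v)) E1 E7 +
                      W.xU (v * (1 + v) * (1 + 3 * v) * (-1 + 2 * v + v ^ 2)) E2 E7 +
                      W.xL (v * (1 + v) * (1 + 3 * v) * (-1 + 2 * v + v ^ 2)) E2 E8 +
                      W.yU ((1 + v) * (1 + 3 * v) * (1 + v + 2 * v ^ 2)) E2 E8 +
                      W.xL ((1 + v) ^ 2 * (1 + 3 * v) * (1 + v - v ^ 2)) E7 E8 +
                      W.xU (3 * (1 + v) ^ 2 * (1 + 2 * v) * (1 + 3 * v)) E9 E1 +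
                      H.s3 (1 + v + 2 * v ^ 2) +
                      pos (4 * (1 - v) * (-2 - 2 * v + 5 * v ^ 2 + 3 * v ^ 3))
              · have h18 := h12.trans h28
                linear_combination W.yL ((1 + v) * (1 + 3 * v)) E0 E1 +
                  W.xL (4 * (1 + v - v ^ 2)) E0 E9 + W.yL (7 + 12 * v + v ^ 2) E0 E9 +
                  W.yU (2 * (1 + v)) E1 E2 + W.yL (3 * (1 + v) ^ 2) E1 E2 +
                  W.xU ((1 + v) ^ 2) E1 E6 + W.xL (2 * (1 + v)) E1 E8 + W.yU ((1 + v) ^ 2) E2 E7 +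
                  W.yU ((1 + v) * (3 + v)) E2 E8 + W.xU ((1 + v) ^ 2) E8 E7 +
                  W.xU ((1 + v) * (3 + 5 * v)) E9 E1 + H.s2 1 + pos (8 * (1 + v) * (1 - v))
          · have h18 := h12.trans h28
            have h76 := h72.trans h26
            have h78 := h72.trans h28
            rcases le_total v (7 / 20) with hb1 | ha1
            · have : 0 ≤ 1 - 2 * v - v ^ 2 := by
                linarith only [box h0.le hb1 0 2, box h0.le hb1 1 1, box h0.le hb1 2 0]
              linear_combination W.yL (1 + v) E0 E2 + W.xL (4 * (1 + v)) E0 E9 +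
                W.yL (3 * (1 + v)) E0 E9 + W.xL (1 + v) E7 E8 + W.xU (1 + v) E9 E6 + W.xU 2 E9 E7 +
                W.yU (3 + v) E9 E7 + W.yU (1 + v) E9 E8 + H.s1 1 + pos (4 * (1 - 2 * v - v ^ 2))
            · have : 0 ≤ -1 + 3 * v := by linarith
              linear_combination W.xU ((1 + v) ^ 2) E0 E1 + W.xL ((1 + v) * (3 + v)) E0 E9 +
                W.yL (2 * (1 + v) * (3 + 2 * v)) E0 E9 + W.xL ((1 + v) ^ 2) E1 E8 +
                W.yU ((1 + v) ^ 2) E2 E8 + W.yL (2 * (1 + v) ^ 2) E7 E2 + W.xU ((1 + v) ^ 2) E7 E6 +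
                W.xU (2 * (1 + v) * (1 + 3 * v)) E9 E7 + W.yU ((1 + v) * (-1 + 3 * v)) E9 E7 +
                H.s2 1 + pos (2 * (1 - v))
  · rcases le_total t7 t9 with h79 | h97
    · rcases le_total t7 t8 with h78 | h87
      · rcases le_total s2 t9 with h29 | h92
        · have h86 := h82.trans h26
          rcases le_total v (3 / 10) with hb1 | ha1
          · have : 0 ≤ 1 - 3 * v ^ 2 - v ^ 3 := by
              linarith only [box h0.le hb1 0 3, box h0.le hb1 1 2, box h0.le hb1 2 1,
                box h0.le hb1 3 0]
            linear_combination W.xU (4 * (1 + v - v ^ 2)) E0 E7 + W.yU (7 + 12 * v + v ^ 2) E0 E7 +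
              W.yU ((1 + v) * (1 + 3 * v)) E0 E8 + W.yL ((1 + v) ^ 2) E2 E9 +
              W.xL (2 * (1 + v) * (1 + 2 * v)) E7 E8 + W.xL ((1 + v) ^ 2) E7 E9 +
              W.yL (2 * (1 + v) ^ 2) E8 E2 + W.xU ((1 + v) ^ 2) E8 E6 + H.s1 (1 + v) +
              pos (4 * (1 - 3 * v ^ 2 - v ^ 3))
          · rcases R.gap2 with hb2 | ha2
            · have : 0 ≤ -1 + 4 * v + 3 * v ^ 2 := by
                linarith only [box ha1 hb2 0 2, box ha1 hb2 1 1, box ha1 hb2 2 0]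
              have : 0 ≤ 1 + 2 * v - 2 * v ^ 2 - 2 * v ^ 3 := by
                linarith only [box ha1 hb2 0 3, box ha1 hb2 1 2, box ha1 hb2 2 1, box ha1 hb2 3 0]
              linear_combination W.xU ((1 + v) ^ 2) E0 E1 +
                W.xU (3 + 10 * v - v ^ 2 - 4 * v ^ 3) E0 E7 +
                W.yU (5 + 21 * v + 13 * v ^ 2 + v ^ 3) E0 E7 +
                W.yU ((1 + v) * (-1 + 4 * v + 3 * v ^ 2)) E0 E8 + W.xL ((1 + v) ^ 2) E1 E2 +
                W.xU ((1 + v) ^ 3) E2 E6 + W.xL ((1 + v) ^ 3) E2 E9 + W.yL ((1 + v) ^ 3) E2 E9 +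
                W.xL ((1 + v) * (2 + 9 * v + 5 * v ^ 2)) E7 E8 + W.xU ((1 + v) ^ 2) E8 E2 +
                W.yL (2 * (1 + v) ^ 2 * (2 + v)) E8 E2 + H.s2 (1 + v) +
                pos (4 * (1 + 2 * v - 2 * v ^ 2 - 2 * v ^ 3))
            · have : 0 ≤ -1 + 4 * v + 3 * v ^ 2 := by
                linarith only [box ha2 hb 0 2, box ha2 hb 1 1, box ha2 hb 2 0]
              have : 0 ≤ -2 - 3 * v + 5 * v ^ 2 + 4 * v ^ 3 := by
                linarith only [box ha2 hb 0 3, box ha2 hb 1 2, box ha2 hb 2 1, box ha2 hb 3 0]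
              linear_combination W.xU ((1 + v) ^ 2 * (1 + 3 * v)) E0 E1 +
                W.xU ((1 + 3 * v) * (3 + 10 * v - v ^ 2 - 4 * v ^ 3)) E0 E7 +
                W.yU ((1 + 3 * v) * (5 + 21 * v + 13 * v ^ 2 + v ^ 3)) E0 E7 +
                W.yU ((1 + v) * (1 + 3 * v) * (-1 + 4 * v + 3 * v ^ 2)) E0 E8 +
                W.xL ((1 + v) ^ 2 * (1 + 3 * v)) E1 E2 + W.xU ((1 + v) ^ 3 * (1 + 3 * v)) E2 E6 +
                W.xL ((1 + v) ^ 3 * (1 + 3 * v)) E2 E9 + W.yL ((1 + v) ^ 3 * (1 + 3 * v)) E2 E9 +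
                W.xL ((1 + v) * (1 + 3 * v) * (2 + 9 * v + 5 * v ^ 2)) E7 E8 +
                W.xU ((1 + v) ^ 2 * (1 + 3 * v)) E8 E2 +
                W.yL (2 * (1 + v) ^ 2 * (1 + 3 * v) * (2 + v)) E8 E2 + H.s3 ((1 + v) ^ 2) +
                pos (4 * (-2 - 3 * v + 5 * v ^ 2 + 4 * v ^ 3))
        · have h96 := h92.trans h26
          rcases le_total t8 t9 with h89 | h98
          · have h72 := h79.trans h92
            rcases le_total v (9 / 20) with hb1 | ha1
            · have : 0 ≤ 1 - 3 * v ^ 2 - v ^ 3 := by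
                linarith only [box h0.le hb1 0 3, box h0.le hb1 1 2, box h0.le hb1 2 1,
                  box h0.le hb1 3 0]
              linear_combination W.xU (4 * (1 + 2 * v)) E0 E7 +
                W.yU (2 * (2 + 5 * v + v ^ 2)) E0 E7 + W.yU (2 * v * (1 + v)) E0 E8 +
                W.xL ((1 + v) * (1 + 3 * v)) E7 E8 + W.xL (2 * (1 + v)) E7 E9 +
                W.yL ((1 + v) * (3 + v)) E7 E9 + W.yL ((1 + v) ^ 2) E8 E2 +
                W.xU ((1 + v) ^ 2) E9 E6 + H.s1 (1 + v) + pos (4 * (1 - 3 * v ^ 2 - v ^ 3))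
            · rcases le_total v (27 / 50) with hb2 | ha2
              · have : 0 ≤ -1 + 2 * v + v ^ 2 := by
                  linarith only [box ha1 hb2 0 2, box ha1 hb2 1 1, box ha1 hb2 2 0]
                have : 0 ≤ 1 + 3 * v - 3 * v ^ 2 - 4 * v ^ 3 - v ^ 4 := by
                  linarith only [box ha1 hb2 0 4, box ha1 hb2 1 3, box ha1 hb2 2 2, box ha1 hb2 3 1,
                    box ha1 hb2 4 0]
                linear_combination W.xU (4 * (1 + 3 * v)) E0 E7 +
                  W.yU (2 * (3 + 11 * v + 5 * v ^ 2 + v ^ 3)) E0 E7 +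
                  W.yU (2 * (1 + v) * (-1 + 2 * v + v ^ 2)) E0 E8 + W.yL ((1 + v) ^ 3) E7 E2 +
                  W.xL ((1 + v) * (1 + 8 * v + 3 * v ^ 2)) E7 E8 + W.xL (2 * (1 + v) ^ 2) E7 E9 +
                  W.yL ((1 + v) ^ 2 * (3 + v)) E8 E9 + W.xU ((1 + v) ^ 3) E9 E6 +
                  H.s1 ((1 + v) ^ 2) + pos (4 * (1 + 3 * v - 3 * v ^ 2 - 4 * v ^ 3 - v ^ 4))
              · have : 0 ≤ -3 + 4 * v + 3 * v ^ 2 := by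
                  linarith only [box ha2 hb 0 2, box ha2 hb 1 1, box ha2 hb 2 0]
                linear_combination W.xU (4 * (1 + 3 * v - v ^ 2 - v ^ 3)) E0 E7 +
                  W.yU (7 + 27 * v + 13 * v ^ 2 + v ^ 3) E0 E7 +
                  W.yU ((1 + v) * (-3 + 4 * v + 3 * v ^ 2)) E0 E8 +
                  W.xL ((1 + v) * (1 + 10 * v + 5 * v ^ 2)) E7 E8 + W.xL (2 * (1 + v) ^ 2) E7 E9 +
                  W.yL ((1 + v) ^ 3) E8 E2 + W.yL ((1 + v) ^ 2 * (3 + v)) E8 E9 +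
                  W.xU ((1 + v) ^ 3) E9 E6 + H.s2 (1 + v) +
                  pos (4 * (1 - v) * (1 + 4 * v + 2 * v ^ 2))
          · linear_combination W.xU (4 * (1 + 2 * v)) E0 E7 + W.yU (4 * (1 + 3 * v + v ^ 2)) E0 E7 +
              W.xL ((1 + v) * (1 + 3 * v)) E7 E8 + W.xL (2 * (1 + v + 2 * v ^ 2)) E7 E9 +
              W.yL (3 + 2 * v + 3 * v ^ 2) E7 E9 + W.yL ((1 + v) ^ 2) E8 E2 +
              W.xU ((1 + v) ^ 2) E9 E6 + W.yU (2 * v * (1 + v)) E9 E8 + H.s2 1 + pos (4 * (1 - v))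
      · rcases le_total s2 t7 with h27 | h72
        · have h86 := h82.trans h26
          rcases le_total v (7 / 20) with hb1 | ha1
          · have : 0 ≤ 2 - 5 * v - 2 * v ^ 2 := by
              linarith only [box h0.le hb1 0 2, box h0.le hb1 1 1, box h0.le hb1 2 0]
            linear_combination W.yL (1 + v) E0 E2 + W.yU (2 * (1 + v)) E0 E7 +
              W.xL (2 * (2 - v)) E0 E8 + W.yU (7 + v) E0 E8 + W.xL (1 + v) E7 E9 +
              W.yL (1 + v) E7 E9 + W.xU (1 + v) E8 E6 + W.xU (2 * (1 + v)) E8 E7 + H.s1 1 +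
              pos (2 * (2 - 5 * v - 2 * v ^ 2))
          · have : 0 ≤ -1 + 3 * v := by linarith
            linear_combination W.xU (2 * v * (1 + v)) E0 E1 + W.xL (2 * (2 + v + v ^ 2)) E0 E8 +
              W.yU (4 * (2 + 2 * v + v ^ 2)) E0 E8 + W.xL (2 * v * (1 + v)) E1 E2 +
              W.xU ((1 + v) ^ 2) E2 E6 + W.xU (2 * (1 + v) ^ 2) E2 E7 +
              W.yU (2 * (1 + v) ^ 2) E2 E7 + W.xL ((1 + v) ^ 2) E7 E9 + W.yL ((1 + v) ^ 2) E7 E9 +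
              W.xU ((1 + v) * (3 + 5 * v)) E8 E2 + W.yL ((1 + v) * (-1 + 3 * v)) E8 E2 + H.s2 1 +
              pos (4 * (1 - v))
        · rcases le_total s2 t9 with h29 | h92
          · have h19 := h12.trans h29
            rcases le_total v (27 / 50) with hb1 | ha1
            · have : 0 ≤ 1 - v - v ^ 2 := by
                linarith only [box h0.le hb1 0 2, box h0.le hb1 1 1, box h0.le hb1 2 0]
              linear_combination W.xU (2 * v * (1 + v) ^ 2) E0 E1 + W.yU ((1 + v) * (1 - v)) E0 E7 +
                W.xL (2 * (2 + v - v ^ 3)) E0 E8 + W.yU (7 + 8 * v + 5 * v ^ 2) E0 E8 +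
                W.yU ((1 + v) ^ 2) E1 E2 + W.yL ((1 + v) ^ 2) E1 E9 + W.xU ((1 + v) ^ 2) E2 E6 +
                W.xL ((1 + v) ^ 2) E2 E9 + W.xL ((1 + v) ^ 2 * (1 - v - v ^ 2)) E7 E2 +
                W.yL (2 * (1 + v) ^ 3) E7 E2 + W.xU ((1 + v) ^ 2 * (1 - v - v ^ 2)) E8 E2 +
                W.xU ((1 + v) * (2 + 3 * v + 4 * v ^ 2 + v ^ 3)) E8 E7 + H.s1 (1 + v) +
                pos (4 * (1 - v - v ^ 2))
            · rcases R.gap2 with hb2 | ha2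
              · have : 0 ≤ -3 + 4 * v + 3 * v ^ 2 := by
                  linarith only [box ha1 hb2 0 2, box ha1 hb2 1 1, box ha1 hb2 2 0]
                have : 0 ≤ 1 + 5 * v - 4 * v ^ 2 - 4 * v ^ 3 := by
                  linarith only [box ha1 hb2 0 3, box ha1 hb2 1 2, box ha1 hb2 2 1, box ha1 hb2 3 0]
                linear_combination W.xU ((1 + v) ^ 2) E0 E1 +
                  W.yU ((1 + v) * (-3 + 4 * v + 3 * v ^ 2)) E0 E7 +
                  W.xL (3 + 12 * v - 3 * v ^ 2 - 4 * v ^ 3) E0 E8 +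
                  W.yU (5 + 25 * v + 13 * v ^ 2 + v ^ 3) E0 E8 + W.xL ((1 + v) ^ 2) E1 E2 +
                  W.xU ((1 + v) ^ 3) E2 E6 + W.xL ((1 + v) ^ 3) E2 E9 + W.yL ((1 + v) ^ 3) E2 E9 +
                  W.xU ((1 + v) ^ 2) E7 E2 + W.yL (2 * (1 + v) ^ 2 * (2 + v)) E7 E2 +
                  W.xU ((1 + v) * (2 + v) * (1 + 5 * v)) E8 E7 + H.s2 (1 + v) +
                  pos (2 * (1 + 5 * v - 4 * v ^ 2 - 4 * v ^ 3))
              · have : 0 ≤ -3 + 4 * v + 3 * v ^ 2 := by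
                  linarith only [box ha2 hb 0 2, box ha2 hb 1 1, box ha2 hb 2 0]
                have : 0 ≤ -5 - 8 * v + 13 * v ^ 2 + 8 * v ^ 3 := by
                  linarith only [box ha2 hb 0 3, box ha2 hb 1 2, box ha2 hb 2 1, box ha2 hb 3 0]
                linear_combination W.xU ((1 + v) ^ 2 * (1 + 3 * v)) E0 E1 +
                  W.yU ((1 + v) * (1 + 3 * v) * (-3 + 4 * v + 3 * v ^ 2)) E0 E7 +
                  W.xL ((1 + 3 * v) * (3 + 12 * v - 3 * v ^ 2 - 4 * v ^ 3)) E0 E8 +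
                  W.yU ((1 + 3 * v) * (5 + 25 * v + 13 * v ^ 2 + v ^ 3)) E0 E8 +
                  W.xL ((1 + v) ^ 2 * (1 + 3 * v)) E1 E2 + W.xU ((1 + v) ^ 3 * (1 + 3 * v)) E2 E6 +
                  W.xL ((1 + v) ^ 3 * (1 + 3 * v)) E2 E9 + W.yL ((1 + v) ^ 3 * (1 + 3 * v)) E2 E9 +
                  W.xU ((1 + v) ^ 2 * (1 + 3 * v)) E7 E2 +
                  W.yL (2 * (1 + v) ^ 2 * (1 + 3 * v) * (2 + v)) E7 E2 +
                  W.xU ((1 + v) * (1 + 3 * v) * (2 + v) * (1 + 5 * v)) E8 E7 + H.s3 ((1 + v) ^ 2) +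
                  pos (2 * (-5 - 8 * v + 13 * v ^ 2 + 8 * v ^ 3))
          · have h96 := h92.trans h26
            linear_combination W.yU ((1 + v) * (1 + 3 * v)) E0 E7 +
              W.xL (4 * (1 + v - v ^ 2)) E0 E8 + W.yU (7 + 12 * v + v ^ 2) E0 E8 +
              W.yL ((1 + v) ^ 2) E7 E2 + W.xL (2 * (1 + v)) E7 E9 + W.yL ((1 + v) * (3 + v)) E7 E9 +
              W.xU ((1 + v) * (3 + 5 * v)) E8 E7 + W.xU ((1 + v) ^ 2) E9 E6 + H.s2 1 +
              pos (8 * (1 + v) * (1 - v))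
    · rcases le_total s2 t9 with h29 | h92
      · have h89 := h82.trans h29
        rcases R.golden with ⟨hb1, k1⟩ | ⟨ha1, k1⟩
        · have : 0 ≤ 1 - 3 * v + 2 * v ^ 2 + v ^ 3 := by
            linarith only [box h0.le hb1 0 3, box h0.le hb1 1 2, box h0.le hb1 2 1,
              box h0.le hb1 3 0]
          linear_combination W.xU (2 * (1 - v)) E0 E1 + W.yL (4 * (1 - v - v ^ 2)) E0 E2 +
            W.xL (2 * (1 + v)) E0 E8 + W.xL (2 * (1 - v)) E1 E2 + W.xU ((1 + v) * (1 - v)) E2 E6 +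
            W.xL (2 * (1 + v) * (1 - v)) E2 E9 + W.xU ((1 - v) ^ 2) E8 E2 +
            W.yL (1 + 3 * v ^ 2) E8 E2 + W.yL (2 * (1 + v) * (1 - v)) E8 E9 +
            W.xU ((1 + v) * (1 - v)) E9 E7 + W.yU ((1 + v) * (1 - v)) E9 E7 + H.s1 (1 - v) +
            pos (4 * (1 - 3 * v + 2 * v ^ 2 + v ^ 3))
        · linear_combination W.xU (2 * (1 + v)) E0 E1 + W.xL (2 * (1 + 7 * v + 4 * v ^ 2)) E0 E8 +
            W.yU (4 * (-1 + v + v ^ 2)) E0 E8 + W.xL (2 * (1 + v)) E1 E2 +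
            W.xU ((1 + v) ^ 2) E2 E6 + W.xL (2 * (1 + v) ^ 2) E2 E9 + W.yL (2 * (1 + v) ^ 2) E2 E9 +
            W.xU ((1 + v) * (1 - v)) E8 E2 + W.yL ((1 + v) * (7 + 3 * v)) E8 E2 +
            W.xU ((1 + v) ^ 2) E9 E7 + W.yU ((1 + v) ^ 2) E9 E7 + H.s2 1 +
            pos (4 * (1 + v) * (1 - v))
      · rcases le_total t8 t9 with h89 | h98
        · rcases le_total s2 t7 with h27 | h72
          · rcases le_total z t9 with h19 | h91
            · have h96 := h92.trans h26
              rcases le_total v (17 / 25) with hb1 | ha1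
              · have : 0 ≤ 3 - 3 * v - 2 * v ^ 2 := by
                  linarith only [box h0.le hb1 0 2, box h0.le hb1 1 1, box h0.le hb1 2 0]
                linear_combination W.xU (2 * (1 + v)) E0 E1 +
                  W.xL ((1 + v) ^ 2 * (5 + 2 * v)) E0 E8 +
                  W.xL ((1 + v) * (1 - v) * (1 + 2 * v)) E0 E9 + W.xL (2 * (1 + v)) E1 E9 +
                  W.yU (2 * (1 + v)) E2 E7 + W.yL (4 * (1 + v)) E8 E2 +
                  W.xU ((1 + v) * (3 - 3 * v - 2 * v ^ 2)) E8 E9 + W.yL (4 * (1 + v) ^ 2) E8 E9 +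
                  W.xU (2 * (1 + v)) E9 E6 + W.xU (2 * (1 + v)) E9 E7 + H.s1 2 + pos (4 * (1 - v))
              · rcases le_total v (7 / 10) with hb2 | ha2
                · have : 0 ≤ -7 + 5 * v + 8 * v ^ 2 := by
                    linarith only [box ha1 hb2 0 2, box ha1 hb2 1 1, box ha1 hb2 2 0]
                  have : 0 ≤ -1 + 3 * v := by linarith
                  have : 0 ≤ 3 + 6 * v - 9 * v ^ 2 - 8 * v ^ 3 := by
                    linarith only [box ha1 hb2 0 3, box ha1 hb2 1 2, box ha1 hb2 2 1,
                      box ha1 hb2 3 0]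
                  linear_combination W.yU ((1 + v) ^ 2 * (3 + v)) E0 E1 +
                    W.yL ((1 + v) ^ 2 * (3 + v)) E0 E1 +
                    W.xL (2 * v * (1 + v) * (1 + 19 * v + 14 * v ^ 2)) E0 E8 +
                    W.yU (2 * v * (1 + v) * (-7 + 5 * v + 8 * v ^ 2)) E0 E8 +
                    W.xL (2 * v * (1 + v) ^ 2 * (3 + v)) E1 E9 +
                    W.yU (2 * v * (1 + v) ^ 2 * (1 + 2 * v)) E2 E7 +
                    W.yL (5 * v * (1 + v) ^ 3) E8 E2 + W.yL (v * (1 + v) ^ 2 * (11 + 7 * v)) E8 E9 +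
                    W.yU (v * (1 + v) ^ 2 * (-1 + 3 * v)) E9 E2 +
                    W.xU (2 * v * (1 + v) ^ 2 * (1 + 2 * v)) E9 E6 +
                    W.xU (2 * v * (1 + v) ^ 2 * (1 + 2 * v)) E9 E7 + H.s2 (2 * v * (1 + 2 * v)) +
                    pos (2 * v * (3 + 6 * v - 9 * v ^ 2 - 8 * v ^ 3))
                · have : 0 ≤ -3 + 3 * v + 2 * v ^ 2 := by
                    linarith only [box ha2 hb 0 2, box ha2 hb 1 1, box ha2 hb 2 0]
                  linear_combination W.xU ((1 + v) ^ 2) E0 E1 + W.xL (2 * (1 + v) * (1 - v)) E0 E1 +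
                    W.xL (1 + 16 * v + 7 * v ^ 2) E0 E8 +
                    W.yU (2 * (-3 + 3 * v + 2 * v ^ 2)) E0 E8 + W.xL ((1 + v) * (3 - v)) E1 E9 +
                    W.yU ((1 + v) ^ 2) E2 E7 + W.yL (2 * (1 + v) ^ 2) E8 E2 +
                    W.yL ((1 + v) * (5 + v)) E8 E9 + W.xU ((1 + v) ^ 2) E9 E6 +
                    W.xU ((1 + v) ^ 2) E9 E7 + H.s2 1 + pos (2 * (1 - v) * (1 + 2 * v))
            · have h16 := h12.trans h26
              have h17 := h12.trans h27
              rcases le_total 0 (1 + v - 3 * v ^ 2 - v ^ 3) with hq1 | hq1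
              · have hb1 := brk0_le hb hq1
                linear_combination W.xL ((1 + v) * (2 + 4 * v + v ^ 2)) E0 E8 +
                  W.xL ((1 + v) * (2 - v ^ 2)) E0 E9 + W.xU (2 * v) E1 E6 + W.xL (1 + v) E1 E6 +
                  W.xU (1 + v) E1 E7 + W.yU (1 + v) E2 E7 + W.yL (2 * v) E8 E2 +
                  W.xU (1 + v - 3 * v ^ 2 - v ^ 3) E8 E9 + W.yL ((1 + v) * (3 + 2 * v)) E8 E9 +
                  W.xU (2 * (1 + 2 * v)) E9 E1 + H.s1 1
              · have ha1 := brk0_ge h0 hq1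
                have : 0 ≤ -1 - v + 3 * v ^ 2 + v ^ 3 := by linarith
                linear_combination W.xL (1 + 13 * v + 27 * v ^ 2 + 7 * v ^ 3) E0 E8 +
                  W.yU (4 * (-1 - v + 3 * v ^ 2 + v ^ 3)) E0 E8 +
                  W.xL ((1 + v) * (3 + 4 * v - 3 * v ^ 2)) E0 E9 +
                  W.xU (2 * v * (1 + v) ^ 2) E1 E6 + W.xL ((1 + v) ^ 3) E1 E6 +
                  W.xU ((1 + v) ^ 3) E1 E7 + W.yU ((1 + v) ^ 3) E2 E7 +
                  W.yL (2 * v * (1 + v) ^ 2) E8 E2 + W.yL ((1 + v) * (5 + 10 * v + v ^ 2)) E8 E9 +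
                  W.xU (2 * (1 + v) ^ 2 * (1 + 2 * v)) E9 E1 + H.s2 (1 + v) +
                  pos (4 * v ^ 2 * (1 - v))
          · have h76 := h72.trans h26
            have h86 := h82.trans h26
            rcases R.golden with ⟨hb1, k1⟩ | ⟨ha1, k1⟩
            · linear_combination W.xL ((1 + v) ^ 2 * (2 + v)) E0 E8 +
                W.xL ((1 + v) ^ 2 * (2 - v)) E0 E9 + W.yL (1 + v) E7 E2 +
                W.xU (v * (1 + v) ^ 2) E7 E6 + W.xU ((1 + v) * (1 - v - v ^ 2)) E8 E6 +
                W.yL ((1 + v) * (3 + 2 * v)) E8 E9 + W.xU (1 + 4 * v + 2 * v ^ 2 + v ^ 3) E9 E7 +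
                W.yU (2 * v) E9 E7 + H.s1 1
            · linear_combination W.xL (1 + 12 * v + 7 * v ^ 2) E0 E8 +
                W.yU (4 * (-1 + v + v ^ 2)) E0 E8 + W.xL ((1 + v) * (3 + v)) E0 E9 +
                W.yL ((1 + v) ^ 2) E7 E2 + W.xU ((1 + v) ^ 2) E7 E6 +
                W.yL ((1 + v) * (5 + 3 * v)) E8 E9 + W.xU (2 * (1 + v) * (1 + 2 * v)) E9 E7 +
                W.yU (2 * v * (1 + v)) E9 E7 + H.s2 1
        · rcases le_total t7 t8 with h78 | h87
          · have h72 := h78.trans h82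
            have h86 := h82.trans h26
            linear_combination W.xL (4 * (1 + 3 * v + v ^ 2)) E0 E9 + W.yL (4 * v * (2 + v)) E0 E9 +
              W.yL ((1 + v) ^ 2) E7 E2 + W.xL (2 * (1 + v)) E7 E8 + W.yU ((1 + v) * (3 + v)) E7 E8 +
              W.xU ((1 + v) ^ 2) E8 E6 + W.xU (3 + 2 * v + 3 * v ^ 2) E9 E7 +
              W.yU (7 + 6 * v + 3 * v ^ 2) E9 E7 + H.s2 1 + pos (4 * (1 - v) * (2 + v))
          · rcases le_total s2 t7 with h27 | h72
            · rcases le_total z t8 with h18 | h81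
              · have h96 := h92.trans h26
                rcases le_total v (7 / 20) with hb1 | ha1
                · have : 0 ≤ 1 - v - 2 * v ^ 2 - 2 * v ^ 3 := by
                    linarith only [box h0.le hb1 0 3, box h0.le hb1 1 2, box h0.le hb1 2 1,
                      box h0.le hb1 3 0]
                  linear_combination W.xU ((1 + v) ^ 2) E0 E1 + W.xL ((1 + v) * (1 + 3 * v)) E0 E8 +
                    W.xL (2 * (1 + 2 * v + 3 * v ^ 2)) E0 E9 +
                    W.yL (2 * (1 + v + 2 * v ^ 2)) E0 E9 + W.xL ((1 + v) ^ 2) E1 E8 +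
                    W.yU ((1 + v) ^ 2) E2 E7 + W.yL (2 * (1 + v) ^ 2) E8 E2 +
                    W.xU ((1 + v) ^ 2) E8 E7 + W.xU ((1 + v) ^ 2) E9 E6 +
                    W.yU ((1 + v) * (1 + 3 * v)) E9 E8 + H.s1 (1 + v) +
                    pos (2 * (1 - v - 2 * v ^ 2 - 2 * v ^ 3))
                · have : 0 ≤ -1 + 5 * v := by linarith
                  have : 0 ≤ -1 + 7 * v := by linarith
                  have : 0 ≤ -1 + 3 * v := by linarith
                  linear_combination W.xU ((1 + v) ^ 2 * (1 + 3 * v)) E0 E1 +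
                    W.xL ((1 + v) ^ 2 * (-1 + 5 * v)) E0 E1 +
                    W.xL (2 * v * (1 + v) * (-1 + 7 * v)) E0 E9 +
                    W.yL (2 * (1 + v) * (1 - 3 * v + 4 * v ^ 2)) E0 E9 +
                    W.xL (8 * v * (1 + v) ^ 2) E1 E8 + W.xU (v * (1 + v) ^ 3) E2 E6 +
                    W.xL (v * (1 + v) ^ 3) E2 E6 + W.yU (2 * v * (1 + v) ^ 2) E2 E7 +
                    W.yL (2 * (1 + v) ^ 2 * (1 + 2 * v)) E8 E2 + W.xU (2 * v * (1 + v) ^ 2) E8 E7 +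
                    W.yU (2 * (1 + v) ^ 2 * (-1 + 3 * v)) E9 E8 + H.s2 (2 * v) +
                    pos (2 * (1 - v) * (1 + 3 * v))
              · have h16 := h12.trans h26
                have h17 := h12.trans h27
                have h91 := h98.trans h81
                rcases R.golden with ⟨hb1, k1⟩ | ⟨ha1, k1⟩
                · linear_combination W.xL ((1 + v) ^ 2 * (2 - v)) E0 E8 +
                    W.xL ((1 + v) ^ 2 * (2 + v)) E0 E9 + W.xU (2 * v) E1 E6 + W.xL (1 + v) E1 E6 +
                    W.yU (1 + v) E2 E7 + W.xU (v * (3 + 2 * v + v ^ 2)) E8 E1 + W.yL (2 * v) E8 E2 +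
                    W.xU (1 + v) E8 E7 + W.xU ((1 + v) * (1 - v - v ^ 2)) E9 E1 +
                    W.yU ((1 + v) * (3 + 2 * v)) E9 E8 + H.s1 1
                · linear_combination W.xL ((1 + v) * (3 + v)) E0 E8 +
                    W.xL (1 + 12 * v + 7 * v ^ 2) E0 E9 + W.yL (4 * (-1 + v + v ^ 2)) E0 E9 +
                    W.xU (2 * v * (1 + v)) E1 E6 + W.xL ((1 + v) ^ 2) E1 E6 +
                    W.xU ((1 + v) ^ 2) E1 E7 + W.yU ((1 + v) ^ 2) E2 E7 +
                    W.xU (2 * (1 + v) * (1 + 2 * v)) E8 E1 + W.yL (2 * v * (1 + v)) E8 E2 +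
                    W.yU ((1 + v) * (5 + 3 * v)) E9 E8 + H.s2 1
            · have h76 := h72.trans h26
              have h96 := h92.trans h26
              rcases le_total 0 (1 + v - 3 * v ^ 2 - v ^ 3) with hq1 | hq1
              · have hb1 := brk0_le hb hq1
                linear_combination W.xL ((1 + v) * (2 - v ^ 2)) E0 E8 +
                  W.xL ((1 + v) * (2 + 4 * v + v ^ 2)) E0 E9 + W.yL (1 + v) E7 E2 +
                  W.xU (v ^ 2 * (3 + v)) E7 E6 + W.xU ((1 + v) ^ 3) E8 E7 + W.yU (2 * v) E8 E7 +
                  W.xU (1 + v - 3 * v ^ 2 - v ^ 3) E9 E6 + W.yU ((1 + 2 * v) * (3 + v)) E9 E8 +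
                  H.s1 1
              · have ha1 := brk0_ge h0 hq1
                have : 0 ≤ -1 - v + 3 * v ^ 2 + v ^ 3 := by linarith
                linear_combination W.xL ((1 + v) * (3 + 4 * v - 3 * v ^ 2)) E0 E8 +
                  W.xL (1 + 13 * v + 27 * v ^ 2 + 7 * v ^ 3) E0 E9 +
                  W.yL (4 * (-1 - v + 3 * v ^ 2 + v ^ 3)) E0 E9 + W.yL ((1 + v) ^ 3) E7 E2 +
                  W.xU ((1 + v) ^ 3) E7 E6 + W.xU (2 * (1 + v) ^ 2 * (1 + 2 * v)) E8 E7 +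
                  W.yU (2 * v * (1 + v) ^ 2) E8 E7 +
                  W.yU ((1 + v) * (5 + 12 * v + 3 * v ^ 2)) E9 E8 + H.s2 (1 + v) +
                  pos (4 * v ^ 2 * (1 - v))

set_option maxHeartbeats 0 in
/-- Exactly the two agents starting at `1` find the marker, `(1, 1)` first. -/
theorem caseC {v : ℝ} {P : ℝ → ℝ → ℝ → Prop} (R : Range v) (W : Worldline v P)
    {z m w s2 s3 t6 t7 t8 t9 : ℝ} (E1 : P z m w)
    (A6 : MarkedAt v P z m 1 1 s2 t6)
    (A7 : MarkedAt v P z m 1 (-1) s3 t7)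
    (A8 : Unmarked P (-1) 1 t8)
    (A9 : Unmarked P (-1) (-1) t9)
    (h23 : s2 ≤ s3)
    (H : Below v (t6 + t7 + t8 + t9)) : False := by
  obtain ⟨x2, y6, h12, h26, E2, E6⟩ := A6
  obtain ⟨x3, y7, h13, h37, E3, E7⟩ := A7
  obtain ⟨y8, E8⟩ := A8
  obtain ⟨y9, E9⟩ := A9
  have E0 := W.origin
  have h01 := W.nonneg E1
  have h02 := W.nonneg E2
  have h03 := W.nonneg E3
  have h06 := W.nonneg E6
  have h07 := W.nonneg E7
  have h08 := W.nonneg E8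
  have h09 := W.nonneg E9
  have h0 := R.pos
  have hb := R.le
  have h1 : 0 < 1 - v := by linarith
  have : 0 ≤ 1 + 2 * v - v ^ 2 := by
    linarith only [box h0.le hb 0 2, box h0.le hb 1 1, box h0.le hb 2 0]
  have : 0 ≤ 1 + 2 * v - v ^ 2 - v ^ 3 := by
    linarith only [box h0.le hb 0 3, box h0.le hb 1 2, box h0.le hb 2 1, box h0.le hb 3 0]
  have : 0 ≤ 3 + v - v ^ 2 - v ^ 3 := by
    linarith only [box h0.le hb 0 3, box h0.le hb 1 2, box h0.le hb 2 1, box h0.le hb 3 0]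
  have : 0 ≤ 17 + 4 * v - 5 * v ^ 2 := by
    linarith only [box h0.le hb 0 2, box h0.le hb 1 1, box h0.le hb 2 0]
  have : 0 ≤ 3 - v := by linarith only [box h0.le hb 0 1, box h0.le hb 1 0]
  have : 0 ≤ 2 - v := by linarith only [box h0.le hb 0 1, box h0.le hb 1 0]
  have : 0 ≤ 2 - v ^ 2 := by linarith only [box h0.le hb 0 2, box h0.le hb 1 1, box h0.le hb 2 0]
  have : 0 ≤ 4 - 3 * v := by linarith only [box h0.le hb 0 1, box h0.le hb 1 0]
  have : 0 ≤ 4 - v - v ^ 2 := by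
    linarith only [box h0.le hb 0 2, box h0.le hb 1 1, box h0.le hb 2 0]
  have : 0 ≤ 2 - 2 * v + v ^ 2 + 3 * v ^ 3 := by
    linarith only [box h0.le hb 0 3, box h0.le hb 1 2, box h0.le hb 2 1, box h0.le hb 3 0]
  have : 0 ≤ 3 + 5 * v - 2 * v ^ 2 - 2 * v ^ 3 := by
    linarith only [box h0.le hb 0 3, box h0.le hb 1 2, box h0.le hb 2 1, box h0.le hb 3 0]
  have : 0 ≤ 2 + 26 * v + 15 * v ^ 2 - 6 * v ^ 3 - v ^ 4 := by
    linarith only [box h0.le hb 0 4, box h0.le hb 1 3, box h0.le hb 2 2, box h0.le hb 3 1,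
      box h0.le hb 4 0]
  have : 0 ≤ 6 - 3 * v ^ 2 + v ^ 3 := by
    linarith only [box h0.le hb 0 3, box h0.le hb 1 2, box h0.le hb 2 1, box h0.le hb 3 0]
  have : 0 ≤ 5 + 3 * v - v ^ 2 := by
    linarith only [box h0.le hb 0 2, box h0.le hb 1 1, box h0.le hb 2 0]
  have : 0 ≤ 1 + v - v ^ 2 := by
    linarith only [box h0.le hb 0 2, box h0.le hb 1 1, box h0.le hb 2 0]
  have : 0 ≤ 2 + 2 * v - v ^ 2 := by
    linarith only [box h0.le hb 0 2, box h0.le hb 1 1, box h0.le hb 2 0]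
  refine lt_irrefl (0 : ℝ) ?_
  rcases le_total z t8 with h18 | h81
  · rcases le_total z t9 with h19 | h91
    · rcases le_total s2 t8 with h28 | h82
      · rcases le_total t8 t9 with h89 | h98
        · rcases le_total t7 t8 with h78 | h87
          · have h39 := (h37.trans h78).trans h89
            linear_combination W.xU (1 + 4 * v + 7 * v ^ 2 + 2 * v ^ 3) E0 E1 +
              W.xU (v * (1 + v) * (2 + 4 * v + v ^ 2)) E0 E2 +
              W.xU ((1 - v) * (2 + 6 * v + 4 * v ^ 2 + v ^ 3)) E0 E3 + W.xU ((1 + v) ^ 2) E0 E6 +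
              W.xL (v * (1 + v) * (2 + 4 * v + v ^ 2)) E1 E2 +
              W.xL ((1 - v) * (1 + 3 * v + 4 * v ^ 2 + v ^ 3)) E1 E3 +
              W.yU ((1 + v) ^ 2 * (3 + 2 * v)) E2 E3 + W.yU (2 * v * (1 + v)) E2 E8 +
              W.xU (2 * (1 + 2 * v - v ^ 2)) E3 E7 + W.xL ((1 + v) ^ 2) E3 E9 +
              W.xL ((1 + v) * (1 + 3 * v)) E7 E8 + W.yL ((1 + v) ^ 2) E8 E9 + H.s1 (1 + v)
          · rcases le_total t7 t9 with h79 | h97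
            · linear_combination W.xU ((1 + 3 * v) * (3 + v)) E0 E1 + W.yL (4 * v * (2 + v)) E0 E1 +
                W.xU ((1 + v) ^ 2) E0 E6 + W.yL (4 * (1 + v) ^ 2) E1 E2 +
                W.xL (3 + 2 * v + 3 * v ^ 2) E1 E8 + W.yU 4 E1 E8 + W.yU ((1 + v) * (3 + v)) E2 E3 +
                W.yU (2 * v * (1 + v)) E2 E8 + W.xL ((1 + v) ^ 2) E7 E9 + W.xU (2 * (1 + v)) E8 E7 +
                W.yL ((1 + v) ^ 2) E8 E9 + H.s2 1 + pos (4 * (1 - v) * (2 + v))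
            · have h29 := h28.trans h89
              rcases le_total v (9 / 20) with hb1 | ha1
              · have : 0 ≤ 1 - v - v ^ 2 := by
                  linarith only [box h0.le hb1 0 2, box h0.le hb1 1 1, box h0.le hb1 2 0]
                linear_combination W.xU (3 * (1 + v)) E0 E1 + W.yL (4 * (1 + v)) E0 E2 +
                  W.xU (1 + v) E0 E6 + W.xL (2 * (1 + v)) E1 E8 + W.xL (1 + v) E1 E9 +
                  W.yU (1 + v) E2 E3 + W.yU (2 * (1 + v)) E2 E8 + W.xU (1 + v) E8 E7 +
                  W.yL (1 + v) E8 E9 + H.s1 1 + pos (4 * (1 - v - v ^ 2))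
              · have : 0 ≤ -1 + 2 * v + v ^ 2 := by
                  linarith only [box ha1 hb 0 2, box ha1 hb 1 1, box ha1 hb 2 0]
                linear_combination W.xU (3 * (1 + v) ^ 2) E0 E1 + W.xU ((1 - v) ^ 2) E0 E2 +
                  W.yL (4 * (2 + 2 * v + v ^ 2)) E0 E2 + W.xL (2 * (1 - v)) E1 E2 +
                  W.xL (1 + 8 * v + 3 * v ^ 2) E1 E8 + W.yU ((1 + v) ^ 2) E2 E3 +
                  W.xU ((1 + v) ^ 2) E2 E6 + W.yU (2 * (-1 + 2 * v + v ^ 2)) E2 E8 +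
                  W.xL (2 * (1 + v)) E2 E9 + W.yL ((1 + v) * (3 + v)) E8 E9 +
                  W.xU ((1 + v) ^ 2) E9 E7 + H.s2 1 + pos (4 * (1 + v) * (1 - v))
        · rcases le_total s3 t9 with h39 | h93
          · have h16 := h12.trans h26
            have h38 := h39.trans h98
            rcases le_total 0 (1 - v ^ 2 - v ^ 3) with hq1 | hq1
            · have hb1 := brk2_le hb hq1
              linear_combination W.xU ((1 + 2 * v) * (2 + v)) E0 E1 +
                W.xU (v * (1 + v) * (2 + v)) E0 E2 + W.xU (1 - v ^ 2 - v ^ 3) E0 E3 +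
                W.xU (1 + v) E0 E6 + W.xL (v * (1 + v) * (2 + v)) E1 E2 +
                W.xL (1 + 2 * v - v ^ 2 - v ^ 3) E1 E3 + W.xL (1 + v) E1 E8 +
                W.yU ((1 + v) * (3 + 2 * v)) E2 E3 + W.xU (1 + v) E3 E7 + W.xL (1 + 3 * v) E3 E9 +
                W.yL (2 * v) E3 E9 + W.yU (1 + v) E9 E8 + H.s1 1
            · have ha1 := brk2_ge h0 hq1
              have : 0 ≤ -1 + v ^ 2 + v ^ 3 := by linarith
              have : 0 ≤ -3 + v + 3 * v ^ 2 + 3 * v ^ 3 := by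
                linarith only [box ha1 hb 0 3, box ha1 hb 1 2, box ha1 hb 2 1, box ha1 hb 3 0]
              linear_combination W.xU ((1 + v) * (3 + 4 * v + 5 * v ^ 2)) E0 E1 +
                W.yL (4 * (-1 + v ^ 2 + v ^ 3)) E0 E2 +
                W.xU (-3 + v + 3 * v ^ 2 + 3 * v ^ 3) E0 E6 +
                W.xL ((1 + v) * (3 + 3 * v + 2 * v ^ 2)) E1 E6 +
                W.xL (v * (1 + v) * (1 + 3 * v)) E1 E9 +
                W.yU ((1 + v) * (2 + 3 * v + 3 * v ^ 2)) E2 E3 + W.xU (v * (1 + v) ^ 2) E3 E7 +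
                W.xL (v * (1 + v) ^ 2) E3 E8 + W.yL (2 * v ^ 2 * (1 + v)) E3 E9 +
                W.yU (v * (1 + v) ^ 2) E9 E8 + H.s2 v + pos (4 * v * (1 - v))
          · rcases le_total s3 t8 with h38 | h83
            · have h97 := h93.trans h37
              rcases le_total v (7 / 20) with hb1 | ha1
              · have : 0 ≤ 3 - 3 * v - 4 * v ^ 2 := by
                  linarith only [box h0.le hb1 0 2, box h0.le hb1 1 1, box h0.le hb1 2 0]
                linear_combination W.xU ((1 + v) * (9 + 7 * v)) E0 E1 +
                  W.yL (4 * (1 + v) * (2 + v)) E0 E2 + W.xU ((1 + v) * (3 + v)) E0 E6 +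
                  W.xL ((1 + v) * (3 - 3 * v - 4 * v ^ 2)) E1 E3 +
                  W.xL (2 * (1 + v) ^ 2 * (3 + 2 * v)) E1 E9 + W.yU (2 * (1 + v) ^ 2) E2 E3 +
                  W.yU ((1 + v) * (3 + v)) E2 E8 + W.xU (4 * v * (1 + v) ^ 2) E3 E7 +
                  W.xL ((1 + v) * (3 + v)) E3 E8 + W.yU ((1 + v) * (9 + 7 * v)) E9 E3 +
                  W.xU ((1 + v) * (3 - 3 * v - 4 * v ^ 2)) E9 E7 + H.s1 (3 + v) +
                  pos (4 * (3 + v - v ^ 2 - v ^ 3))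
              · rcases le_total v (29 / 50) with hb2 | ha2
                · have : 0 ≤ -1 + 3 * v := by linarith
                  have : 0 ≤ -1 + 16 * v - 7 * v ^ 2 := by
                    linarith only [box ha1 hb2 0 2, box ha1 hb2 1 1, box ha1 hb2 2 0]
                  have : 0 ≤ 7 - 8 * v - 7 * v ^ 2 := by
                    linarith only [box ha1 hb2 0 2, box ha1 hb2 1 1, box ha1 hb2 2 0]
                  have : 0 ≤ 3 + 6 * v - 16 * v ^ 3 - 5 * v ^ 4 := by
                    linarith only [box ha1 hb2 0 4, box ha1 hb2 1 3, box ha1 hb2 2 2,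
                      box ha1 hb2 3 1, box ha1 hb2 4 0]
                  linear_combination W.xU (4 * v * (1 + v) ^ 2 * (5 + v)) E0 E1 +
                    W.yL ((1 + v) ^ 2 * (1 + 4 * v + 11 * v ^ 2)) E0 E2 +
                    W.yL ((1 + v) ^ 2 * (3 + 5 * v ^ 2)) E0 E6 +
                    W.yU (8 * v * (1 + v) ^ 2 * (-1 + 3 * v)) E0 E8 +
                    W.xL (4 * v * (1 + v) ^ 2 * (5 + v)) E1 E9 +
                    W.yU (2 * (1 + v) ^ 3 * (-1 + 3 * v)) E2 E3 +
                    W.yU ((1 + v) ^ 2 * (3 + 5 * v ^ 2)) E2 E6 +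
                    W.xU (v * (1 + v) ^ 2 * (-1 + 16 * v - 7 * v ^ 2)) E3 E7 +
                    W.xL (v * (1 + v) ^ 2 * (-1 + 16 * v - 7 * v ^ 2)) E3 E8 +
                    W.yU (2 * v * (1 + v) * (17 + 4 * v - 5 * v ^ 2)) E9 E3 +
                    W.xU (v * (1 + v) * (1 - v) * (7 - 8 * v - 7 * v ^ 2)) E9 E7 +
                    W.xU (v * (1 + v) ^ 2 * (7 - 8 * v - 7 * v ^ 2)) E9 E8 +
                    H.s1 (2 * v * (3 + 5 * v ^ 2)) +
                    pos (8 * v * (3 + 6 * v - 16 * v ^ 3 - 5 * v ^ 4))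
                · have : 0 ≤ -1 + 5 * v + 8 * v ^ 2 := by
                    linarith only [box ha2 hb 0 2, box ha2 hb 1 1, box ha2 hb 2 0]
                  have : 0 ≤ -3 + 3 * v + 4 * v ^ 2 := by
                    linarith only [box ha2 hb 0 2, box ha2 hb 1 1, box ha2 hb 2 0]
                  have : 0 ≤ -1 + 3 * v + 2 * v ^ 2 := by
                    linarith only [box ha2 hb 0 2, box ha2 hb 1 1, box ha2 hb 2 0]
                  linear_combination W.xU (v * (1 + v) * (7 + 5 * v)) E0 E1 +
                    W.yL ((1 + v) * (-1 + 5 * v + 8 * v ^ 2)) E0 E2 +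
                    W.xU (v * (1 + v) * (1 + 3 * v)) E0 E6 +
                    W.yL ((1 + v) * (-3 + 3 * v + 4 * v ^ 2)) E0 E9 +
                    W.xL (v * (1 + v) * (7 + 5 * v)) E1 E9 +
                    W.yU ((1 + v) * (-1 + 3 * v + 2 * v ^ 2)) E2 E3 +
                    W.yU (v * (1 + v) * (1 + 3 * v)) E2 E8 +
                    W.xU (v * (1 + v) * (1 + 3 * v)) E3 E7 +
                    W.xL (v * (1 + v) * (1 + 3 * v)) E3 E8 + W.yU ((1 + v) ^ 2 * (3 + v)) E9 E3 +
                    H.s3 v + pos (4 * v * (1 - v))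
            · have h87 := h83.trans h37
              rcases le_total t6 t8 with h68 | h86
              · rcases le_total s2 t9 with h29 | h92
                · have h16 := h12.trans h26
                  rcases le_total v (9 / 20) with hb1 | ha1
                  · have : 0 ≤ 1 - 3 * v ^ 2 - v ^ 3 := by
                      linarith only [box h0.le hb1 0 3, box h0.le hb1 1 2, box h0.le hb1 2 1,
                        box h0.le hb1 3 0]
                    linear_combination W.xU (4 * (1 + 2 * v)) E0 E1 +
                      W.yL (4 * (1 + 3 * v + v ^ 2)) E0 E1 + W.yL (2 * (1 + v) * (3 + v)) E1 E2 +
                      W.xU (3 + v ^ 2) E1 E6 + W.yU (2 * (1 - v)) E1 E8 +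
                      W.xL ((1 + v) * (1 + 3 * v)) E1 E9 + W.yL (2 * v * (1 + v)) E1 E9 +
                      W.yU (1 + 6 * v + v ^ 2) E2 E8 + W.xL (2 * (1 + v)) E6 E8 +
                      W.xU ((1 + v) ^ 2) E8 E7 + W.yU ((1 + v) ^ 2) E9 E3 + H.s1 (1 + v) +
                      pos (4 * (1 - 3 * v ^ 2 - v ^ 3))
                  · rcases le_total v (61 / 100) with hb2 | ha2
                    · have : 0 ≤ -1 + 5 * v ^ 2 := by
                        linarith only [box ha1 hb2 0 2, box ha1 hb2 1 1, box ha1 hb2 2 0]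
                      have : 0 ≤ -1 + 9 * v ^ 2 + 4 * v ^ 3 := by
                        linarith only [box ha1 hb2 0 3, box ha1 hb2 1 2, box ha1 hb2 2 1,
                          box ha1 hb2 3 0]
                      have : 0 ≤ 2 + 3 * v - 7 * v ^ 2 - 3 * v ^ 3 := by
                        linarith only [box ha1 hb2 0 3, box ha1 hb2 1 2, box ha1 hb2 2 1,
                          box ha1 hb2 3 0]
                      linear_combination W.xU (4 * v * (1 + 3 * v + v ^ 2)) E0 E1 +
                        W.yL (1 + 9 * v + 19 * v ^ 2 + 7 * v ^ 3) E0 E2 +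
                        W.yL ((1 + v) * (-1 + 5 * v ^ 2)) E0 E9 +
                        W.xL (4 * v * (1 + 3 * v + v ^ 2)) E1 E9 +
                        W.xU (v * (1 + v) * (1 + 3 * v)) E2 E6 +
                        W.xL (v * (1 + v) * (1 + 3 * v)) E2 E8 +
                        W.yU (-1 + 9 * v ^ 2 + 4 * v ^ 3) E2 E9 +
                        W.xU (v * (1 + v) * (1 + 3 * v)) E8 E7 +
                        W.yU (v * (1 + v) * (1 + 3 * v)) E9 E3 +
                        W.xL (v * (1 - v) * (1 + 3 * v)) E9 E8 +
                        W.yU (v * (1 + 3 * v) * (3 + v)) E9 E8 + H.s1 (v * (1 + 3 * v)) +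
                        pos (4 * v * (2 + 3 * v - 7 * v ^ 2 - 3 * v ^ 3))
                    · have : 0 ≤ -3 + v + 5 * v ^ 2 + 5 * v ^ 3 := by
                        linarith only [box ha2 hb 0 3, box ha2 hb 1 2, box ha2 hb 2 1,
                          box ha2 hb 3 0]
                      have : 0 ≤ -3 - 2 * v + 9 * v ^ 2 + 4 * v ^ 3 := by
                        linarith only [box ha2 hb 0 3, box ha2 hb 1 2, box ha2 hb 2 1,
                          box ha2 hb 3 0]
                      linear_combination W.xU (4 * v * (1 + 2 * v + 4 * v ^ 2 + v ^ 3)) E0 E1 +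
                        W.yL (3 + 18 * v + 26 * v ^ 2 + 26 * v ^ 3 + 7 * v ^ 4) E0 E2 +
                        W.yL ((1 + v) * (-3 + v + 5 * v ^ 2 + 5 * v ^ 3)) E0 E9 +
                        W.xL (4 * v * (1 + 2 * v + 4 * v ^ 2 + v ^ 3)) E1 E2 +
                        W.yU ((1 + v) * (-3 - 2 * v + 9 * v ^ 2 + 4 * v ^ 3)) E2 E3 +
                        W.xU (v * (1 + 3 * v) * (3 + v ^ 2)) E2 E6 +
                        W.xL (v * (1 + v) * (7 + 10 * v + 7 * v ^ 2)) E2 E9 +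
                        W.xL (2 * v * (1 + v) * (1 + 3 * v)) E6 E8 +
                        W.yU ((1 + v) * (1 - v) * (3 + 6 * v + v ^ 2)) E8 E3 +
                        W.xU (v * (1 + v) ^ 2 * (1 + 3 * v)) E8 E7 +
                        W.yU ((1 + v) ^ 2 * (3 + 3 * v + 2 * v ^ 2)) E9 E8 + H.s3 (v * (1 + v)) +
                        pos (4 * v * (1 - v))
                · have h96 := h92.trans h26
                  linear_combination W.xU (4 * (1 + 2 * v + 4 * v ^ 2 + v ^ 3)) E0 E1 +
                    W.yL ((1 + v) ^ 2 * (9 + 7 * v)) E0 E2 +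
                    W.yL (7 + 7 * v + 13 * v ^ 2 + 5 * v ^ 3) E0 E9 +
                    W.xL (4 * (1 + 2 * v + 4 * v ^ 2 + v ^ 3)) E1 E9 +
                    W.yU ((1 + v) ^ 2 * (1 + 3 * v)) E2 E3 +
                    W.yU ((1 + v) * (1 + 3 * v) * (3 + v)) E2 E8 +
                    W.xL (2 * (1 + v) * (1 + 3 * v)) E6 E8 +
                    W.xU ((1 + v) ^ 2 * (1 + 3 * v)) E8 E7 +
                    W.yU (2 * v * (5 + 2 * v + v ^ 2)) E9 E2 +
                    W.xU ((1 + 3 * v) * (3 + v ^ 2)) E9 E6 + H.s3 (1 + v) + pos (4 * (1 - v))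
              · linear_combination W.xU (4 * (1 + 2 * v)) E0 E1 +
                  W.yL (2 * (2 + 5 * v + v ^ 2)) E0 E2 + W.yL (2 * v * (1 + v)) E0 E9 +
                  W.xU (v * (1 - v)) E1 E2 + W.xL (v * (1 - v)) E1 E2 +
                  W.xL ((1 + v) * (3 - v)) E1 E8 + W.xL ((1 + v) * (1 + 3 * v)) E1 E9 +
                  W.yU ((1 + v) * (5 + v)) E2 E8 + W.xU ((1 + v) ^ 2) E8 E6 +
                  W.xU ((1 + v) ^ 2) E8 E7 + W.yU ((1 + v) ^ 2) E9 E3 + H.s2 1 +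
                  pos (8 * (1 + v) * (1 - v))
      · have h27 := h23.trans h37
        have h86 := h82.trans h26
        have h87 := (h82.trans h23).trans h37
        rcases le_total v (9 / 20) with hb1 | ha1
        · have : 0 ≤ 1 - 2 * v := by linarith
          linear_combination W.xU (2 * (1 + v) * (2 + v)) E0 E1 + W.xL (2 * v * (1 + v)) E0 E8 +
            W.xL (3 * (1 + v)) E1 E8 + W.yU (1 + v) E1 E8 + W.xL (1 + v) E1 E9 +
            W.yL (1 + v) E1 E9 + W.yU ((1 + v) * (2 - v)) E2 E3 + W.yU ((1 + v) ^ 2) E2 E7 +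
            W.yL ((1 + v) ^ 2) E3 E7 + W.yL (4 * (1 + v)) E8 E2 + W.xU (1 + v) E8 E6 +
            W.xU ((1 + v) * (1 - 2 * v)) E8 E7 + H.s1 1 + pos (4 * (2 - v ^ 2))
        · have : 0 ≤ -3 + 7 * v := by linarith
          have : 0 ≤ -1 + 3 * v := by linarith
          linear_combination W.xU (3 * (1 + v) ^ 3) E0 E1 +
            W.xL ((1 + v) ^ 2 * (-3 + 7 * v)) E0 E8 + W.yU (2 * (1 + v) ^ 2 * (-1 + 3 * v)) E0 E8 +
            W.yL (2 * v * (1 + v) ^ 2) E0 E9 + W.xL ((1 + v) ^ 2 * (3 + v)) E1 E8 +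
            W.xL (2 * v * (1 + v) ^ 2) E1 E9 + W.yU ((1 + v) ^ 3) E2 E3 + W.yU ((1 + v) ^ 3) E2 E7 +
            W.yL ((1 + v) ^ 3) E3 E7 + W.yL (2 * (1 + v) ^ 2 * (1 + 2 * v)) E8 E2 +
            W.xU (2 * v * (1 + v) ^ 2) E8 E6 + H.s2 (2 * v) +
            pos (2 * (1 - v) * (1 + 3 * v) * (3 + 2 * v))
    · have h16 := h12.trans h26
      have h17 := h13.trans h37
      have h27 := h23.trans h37
      have h97 := (h91.trans h13).trans h37
      rcases le_total v (2 / 5) with hb1 | ha1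
      · have : 0 ≤ 2 - 3 * v := by linarith
        linear_combination W.xL (4 * v * (1 + v) * (4 - 3 * v)) E0 E9 +
          W.yL (28 * v * (1 + v)) E0 E9 + W.yL (v * (1 + v) * (7 + 3 * v)) E1 E2 +
          W.yL ((1 + v) ^ 2 * (2 - 3 * v)) E1 E3 + W.xU (4 * v * (1 + v)) E1 E6 +
          W.yU (2 * (1 + v) ^ 2) E1 E7 + W.xL (4 * v * (1 + v)) E1 E8 +
          W.yU (4 * v * (1 + v)) E1 E8 + W.yU (3 * v * (1 + v) ^ 2) E2 E3 +
          W.yL (2 * (1 + v) ^ 2) E3 E7 + W.xU (12 * v * (1 + v) ^ 2) E9 E1 + H.s1 (4 * v) +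
          pos (4 * v * (4 - v - v ^ 2))
      · have : 0 ≤ -1 + 10 * v + 7 * v ^ 2 := by
          linarith only [box ha1 hb 0 2, box ha1 hb 1 1, box ha1 hb 2 0]
        have : 0 ≤ -1 + 7 * v - 2 * v ^ 2 := by
          linarith only [box ha1 hb 0 2, box ha1 hb 1 1, box ha1 hb 2 0]
        have : 0 ≤ -2 + 5 * v + 5 * v ^ 2 := by
          linarith only [box ha1 hb 0 2, box ha1 hb 1 1, box ha1 hb 2 0]
        have : 0 ≤ -1 + v + 4 * v ^ 2 := by
          linarith only [box ha1 hb 0 2, box ha1 hb 1 1, box ha1 hb 2 0]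
        linear_combination W.yL (2 * (1 + v) ^ 2 * (2 - 2 * v + v ^ 2 + 3 * v ^ 3)) E0 E6 +
          W.xL (4 * v * (1 + v) * (3 + 5 * v - 2 * v ^ 2 - 2 * v ^ 3)) E0 E9 +
          W.yL (2 * v * (1 + v) * (2 + v) * (5 + 10 * v + v ^ 2)) E0 E9 +
          W.yL ((1 + v) ^ 2 * (-1 + 10 * v + 7 * v ^ 2)) E1 E2 +
          W.yU ((1 + v) ^ 3 * (-1 + 7 * v - 2 * v ^ 2)) E1 E3 +
          W.xL (2 * v * (1 + v) ^ 2 * (2 + v + v ^ 2)) E1 E8 +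
          W.yU (2 * v * (1 + v) ^ 2 * (2 + v + v ^ 2)) E1 E8 +
          W.yU ((1 + v) ^ 3 * (2 + v + v ^ 2)) E2 E6 +
          W.yL ((1 + v) ^ 2 * (1 - v) * (-2 + 5 * v + 5 * v ^ 2)) E2 E6 +
          W.yU ((1 + v) ^ 3 * (-1 + v + 4 * v ^ 2)) E2 E7 +
          W.yL ((1 + v) ^ 3 * (-1 + v + 4 * v ^ 2)) E3 E7 +
          W.xU (2 * v * (1 + v) ^ 2 * (1 + 11 * v + 8 * v ^ 2)) E9 E1 +
          W.xU (6 * v * (1 + v) ^ 3 * (1 - v)) E9 E7 + H.s2 (2 * v * (2 + v + v ^ 2)) +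
          pos (4 * v * (1 - v) * (1 + v + 6 * v ^ 2 + 4 * v ^ 3))
  · rcases le_total t8 t9 with h89 | h98
    · rcases le_total z t9 with h19 | h91
      · have h27 := h23.trans h37
        have h86 := (h81.trans h12).trans h26
        have h87 := (h81.trans h13).trans h37
        linear_combination W.xL (4 * (1 + v) ^ 2 * (2 + v ^ 2)) E0 E8 +
          W.yU (4 * (1 + v) ^ 2 * (3 + v + v ^ 2)) E0 E8 +
          W.yL ((1 + v) ^ 2 * (3 + 3 * v + 2 * v ^ 2)) E1 E2 + W.yU ((1 + v) ^ 2 * (3 + v)) E1 E3 +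
          W.xL ((1 + v) ^ 2 * (2 + v + v ^ 2)) E1 E9 + W.yL ((1 + v) ^ 2 * (2 + v + v ^ 2)) E1 E9 +
          W.yU ((1 + v) ^ 4) E2 E7 + W.yL ((1 + v) ^ 4) E3 E7 +
          W.xU ((1 + v) ^ 2 * (1 + 3 * v) * (2 + v)) E8 E1 +
          W.yL ((1 + v) ^ 2 * (2 + 3 * v + 3 * v ^ 2)) E8 E1 +
          W.xU ((1 + v) ^ 2 * (2 + v + v ^ 2)) E8 E6 +
          W.xU ((1 + v) ^ 2 * (1 - v) * (2 + v)) E8 E7 + H.s2 (2 + v + v ^ 2) +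
          pos (4 * (1 - v) * (2 + 2 * v + 2 * v ^ 2 + v ^ 3))
      · have h16 := h12.trans h26
        have h17 := h13.trans h37
        have h92 := h91.trans h12
        have h97 := (h91.trans h13).trans h37
        rcases le_total v (9 / 20) with hb1 | ha1
        · have : 0 ≤ 2 - 3 * v := by linarith
          linear_combination W.xL ((1 + v) ^ 2 * (4 + 3 * v)) E0 E8 +
            W.xL ((1 + v) ^ 2 * (4 - 3 * v)) E0 E9 + W.xU (v * (1 + v) ^ 2) E1 E6 +
            W.xL ((1 + v) ^ 2 * (2 + v)) E1 E6 + W.xU (2 * (1 + v) ^ 2 * (1 - v)) E1 E7 +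
            W.yU (2 * (1 + v) ^ 2) E2 E3 + W.xU (v ^ 2 * (1 + v) ^ 2) E3 E7 +
            W.xL (v ^ 2 * (1 + v) ^ 2) E3 E7 + W.xU ((1 + v) ^ 2 * (2 - 3 * v)) E8 E1 +
            W.yL (6 * (1 + v) ^ 2) E8 E9 + W.xU ((1 + v) ^ 2 * (2 + 3 * v)) E9 E1 + H.s1 2 +
            pos (8 * v ^ 2)
        · have : 0 ≤ -2 + 3 * v + 4 * v ^ 2 := by
            linarith only [box ha1 hb 0 2, box ha1 hb 1 1, box ha1 hb 2 0]
          linear_combination W.xL (2 + 26 * v + 15 * v ^ 2 - 6 * v ^ 3 - v ^ 4) E0 E8 +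
            W.yU (4 * (-2 + 3 * v + 4 * v ^ 2)) E0 E8 +
            W.xL ((1 + v) * (6 - 3 * v ^ 2 + v ^ 3)) E0 E9 +
            W.xL (v * (1 + v) ^ 2 * (2 + v)) E1 E2 + W.yU (2 * (1 + v) ^ 3) E2 E3 +
            W.xU (2 * (1 + v) ^ 2) E2 E6 + W.xU (v ^ 2 * (1 + v) ^ 3) E3 E7 +
            W.xL (v ^ 2 * (1 + v) ^ 3) E3 E7 + W.xU (v * (1 + v) ^ 2 * (2 + v)) E8 E1 +
            W.yL (2 * (1 + v) * (5 + 3 * v - v ^ 2)) E8 E9 +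
            W.xU ((1 + v) ^ 2 * (2 + 2 * v + v ^ 2)) E9 E2 +
            W.xU (2 * (1 + v) ^ 3 * (1 - v)) E9 E7 + H.s2 2 + pos (4 * v ^ 2)
    · have h27 := h23.trans h37
      have h82 := h81.trans h12
      have h96 := ((h98.trans h81).trans h12).trans h26
      linear_combination W.xL (4 * (1 + v) * (1 + v - v ^ 2)) E0 E8 +
        W.xL (4 * (1 + 4 * v + 5 * v ^ 2)) E0 E9 + W.yL (4 * v * (1 + 3 * v)) E0 E9 +
        W.xL (v * (1 + v) ^ 2 * (2 + v)) E1 E2 + W.yU ((1 + v) ^ 3 * (2 - v)) E2 E3 +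
        W.xU (2 * (1 + v) ^ 3 * (1 - v)) E2 E7 + W.yU (v * (1 + v) ^ 3) E2 E7 +
        W.yL (v * (1 + v) ^ 3) E3 E7 + W.xU (v * (1 + v) ^ 2 * (2 + v)) E8 E1 +
        W.xU ((1 + v) ^ 2 * (2 + 2 * v - v ^ 2)) E8 E2 + W.xU (2 * (1 + v) ^ 2) E9 E6 +
        W.yU (2 * (1 + v) * (3 + 5 * v)) E9 E8 + H.s1 (2 * (1 + v)) + pos (4 * v ^ 2 * (1 - v))

set_option maxHeartbeats 0 in
/-- Exactly the two agents with direction `1` find the marker, `(1, 1)` first. -/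
theorem caseD {v : ℝ} {P : ℝ → ℝ → ℝ → Prop} (R : Range v) (W : Worldline v P)
    {z m w s2 s4 t6 t7 t8 t9 : ℝ} (E1 : P z m w)
    (A6 : MarkedAt v P z m 1 1 s2 t6)
    (A7 : Unmarked P 1 (-1) t7)
    (A8 : MarkedAt v P z m (-1) 1 s4 t8)
    (A9 : Unmarked P (-1) (-1) t9)
    (h24 : s2 ≤ s4)
    (H : Below v (t6 + t7 + t8 + t9)) : False := by
  obtain ⟨x2, y6, h12, h26, E2, E6⟩ := A6
  obtain ⟨y7, E7⟩ := A7
  obtain ⟨x4, y8, h14, h48, E4, E8⟩ := A8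
  obtain ⟨y9, E9⟩ := A9
  have E0 := W.origin
  have h01 := W.nonneg E1
  have h02 := W.nonneg E2
  have h04 := W.nonneg E4
  have h06 := W.nonneg E6
  have h07 := W.nonneg E7
  have h08 := W.nonneg E8
  have h09 := W.nonneg E9
  have h0 := R.pos
  have hb := R.le
  have h1 : 0 < 1 - v := by linarith
  have : 0 ≤ 3 + 4 * v - 3 * v ^ 2 := by
    linarith only [box h0.le hb 0 2, box h0.le hb 1 1, box h0.le hb 2 0]
  refine lt_irrefl (0 : ℝ) ?_
  rcases le_total t7 t9 with h79 | h97
  · rcases le_total s4 t9 with h49 | h94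
    · linear_combination W.yU (1 + v) E0 E2 + W.yL ((1 + v) * (1 + 3 * v)) E0 E2 +
        W.xU (v * (1 + v)) E0 E6 + W.xU (v * (1 + v)) E0 E7 + W.yU (v * (1 + v)) E0 E7 +
        W.yU (2 * (1 + v) ^ 2) E2 E4 + W.xU (v * (1 + v) ^ 2) E4 E8 + W.xL (v ^ 2 * (1 + v)) E4 E8 +
        W.xL (v * (1 + v)) E4 E9 + W.yL (v * (1 + v)) E4 E9 + H.s1 v +
        pos (2 * (1 - v) * (1 + 2 * v) * (2 + v))
    · rcases le_total z t7 with h17 | h71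
      · have h16 := h12.trans h26
        rcases le_total v (2 / 5) with hb1 | ha1
        · have : 0 ≤ 1 - 2 * v - v ^ 2 := by
            linarith only [box h0.le hb1 0 2, box h0.le hb1 1 1, box h0.le hb1 2 0]
          linear_combination W.yL (2 * (1 + v) ^ 2) E0 E2 + W.yU (2 * (1 + v) ^ 2) E0 E4 +
            W.xU (4 * v * (1 + v)) E0 E7 + W.yU (4 * v * (1 + v)) E0 E7 +
            W.xU (v * (1 + v) ^ 2) E2 E6 + W.xL (v * (1 + v) ^ 2) E2 E6 +
            W.xU (v * (1 + v) ^ 2) E4 E8 + W.xL (v * (1 + v) ^ 2) E4 E8 +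
            W.xL (2 * v * (1 + v)) E7 E9 + W.yL (2 * v * (1 + v)) E7 E9 + H.s1 (2 * v) +
            pos (4 * (1 + 2 * v) * (1 - 2 * v - v ^ 2))
        · have : 0 ≤ -1 + v + 5 * v ^ 2 - v ^ 3 := by
            linarith only [box ha1 hb 0 3, box ha1 hb 1 2, box ha1 hb 2 1, box ha1 hb 3 0]
          linear_combination W.xU (4 * v * (1 + v) * (1 + 3 * v) ^ 2) E0 E1 +
            W.yL (8 * v ^ 2 * (1 + v) * (1 + 3 * v)) E0 E1 +
            W.xU (4 * v * (1 + v) ^ 2 * (1 + 3 * v)) E0 E7 +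
            W.yL ((1 + v) * (1 + 3 * v) * (1 + 4 * v + 7 * v ^ 2)) E1 E2 +
            W.yL ((1 + v) ^ 3 * (1 + 3 * v)) E1 E6 + W.yU (2 * (1 + v) * (1 + 3 * v) ^ 2) E1 E7 +
            W.yU (2 * v * (1 + v) * (1 + 3 * v) ^ 2) E2 E4 +
            W.yU ((1 + v) ^ 3 * (1 + 3 * v)) E2 E6 + W.xU (v * (1 + v) ^ 3 * (1 + 3 * v)) E4 E8 +
            W.xL (v * (1 + v) ^ 3 * (1 + 3 * v)) E4 E8 +
            W.xL (2 * v * (1 + 3 * v) * (3 + 4 * v - 3 * v ^ 2)) E7 E9 +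
            W.yL (2 * (1 + 3 * v) * (-1 + v + 5 * v ^ 2 - v ^ 3)) E7 E9 +
            W.yU (2 * (1 + v) * (1 - v) * (1 + 2 * v) * (1 + 3 * v)) E9 E4 +
            H.s3 (2 * v * (1 + v)) + pos (4 * (1 - v) * (1 + 2 * v) * (1 + 3 * v ^ 2))
      · have h28 := h24.trans h48
        have h72 := h71.trans h12
        have h74 := h79.trans h94
        have h98 := h94.trans h48
        rcases le_total v (7 / 20) with hb1 | ha1
        · have : 0 ≤ 1 - v - v ^ 2 := by
            linarith only [box h0.le hb1 0 2, box h0.le hb1 1 1, box h0.le hb1 2 0]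
          linear_combination W.xU (2 * v * (1 + v)) E0 E6 + W.xU (2 * v * (3 + 5 * v)) E0 E7 +
            W.yU (4 * v * (1 + 2 * v)) E0 E7 + W.yU ((1 + v) ^ 2) E2 E8 + W.yL ((1 + v) ^ 2) E4 E8 +
            W.yL ((1 + v) * (1 + 3 * v)) E7 E2 + W.yU ((1 + v) ^ 2) E7 E4 +
            W.xL (2 * v * (1 + v)) E7 E9 + W.yL (2 * v * (1 + v)) E7 E9 + H.s1 (2 * v) +
            pos (4 * (1 + 2 * v) * (1 - v - v ^ 2))
        · have : 0 ≤ -1 + 8 * v + 5 * v ^ 2 := by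
            linarith only [box ha1 hb 0 2, box ha1 hb 1 1, box ha1 hb 2 0]
          have : 0 ≤ -1 + 3 * v := by linarith
          linear_combination W.xU (2 * v * (1 + v) * (1 + 3 * v)) E0 E6 +
            W.xU (4 * v * (1 + 3 * v) * (2 + v)) E0 E7 +
            W.yU ((1 + 3 * v) * (-1 + 8 * v + 5 * v ^ 2)) E0 E7 +
            W.yL ((1 + v) * (1 + 3 * v) * (-1 + 3 * v)) E0 E9 +
            W.yU ((1 + v) ^ 2 * (1 + 3 * v)) E2 E4 + W.yL ((1 + v) ^ 2 * (1 + 3 * v)) E4 E8 +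
            W.yL ((1 + v) * (1 + 3 * v) ^ 2) E7 E2 + W.xL (4 * v * (1 + v) * (1 + 3 * v)) E7 E9 +
            W.yU ((1 + v) ^ 2 * (1 + 3 * v)) E9 E8 + H.s3 (2 * v) +
            pos (2 * (1 - v) ^ 2 * (2 + 3 * v))
  · have h16 := h12.trans h26
    rcases le_total z t9 with h19 | h91
    · linear_combination W.xU (8 * v * (1 + 3 * v)) E0 E1 +
        W.yL (4 * v * (1 + 3 * v) * (3 + v)) E0 E1 + W.yL (4 * v * (1 + v) * (1 + 3 * v)) E0 E9 +
        W.yL ((1 + 3 * v) * (1 + 8 * v + 3 * v ^ 2)) E1 E2 +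
        W.yU (2 * (1 - v) * (1 + 3 * v)) E1 E4 + W.yL ((1 + v) ^ 2 * (1 + 3 * v)) E1 E6 +
        W.xL (4 * v * (1 + v) * (1 + 3 * v)) E1 E9 + W.yU (2 * v * (1 + 3 * v) * (3 + v)) E2 E4 +
        W.yU ((1 + v) ^ 2 * (1 + 3 * v)) E2 E6 + W.xU (v * (1 + v) ^ 2 * (1 + 3 * v)) E4 E8 +
        W.xL (v * (1 + v) ^ 2 * (1 + 3 * v)) E4 E8 + W.xU (2 * v * (1 + v) * (1 + 3 * v)) E9 E7 +
        W.yU (2 * v * (1 + v) * (1 + 3 * v)) E9 E7 + H.s3 (2 * v) + pos (4 * (1 + v) * (1 - v))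
    · have h28 := h24.trans h48
      linear_combination W.yL (4 * v * (1 + v) * (1 + 3 * v)) E0 E1 +
        W.xL (8 * v * (1 + 3 * v)) E0 E9 + W.yL (4 * v * (1 + 3 * v) * (3 + v)) E0 E9 +
        W.yU ((1 + v) * (1 + 3 * v)) E1 E2 + W.yL ((1 + v) * (1 + 3 * v) * (1 + 4 * v)) E1 E2 +
        W.xU (2 * v * (1 + v) * (1 + 3 * v)) E1 E6 + W.yU ((1 + v) ^ 2 * (1 + 3 * v)) E2 E4 +
        W.yU ((1 + v) ^ 2 * (1 + 3 * v)) E2 E8 + W.yL ((1 + v) ^ 2 * (1 + 3 * v)) E4 E8 +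
        W.xU (4 * v * (1 + v) * (1 + 3 * v)) E9 E1 + W.xU (2 * v * (1 + v) * (1 + 3 * v)) E9 E7 +
        W.yU (2 * v * (1 + v) * (1 + 3 * v)) E9 E7 + H.s3 (2 * v) + pos (4 * (1 + v) * (1 - v))

set_option maxHeartbeats 0 in
/-- Exactly `(1, -1)` and `(-1, 1)`, which move in opposite ways, find the marker, `(1, -1)`
first. -/
theorem caseE {v : ℝ} {P : ℝ → ℝ → ℝ → Prop} (R : Range v) (W : Worldline v P)
    {z m w s3 s4 t6 t7 t8 t9 : ℝ} (E1 : P z m w)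
    (A6 : Unmarked P 1 1 t6)
    (A7 : MarkedAt v P z m 1 (-1) s3 t7)
    (A8 : MarkedAt v P z m (-1) 1 s4 t8)
    (A9 : Unmarked P (-1) (-1) t9)
    (h34 : s3 ≤ s4)
    (H : Below v (t6 + t7 + t8 + t9)) : False := by
  obtain ⟨y6, E6⟩ := A6
  obtain ⟨x3, y7, h13, h37, E3, E7⟩ := A7
  obtain ⟨x4, y8, h14, h48, E4, E8⟩ := A8
  obtain ⟨y9, E9⟩ := A9
  have E0 := W.origin
  have h01 := W.nonneg E1
  have h03 := W.nonneg E3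
  have h04 := W.nonneg E4
  have h06 := W.nonneg E6
  have h07 := W.nonneg E7
  have h08 := W.nonneg E8
  have h09 := W.nonneg E9
  have h0 := R.pos
  have hb := R.le
  have h1 : 0 < 1 - v := by linarith
  have : 0 ≤ 3 - v := by linarith only [box h0.le hb 0 1, box h0.le hb 1 0]
  have : 0 ≤ 1 - v - 3 * v ^ 2 + 5 * v ^ 3 + 2 * v ^ 4 := by
    linarith only [box h0.le hb 0 4, box h0.le hb 1 3, box h0.le hb 2 2, box h0.le hb 3 1,
      box h0.le hb 4 0]
  refine lt_irrefl (0 : ℝ) ?_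
  rcases le_total s3 t6 with h36 | h63
  · rcases le_total s4 t9 with h49 | h94
    · linear_combination W.yU (2 * (1 + v) ^ 2 * (1 + 3 * v)) E0 E3 +
        W.yU (2 * (1 + v) ^ 2 * (1 + 3 * v)) E0 E4 + W.xU (v * (1 + v) * (1 + 3 * v)) E3 E6 +
        W.yL (v * (1 + v) * (1 + 3 * v)) E3 E6 + W.xU (v ^ 2 * (1 + v) * (1 + 3 * v)) E3 E7 +
        W.xL (v * (1 + v) ^ 2 * (1 + 3 * v)) E3 E7 + W.xU (v * (1 + v) ^ 2 * (1 + 3 * v)) E4 E8 +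
        W.xL (v ^ 2 * (1 + v) * (1 + 3 * v)) E4 E8 + W.xL (v * (1 + v) * (1 + 3 * v)) E4 E9 +
        W.yL (v * (1 + v) * (1 + 3 * v)) E4 E9 + H.s3 v + pos (4 * (1 - v) * (1 + 2 * v))
    · rcases le_total s3 t9 with h39 | h93
      · have h19 := h13.trans h39
        have h98 := h94.trans h48
        rcases le_total v (1 / 5) with hb1 | ha1
        · have : 0 ≤ 1 - 2 * v - v ^ 2 := by
            linarith only [box h0.le hb1 0 2, box h0.le hb1 1 1, box h0.le hb1 2 0]
          linear_combination W.xU (2 * v * (1 + v)) E0 E1 + W.yU ((1 + v) * (1 + 3 * v)) E0 E3 +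
            W.yU (2 * (1 + v) ^ 2) E0 E4 + W.xU (2 * v * (1 + v)) E0 E6 + W.yU ((1 + v) ^ 2) E0 E7 +
            W.yL (2 * v * (1 + v)) E0 E9 + W.xL (2 * v * (1 + v)) E1 E9 +
            W.yL (2 * v * (1 + v)) E3 E6 + W.yL ((1 + v) ^ 2) E3 E7 + W.xU (v * (1 + v) ^ 2) E4 E8 +
            W.xL (v * (1 + v) ^ 2) E4 E8 + H.s1 (2 * v) +
            pos (4 * (1 + 2 * v) * (1 - 2 * v - v ^ 2))
        · rcases R.gap2 with hb2 | ha2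
          · have : 0 ≤ -1 + 5 * v + 2 * v ^ 2 := by
              linarith only [box ha1 hb2 0 2, box ha1 hb2 1 1, box ha1 hb2 2 0]
            have : 0 ≤ 1 + 8 * v - 3 * v ^ 2 - 8 * v ^ 3 - 2 * v ^ 4 := by
              linarith only [box ha1 hb2 0 4, box ha1 hb2 1 3, box ha1 hb2 2 2, box ha1 hb2 3 1,
                box ha1 hb2 4 0]
            linear_combination W.xU (2 * v * (1 + v) ^ 2 * (7 + 3 * v)) E0 E1 +
              W.yU (4 * (1 + v) ^ 2 * (1 + 6 * v + 2 * v ^ 2)) E0 E3 +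
              W.xU (2 * v * (1 + v) ^ 2 * (3 + v)) E0 E6 +
              W.xL (2 * v * (1 + v) ^ 2 * (7 + 3 * v)) E1 E9 +
              W.yL (2 * v * (1 + v) ^ 2 * (3 + v)) E3 E6 + W.xU (v * (1 + v) ^ 3 * (3 + v)) E3 E7 +
              W.xL (v * (1 + v) ^ 3 * (3 + v)) E3 E7 +
              W.yL (2 * (1 + v) ^ 2 * (-1 + 5 * v + 2 * v ^ 2)) E3 E9 +
              W.yU ((1 + v) ^ 2 * (1 + 6 * v + v ^ 2)) E4 E8 +
              W.yL ((1 + v) ^ 2 * (1 + 6 * v + v ^ 2)) E4 E8 +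
              W.yU (2 * (1 + v) ^ 2 * (1 + 4 * v + v ^ 2)) E9 E4 +
              W.xU (4 * v * (1 + v) ^ 2) E9 E8 + H.s2 (2 * v * (3 + v)) +
              pos (4 * (1 + 8 * v - 3 * v ^ 2 - 8 * v ^ 3 - 2 * v ^ 4))
          · have : 0 ≤ -1 + 5 * v + 2 * v ^ 2 := by
              linarith only [box ha2 hb 0 2, box ha2 hb 1 1, box ha2 hb 2 0]
            have : 0 ≤ 1 - 8 * v - 7 * v ^ 2 + 16 * v ^ 3 + 6 * v ^ 4 := by
              linarith only [box ha2 hb 0 4, box ha2 hb 1 3, box ha2 hb 2 2, box ha2 hb 3 1,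
                box ha2 hb 4 0]
            linear_combination W.xU (2 * v * (1 + v) * (1 + 3 * v) * (7 + 3 * v)) E0 E1 +
              W.yU (4 * (1 + v) * (1 + 3 * v) * (1 + 6 * v + 2 * v ^ 2)) E0 E3 +
              W.xU (2 * v * (1 + v) * (1 + 3 * v) * (3 + v)) E0 E6 +
              W.xL (2 * v * (1 + v) * (1 + 3 * v) * (7 + 3 * v)) E1 E9 +
              W.yL (2 * v * (1 + v) * (1 + 3 * v) * (3 + v)) E3 E6 +
              W.xU (v * (1 + v) ^ 2 * (1 + 3 * v) * (3 + v)) E3 E7 +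
              W.xL (v * (1 + v) ^ 2 * (1 + 3 * v) * (3 + v)) E3 E7 +
              W.yL (2 * (1 + v) * (1 + 3 * v) * (-1 + 5 * v + 2 * v ^ 2)) E3 E9 +
              W.yU ((1 + v) * (1 + 3 * v) * (1 + 6 * v + v ^ 2)) E4 E8 +
              W.yL ((1 + v) * (1 + 3 * v) * (1 + 6 * v + v ^ 2)) E4 E8 +
              W.yU (2 * (1 + v) * (1 + 3 * v) * (1 + 4 * v + v ^ 2)) E9 E4 +
              W.xU (4 * v * (1 + v) * (1 + 3 * v)) E9 E8 + H.s3 (2 * v * (3 + v)) +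
              pos (4 * (1 - 8 * v - 7 * v ^ 2 + 16 * v ^ 3 + 6 * v ^ 4))
      · have h38 := h34.trans h48
        have h96 := h93.trans h36
        have h97 := h93.trans h37
        rcases le_total v (3 / 10) with hb1 | ha1
        · have : 0 ≤ 1 - 6 * v ^ 2 - 2 * v ^ 3 := by
            linarith only [box h0.le hb1 0 3, box h0.le hb1 1 2, box h0.le hb1 2 1,
              box h0.le hb1 3 0]
          linear_combination W.yU (2 * (1 + v) * (1 + 2 * v)) E0 E3 + W.yU (2 * (1 + v) ^ 2) E0 E4 +
            W.xL (4 * v) E0 E9 + W.yL (2 * v * (3 + v)) E0 E9 + W.xU (v * (1 + v) ^ 2) E3 E6 +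
            W.xL (v * (1 + v) ^ 2) E3 E6 + W.xU (v * (1 + v) ^ 2) E4 E8 +
            W.xL (v * (1 + v) ^ 2) E4 E8 + W.xU (2 * v * (1 + v)) E9 E7 + H.s1 (2 * v) +
            pos (4 * (1 - 6 * v ^ 2 - 2 * v ^ 3))
        · have : 0 ≤ -1 + 4 * v := by linarith
          linear_combination W.xL (20 * v * (1 + v) ^ 2) E0 E9 +
            W.yL (4 * (1 + v) ^ 2 * (-1 + 4 * v)) E0 E9 + W.yL (4 * v * (1 + v) ^ 2) E3 E6 +
            W.yL ((1 + v) ^ 2 * (1 - v)) E3 E8 + W.yU (2 * (1 + v) ^ 3) E4 E8 +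
            W.yL ((1 + v) ^ 2 * (1 + 3 * v)) E4 E8 + W.yU ((1 + v) ^ 2 * (1 + 7 * v)) E9 E3 +
            W.yU ((1 + v) ^ 2 * (3 + 5 * v)) E9 E4 + W.xU (4 * v * (1 + v) ^ 2) E9 E6 +
            W.xU (4 * v * (1 + v) ^ 2) E9 E7 + H.s2 (4 * v) +
            pos (4 * (1 - v) * (1 + 7 * v + 4 * v ^ 2))
  · rcases le_total t6 t9 with h69 | h96
    · rcases le_total s3 t9 with h39 | h93
      · have h19 := h13.trans h39
        have h38 := h34.trans h48
        have h67 := h63.trans h37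
        rcases le_total v (14 / 25) with hb1 | ha1
        · have : 0 ≤ 1 - 2 * v ^ 2 := by
            linarith only [box h0.le hb1 0 2, box h0.le hb1 1 1, box h0.le hb1 2 0]
          have : 0 ≤ 1 - v - 4 * v ^ 2 + 4 * v ^ 3 + 2 * v ^ 4 := by
            linarith only [box h0.le hb1 0 4, box h0.le hb1 1 3, box h0.le hb1 2 2,
              box h0.le hb1 3 1, box h0.le hb1 4 0]
          linear_combination W.xU (2 * v * (1 + v) * (1 - v)) E0 E1 +
            W.yU (4 * (1 + v) * (1 - 2 * v ^ 2)) E0 E3 + W.xU (2 * v * (1 + v) ^ 2) E0 E6 +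
            W.xL (2 * v * (1 + v) * (1 - v)) E1 E9 + W.yU (2 * (1 + v) ^ 2 * (1 - v)) E3 E4 +
            W.xU (v * (1 + v) ^ 2 * (1 - v)) E3 E7 + W.xL (v * (1 + v) ^ 2 * (1 - v)) E3 E7 +
            W.yL (2 * v * (1 + v) * (1 - v)) E3 E9 + W.xU (v * (1 + v) ^ 2 * (1 - v)) E4 E8 +
            W.xL (v * (1 + v) ^ 2 * (1 - v)) E4 E8 + W.yU (2 * v * (1 + v) ^ 2) E6 E3 +
            H.s1 (2 * v * (1 - v)) + pos (4 * (1 - v - 4 * v ^ 2 + 4 * v ^ 3 + 2 * v ^ 4))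
        · have : 0 ≤ -1 - v + 4 * v ^ 2 + 2 * v ^ 3 := by
            linarith only [box ha1 hb 0 3, box ha1 hb 1 2, box ha1 hb 2 1, box ha1 hb 3 0]
          linear_combination W.xU (v * (1 + v) * (1 - v) * (1 + 3 * v)) E0 E1 +
            W.xU (v * (1 + 3 * v) * (11 + 28 * v + 9 * v ^ 2)) E0 E6 +
            W.yL (4 * (1 + 3 * v) * (-1 - v + 4 * v ^ 2 + 2 * v ^ 3)) E0 E6 +
            W.xL (v * (1 + v) * (1 - v) * (1 + 3 * v)) E1 E3 +
            W.yU ((1 + v) ^ 3 * (1 + 3 * v)) E3 E4 + W.xU (v * (1 + v) * (1 + 3 * v) ^ 2) E3 E7 +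
            W.yU ((1 + v) ^ 3 * (1 + 3 * v)) E3 E8 +
            W.xL (2 * v * (1 + v) ^ 2 * (1 + 3 * v)) E3 E9 +
            W.yL ((1 + v) ^ 3 * (1 + 3 * v)) E4 E8 +
            W.yU (4 * (1 + v) * (1 + 3 * v) * (1 + 3 * v + v ^ 2)) E6 E3 +
            W.xU (v * (1 + v) * (1 - v) * (1 + 3 * v)) E6 E7 +
            W.yL (2 * v * (1 + v) ^ 2 * (1 + 3 * v)) E6 E9 + H.s3 (2 * v * (1 + v)) +
            pos (4 * (1 - v) ^ 2 * (1 + 2 * v))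
      · have h68 := (h63.trans h34).trans h48
        have h94 := h93.trans h34
        rcases le_total v (7 / 20) with hb1 | ha1
        · have : 0 ≤ 1 - 2 * v := by linarith
          linear_combination W.yU (2 * (1 + v) ^ 2 * (1 - v)) E0 E3 +
            W.yU (2 * (1 + v) ^ 2 * (1 - 2 * v)) E0 E4 + W.xU (4 * v * (1 + v) * (1 - v)) E0 E6 +
            W.yL (2 * v * (1 + v) * (3 - v)) E0 E6 + W.xU (v * (1 + v) ^ 2 * (1 - v)) E3 E7 +
            W.xL (v * (1 + v) ^ 2 * (1 - v)) E3 E7 + W.xU (v * (1 + v) ^ 2 * (1 - v)) E4 E8 +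
            W.xL (v * (1 + v) ^ 2 * (1 - v)) E4 E8 + W.xL (2 * v * (1 + v) ^ 2) E6 E9 +
            W.yU (2 * v * (1 + v) ^ 2) E9 E4 + H.s1 (2 * v * (1 - v)) +
            pos (4 * (1 - v - 3 * v ^ 2 + 5 * v ^ 3 + 2 * v ^ 4))
        · have : 0 ≤ -3 + 10 * v + 5 * v ^ 2 := by
            linarith only [box ha1 hb 0 2, box ha1 hb 1 1, box ha1 hb 2 0]
          have : 0 ≤ -1 + 3 * v := by linarith
          linear_combination W.xU (4 * v * (1 + 3 * v) * (3 + v)) E0 E6 +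
            W.yL ((1 + 3 * v) * (-3 + 10 * v + 5 * v ^ 2)) E0 E6 +
            W.yL ((1 + v) * (1 + 3 * v) * (-1 + 3 * v)) E0 E9 +
            W.xU (v * (1 + v) ^ 2 * (1 + 3 * v)) E3 E7 +
            W.xL (v * (1 + v) ^ 2 * (1 + 3 * v)) E3 E7 + W.yL ((1 + v) ^ 2 * (1 + 3 * v)) E4 E8 +
            W.yU (2 * (1 + v) ^ 2 * (1 + 3 * v)) E6 E3 + W.yU ((1 + v) ^ 2 * (1 + 3 * v)) E6 E8 +
            W.xL (4 * v * (1 + v) * (1 + 3 * v)) E6 E9 + W.yU ((1 + v) ^ 2 * (1 + 3 * v)) E9 E4 +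
            H.s3 (2 * v) + pos (4 * (1 + v) * (1 - v))
    · have h68 := (h63.trans h34).trans h48
      have h93 := h96.trans h63
      rcases le_total v (7 / 20) with hb1 | ha1
      · have : 0 ≤ 1 - 6 * v ^ 2 - 2 * v ^ 3 := by
          linarith only [box h0.le hb1 0 3, box h0.le hb1 1 2, box h0.le hb1 2 1, box h0.le hb1 3 0]
        linear_combination W.yU (2 * (1 + v) ^ 2) E0 E3 + W.yU (2 * (1 + v) ^ 2) E0 E4 +
          W.yL (2 * v * (1 + v)) E0 E6 + W.xL (4 * v) E0 E9 + W.yL (2 * v * (3 + v)) E0 E9 +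
          W.xU (v * (1 + v) ^ 2) E3 E7 + W.xL (v * (1 + v) ^ 2) E3 E7 +
          W.xU (v * (1 + v) ^ 2) E4 E8 + W.xL (v * (1 + v) ^ 2) E4 E8 +
          W.xU (2 * v * (1 + v)) E9 E6 + H.s1 (2 * v) + pos (4 * (1 - 6 * v ^ 2 - 2 * v ^ 3))
      · have : 0 ≤ -1 + 3 * v := by linarith
        have : 0 ≤ -3 + 10 * v + 5 * v ^ 2 := by
          linarith only [box ha1 hb 0 2, box ha1 hb 1 1, box ha1 hb 2 0]
        linear_combination W.yL ((1 + v) * (1 + 3 * v) * (-1 + 3 * v)) E0 E6 +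
          W.xL (4 * v * (1 + 3 * v) * (3 + v)) E0 E9 +
          W.yL ((1 + 3 * v) * (-3 + 10 * v + 5 * v ^ 2)) E0 E9 +
          W.yU ((1 + v) ^ 2 * (1 + 3 * v)) E3 E4 + W.xU (v * (1 + v) ^ 2 * (1 + 3 * v)) E3 E7 +
          W.xL (v * (1 + v) ^ 2 * (1 + 3 * v)) E3 E7 + W.yL ((1 + v) ^ 2 * (1 + 3 * v)) E4 E8 +
          W.yU ((1 + v) ^ 2 * (1 + 3 * v)) E6 E8 + W.yU (3 * (1 + v) ^ 2 * (1 + 3 * v)) E9 E3 +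
          W.xU (4 * v * (1 + v) * (1 + 3 * v)) E9 E6 + H.s3 (2 * v) + pos (4 * (1 + v) * (1 - v))

set_option maxHeartbeats 0 in
/-- All agents but `(-1, -1)` find the marker. -/
theorem caseF {v : ℝ} {P : ℝ → ℝ → ℝ → Prop} (R : Range v) (W : Worldline v P)
    {z m w s2 s3 s4 t6 t7 t8 t9 : ℝ} (E1 : P z m w)
    (A6 : MarkedAt v P z m 1 1 s2 t6)
    (A7 : MarkedAt v P z m 1 (-1) s3 t7)
    (A8 : MarkedAt v P z m (-1) 1 s4 t8)
    (A9 : Unmarked P (-1) (-1) t9)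
    (H : Below v (t6 + t7 + t8 + t9)) : False := by
  obtain ⟨x2, y6, h12, h26, E2, E6⟩ := A6
  obtain ⟨x3, y7, h13, h37, E3, E7⟩ := A7
  obtain ⟨x4, y8, h14, h48, E4, E8⟩ := A8
  obtain ⟨y9, E9⟩ := A9
  have E0 := W.origin
  have h01 := W.nonneg E1
  have h02 := W.nonneg E2
  have h03 := W.nonneg E3
  have h04 := W.nonneg E4
  have h06 := W.nonneg E6
  have h07 := W.nonneg E7
  have h08 := W.nonneg E8
  have h09 := W.nonneg E9
  have h0 := R.pos
  have hb := R.le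
  have h1 : 0 < 1 - v := by linarith
  have : 0 ≤ 3 - 2 * v + 3 * v ^ 2 := by
    linarith only [box h0.le hb 0 2, box h0.le hb 1 1, box h0.le hb 2 0]
  refine lt_irrefl (0 : ℝ) ?_
  rcases le_total s2 s4 with h24 | h42
  · rcases le_total z t9 with h19 | h91
    · rcases le_total s3 t9 with h39 | h93
      · linear_combination W.xU (2 * v * (1 + v) ^ 2 * (3 + v)) E0 E1 +
          W.xU (2 * v * (1 + v) ^ 2 * (1 - v)) E0 E3 + W.yU (2 * (1 + v) ^ 2 * (1 - v)) E1 E2 +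
          W.yL (2 * (1 + v) ^ 3) E1 E2 + W.yU (4 * v * (1 + v) ^ 2) E1 E3 +
          W.xL (2 * v * (1 + v) ^ 2 * (1 - v)) E1 E9 + W.yU (2 * (1 + v) ^ 2) E2 E4 +
          W.xU (v * (1 + v) ^ 2) E2 E6 + W.xL (v * (1 + v) ^ 2) E2 E6 +
          W.xU (2 * v * (1 + v)) E3 E7 + W.xL (2 * v ^ 3 * (1 + v)) E3 E9 +
          W.yL (2 * v * (1 + v)) E3 E9 + W.xU (v * (1 + v) ^ 2) E4 E8 +
          W.xL (v * (1 + v) ^ 2) E4 E8 + H.s1 (2 * v) + pos (4 * (1 - v) * (1 + 2 * v))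
      · have h28 := h24.trans h48
        have h97 := h93.trans h37
        rcases le_total v (7 / 20) with hb1 | ha1
        · have : 0 ≤ 1 - 2 * v - v ^ 2 := by
            linarith only [box h0.le hb1 0 2, box h0.le hb1 1 1, box h0.le hb1 2 0]
          linear_combination W.yL ((1 + v) ^ 2) E0 E2 + W.yU ((1 + v) ^ 2) E0 E4 +
            W.yL ((1 + v) ^ 2) E0 E6 + W.yU ((1 + v) ^ 2) E0 E8 + W.xL (4 * v * (1 + v)) E0 E9 +
            W.yL (4 * v * (1 + v)) E0 E9 + W.yU ((1 + v) ^ 2) E2 E6 + W.yL ((1 + v) ^ 2) E4 E8 +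
            W.yU (2 * v * (1 + v)) E9 E3 + W.xU (2 * v * (1 + v)) E9 E7 + H.s1 (2 * v) +
            pos (4 * (1 + 2 * v) * (1 - 2 * v - v ^ 2))
        · have : 0 ≤ -1 + 3 * v := by linarith
          linear_combination W.xU (4 * v * (1 + v) * (1 + 3 * v)) E0 E1 +
            W.xU (4 * v * (1 - v) * (1 + 3 * v)) E0 E2 +
            W.yL (4 * v * (1 + 3 * v) * (3 + v)) E0 E2 +
            W.yL (4 * v * (1 + v) * (1 + 3 * v)) E0 E9 +
            W.xL (4 * v * (1 + v) * (1 + 3 * v)) E1 E9 + W.yU ((1 + v) ^ 2 * (1 + 3 * v)) E2 E4 +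
            W.xU (v * (1 + 3 * v) * (3 - 2 * v + 3 * v ^ 2)) E2 E6 +
            W.xL (v * (1 + v) * (1 + 3 * v) * (-1 + 3 * v)) E2 E6 +
            W.yU ((1 + v) ^ 2 * (1 + 3 * v)) E2 E8 + W.yL ((1 + v) ^ 2 * (1 + 3 * v)) E4 E8 +
            W.yU (2 * v * (1 + v) * (1 + 3 * v)) E9 E3 +
            W.xU (2 * v * (1 + v) * (1 + 3 * v)) E9 E7 + H.s3 (2 * v) + pos (4 * (1 + v) * (1 - v))
    · have h28 := h24.trans h48
      have h92 := h91.trans h12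
      have h93 := h91.trans h13
      have h96 := (h91.trans h12).trans h26
      have h97 := (h91.trans h13).trans h37
      linear_combination W.yL (4 * v * (1 + v) * (1 + 3 * v)) E0 E2 +
        W.xL (8 * v * (1 + 3 * v)) E0 E9 + W.yL (4 * v * (1 + 3 * v) * (3 + v)) E0 E9 +
        W.xL (v * (1 + v) * (1 + 3 * v)) E1 E2 + W.yU ((1 + v) ^ 2 * (1 + 3 * v)) E2 E4 +
        W.yU ((1 + v) ^ 2 * (1 + 3 * v)) E2 E8 + W.yL ((1 + v) ^ 2 * (1 + 3 * v)) E4 E8 +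
        W.xU (v * (1 + v) * (1 + 3 * v)) E9 E1 + W.xU (v * (1 + v) * (1 + 3 * v)) E9 E2 +
        W.yU (2 * v * (1 + v) * (1 + 3 * v)) E9 E3 + W.xU (2 * v * (1 + v) * (1 + 3 * v)) E9 E6 +
        W.xU (2 * v * (1 + v) * (1 + 3 * v)) E9 E7 + H.s3 (2 * v) + pos (4 * (1 + v) * (1 - v))
  · rcases le_total s3 t9 with h39 | h93
    · linear_combination W.yU (4 * (1 + v) ^ 2) E0 E3 + W.yU (3 * (1 + v) ^ 2) E0 E4 +
        W.yU ((1 + v) ^ 2) E0 E8 + W.xU (v * (1 + v) ^ 2) E2 E6 + W.xL (v * (1 + v) ^ 2) E2 E6 +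
        W.xU (2 * v * (1 + v)) E3 E7 + W.xL (2 * v * (1 + v)) E3 E9 + W.yL (2 * v * (1 + v)) E3 E9 +
        W.yL (2 * (1 + v) ^ 2) E4 E2 + W.yL ((1 + v) ^ 2) E4 E8 + H.s1 (2 * v) +
        pos (4 * (1 - v) * (3 + 6 * v + 2 * v ^ 2))
    · rcases le_total v (1 / 2) with hb1 | ha1
      · have : 0 ≤ 2 + v - 5 * v ^ 2 - 2 * v ^ 3 := by
          linarith only [box h0.le hb1 0 3, box h0.le hb1 1 2, box h0.le hb1 2 1, box h0.le hb1 3 0]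
        linear_combination W.yU (2 * (1 + v) ^ 2) E0 E3 + W.yU (2 * (1 + v) * (1 + 2 * v)) E0 E4 +
          W.xL (2 * v * (1 + v)) E0 E8 + W.xL (2 * v * (1 + v)) E0 E9 +
          W.yL (2 * v * (1 + v)) E0 E9 + W.xU (v * (1 + v) ^ 2) E2 E6 +
          W.xL (v * (1 + v) ^ 2) E2 E6 + W.xU (v * (1 + v) ^ 2) E3 E7 +
          W.xL (v * (1 + v) ^ 2) E3 E7 + W.yL (2 * (1 + v) ^ 2) E4 E2 + H.s1 (2 * v) +
          pos (4 * (2 + v - 5 * v ^ 2 - 2 * v ^ 3))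
      · have : 0 ≤ -1 + 2 * v := by linarith
        linear_combination W.yU (2 * (1 + v) * (1 + 2 * v) * (1 + 3 * v)) E0 E4 +
          W.xL (2 * v * (1 + v) * (1 + 3 * v)) E0 E8 + W.xL (6 * v * (1 + v) * (1 + 3 * v)) E0 E9 +
          W.yL (2 * (1 + v) * (1 + 3 * v) * (-1 + 2 * v)) E0 E9 +
          W.xU (v * (1 + v) ^ 2 * (1 + 3 * v)) E2 E6 + W.xL (v * (1 + v) ^ 2 * (1 + 3 * v)) E2 E6 +
          W.xU (v * (1 + v) ^ 2 * (1 + 3 * v)) E3 E7 + W.xL (v * (1 + v) ^ 2 * (1 + 3 * v)) E3 E7 +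
          W.yL (2 * (1 + v) ^ 2 * (1 + 3 * v)) E4 E2 + W.yU (2 * (1 + v) ^ 2 * (1 + 3 * v)) E9 E3 +
          H.s3 (2 * v) + pos (8 * (1 - v) * (1 + 2 * v))

set_option maxHeartbeats 0 in
/-- All four agents find the marker. -/
theorem caseG {v : ℝ} {P : ℝ → ℝ → ℝ → Prop} (R : Range v) (W : Worldline v P)
    {z m w s2 s3 s4 s5 t6 t7 t8 t9 : ℝ} (E1 : P z m w)
    (A6 : MarkedAt v P z m 1 1 s2 t6)
    (A7 : MarkedAt v P z m 1 (-1) s3 t7)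
    (A8 : MarkedAt v P z m (-1) 1 s4 t8)
    (A9 : MarkedAt v P z m (-1) (-1) s5 t9)
    (H : Below v (t6 + t7 + t8 + t9)) : False := by
  obtain ⟨x2, y6, h12, h26, E2, E6⟩ := A6
  obtain ⟨x3, y7, h13, h37, E3, E7⟩ := A7
  obtain ⟨x4, y8, h14, h48, E4, E8⟩ := A8
  obtain ⟨x5, y9, h15, h59, E5, E9⟩ := A9
  have E0 := W.origin
  have h01 := W.nonneg E1
  have h02 := W.nonneg E2
  have h03 := W.nonneg E3
  have h04 := W.nonneg E4
  have h05 := W.nonneg E5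
  have h06 := W.nonneg E6
  have h07 := W.nonneg E7
  have h08 := W.nonneg E8
  have h09 := W.nonneg E9
  have h0 := R.pos
  have hb := R.le
  have h1 : 0 < 1 - v := by linarith
  have h17 := h13.trans h37
  have h19 := h15.trans h59
  refine lt_irrefl (0 : ℝ) ?_
  rcases le_total s2 s4 with h24 | h42
  · linear_combination W.xU (8 * v * (1 + v) * (1 + 3 * v)) E0 E1 +
      W.yL (8 * v * (1 + v) * (1 + 3 * v)) E0 E1 +
      W.yU (2 * (1 + v) * (1 - v) * (1 + 3 * v)) E1 E2 +
      W.yL (2 * (1 + v) * (1 + 3 * v) ^ 2) E1 E2 + W.yU ((1 + v) ^ 2 * (1 + 3 * v)) E1 E3 +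
      W.yL ((1 + v) ^ 2 * (1 + 3 * v)) E1 E5 + W.yU ((1 + v) ^ 2 * (1 + 3 * v)) E1 E7 +
      W.yL ((1 + v) ^ 2 * (1 + 3 * v)) E1 E9 + W.yU (2 * (1 + v) ^ 2 * (1 + 3 * v)) E2 E4 +
      W.xU (v * (1 + v) ^ 2 * (1 + 3 * v)) E2 E6 + W.xL (v * (1 + v) ^ 2 * (1 + 3 * v)) E2 E6 +
      W.yL ((1 + v) ^ 2 * (1 + 3 * v)) E3 E7 + W.xU (v * (1 + v) ^ 2 * (1 + 3 * v)) E4 E8 +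
      W.xL (v * (1 + v) ^ 2 * (1 + 3 * v)) E4 E8 + W.yU ((1 + v) ^ 2 * (1 + 3 * v)) E5 E9 +
      H.s3 (2 * v) + pos (8 * (1 - v) * (1 + 2 * v))
  · have h18 := h14.trans h48
    linear_combination W.xL (8 * v * (1 + v) * (1 + 3 * v)) E0 E1 +
      W.yU (8 * v * (1 + v) * (1 + 3 * v)) E0 E1 +
      W.yL (2 * (1 + v) * (1 - v) * (1 + 3 * v)) E1 E2 + W.yU ((1 + v) ^ 2 * (1 + 3 * v)) E1 E3 +
      W.yU ((1 + v) * (1 + 3 * v) * (1 + 5 * v)) E1 E4 + W.yL ((1 + v) ^ 2 * (1 + 3 * v)) E1 E5 +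
      W.yU ((1 + v) ^ 2 * (1 + 3 * v)) E1 E7 + W.yU ((1 + v) ^ 2 * (1 + 3 * v)) E1 E8 +
      W.yL ((1 + v) ^ 2 * (1 + 3 * v)) E1 E9 + W.xU (v * (1 + v) ^ 2 * (1 + 3 * v)) E2 E6 +
      W.xL (v * (1 + v) ^ 2 * (1 + 3 * v)) E2 E6 + W.yL ((1 + v) ^ 2 * (1 + 3 * v)) E3 E7 +
      W.yL (4 * v * (1 + v) * (1 + 3 * v)) E4 E2 + W.yL ((1 + v) ^ 2 * (1 + 3 * v)) E4 E8 +
      W.yU ((1 + v) ^ 2 * (1 + 3 * v)) E5 E9 + H.s3 (2 * v) + pos (8 * (1 - v) * (1 + 2 * v))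

/-! ### Symmetry reduction -/

section Symmetry

variable {v z m o b s t : ℝ} {P : ℝ → ℝ → ℝ → Prop}

theorem Worldline.flipX (L : Worldline v P) : Worldline v (fun t x y => P t (-x) y) where
  origin := by simpa using L.origin
  nonneg h := L.nonneg h
  fast {t x y t' x' y'} h h' hle := by
    have := L.fast h h' hle
    rwa [show -x' - -x = -(x' - x) by ring, abs_neg] at this
  slow h h' hle := L.slow h h' hle

theorem Worldline.flipY (L : Worldline v P) : Worldline v (fun t x y => P t x (-y)) where
  origin := by simpa using L.origin
  nonneg h := L.nonneg h
  fast h h' hle := L.fast h h' hle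
  slow {t x y t' x' y'} h h' hle := by
    have := L.slow h h' hle
    rwa [show -y' - -y = -(y' - y) by ring, abs_neg] at this

/-- Reflecting the line exchanges the starting points `1`, `-1` and, to keep player II's
strategy, the two directions. -/
theorem Unmarked.flipX {o' b' : ℝ} (A : Unmarked P o b t) (ho : o' = -o := by norm_num)
    (hb : b' = -b := by norm_num) : Unmarked (fun t x y => P t (-x) y) o' b' t := by
  obtain ⟨y, E⟩ := A
  subst ho hb
  exact ⟨y, by
    change P t (-(-o + -b * y)) y
    rwa [show -(-o + -b * y) = o + b * y by ring]⟩

/-- Negating player II's strategy exchanges the two directions. -/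
theorem Unmarked.flipY {b' : ℝ} (A : Unmarked P o b t) (hb : b' = -b := by norm_num) :
    Unmarked (fun t x y => P t x (-y)) o b' t := by
  obtain ⟨y, E⟩ := A
  subst hb
  exact ⟨-y, by
    change P t (o + -b * -y) (- -y)
    rwa [neg_neg, show o + -b * -y = o + b * y by ring]⟩

theorem MarkedAt.flipX {o' b' : ℝ} (A : MarkedAt v P z m o b s t)
    (ho : o' = -o := by norm_num) (hb : b' = -b := by norm_num) :
    MarkedAt v (fun t x y => P t (-x) y) z (-m) o' b' s t := by
  obtain ⟨x, y, hz, hs, E, E'⟩ := A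
  subst ho hb
  refine ⟨-x, y, hz, hs, ?_, ?_⟩
  · change P s (- -x) (-b * (-m - -o))
    rwa [neg_neg, show -b * (-m - -o) = b * (m - o) by ring]
  · change P t (-(-m - -o * v * (t - s))) y
    rwa [show -(-m - -o * v * (t - s)) = m - o * v * (t - s) by ring]

theorem MarkedAt.flipY {b' : ℝ} (A : MarkedAt v P z m o b s t)
    (hb : b' = -b := by norm_num) :
    MarkedAt v (fun t x y => P t x (-y)) z m o b' s t := by
  obtain ⟨x, y, hz, hs, E, E'⟩ := A
  subst hb
  refine ⟨x, -y, hz, hs, ?_, ?_⟩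
  · change P s x (-(-b * (m - o)))
    rwa [show -(-b * (m - o)) = b * (m - o) by ring]
  · change P t (m - o * v * (t - s)) (- -y)
    rwa [neg_neg]

theorem Unmarked.flipXY {o' : ℝ} (A : Unmarked P o b t) (ho : o' = -o := by norm_num) :
    Unmarked (fun t x y => P t (-x) (-y)) o' b t :=
  (A.flipX ho rfl).flipY (neg_neg b).symm

theorem MarkedAt.flipXY {o' : ℝ} (A : MarkedAt v P z m o b s t)
    (ho : o' = -o := by norm_num) :
    MarkedAt v (fun t x y => P t (-x) (-y)) z (-m) o' b s t :=
  (A.flipX ho rfl).flipY (neg_neg b).symm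

end Symmetry

/-- `Met v P z m o b t`: player I meets the agent `(o, b)` at time `t`, which either has not
seen the marker before or has found it at some time `s`. -/
def Met (v : ℝ) (P : ℝ → ℝ → ℝ → Prop) (z m o b t : ℝ) : Prop :=
  Unmarked P o b t ∨ ∃ s, MarkedAt v P z m o b s t

/-- The lower bound when no agent finds the marker. By symmetry the agent met first can be
taken to be `(1, 1)`. -/
theorem not_below_of_unmarked {v : ℝ} {P : ℝ → ℝ → ℝ → Prop} (R : Range v) (L : Worldline v P)
    {t6 t7 t8 t9 : ℝ} (A6 : Unmarked P 1 1 t6) (A7 : Unmarked P 1 (-1) t7)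
    (A8 : Unmarked P (-1) 1 t8) (A9 : Unmarked P (-1) (-1) t9) :
    ¬Below v (t6 + t7 + t8 + t9) := by
  intro H
  have HY : Below v (t7 + t6 + t9 + t8) := by convert H using 1; ring
  have HX : Below v (t9 + t8 + t7 + t6) := by convert H using 1; ring
  have HXY : Below v (t8 + t9 + t6 + t7) := by convert H using 1; ring
  rcases le_total t6 t7 with a | a <;> rcases le_total t8 t9 with c | c
  · rcases le_total t6 t8 with d | d
    · exact caseA R L A6 A7 A8 A9 a d (d.trans c) H
    · exact caseA R (L.flipX.flipY) A8.flipXY A9.flipXY A6.flipXY A7.flipXY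
        c d (d.trans a) HXY
  · rcases le_total t6 t9 with d | d
    · exact caseA R L A6 A7 A8 A9 a (d.trans c) d H
    · exact caseA R L.flipX A9.flipX A8.flipX A7.flipX A6.flipX c (d.trans a) d HX
  · rcases le_total t7 t8 with d | d
    · exact caseA R L.flipY A7.flipY A6.flipY A9.flipY A8.flipY a (d.trans c) d HY
    · exact caseA R (L.flipX.flipY) A8.flipXY A9.flipXY A6.flipXY A7.flipXY
        c (d.trans a) d HXY
  · rcases le_total t7 t9 with d | d
    · exact caseA R L.flipY A7.flipY A6.flipY A9.flipY A8.flipY a d (d.trans c) HY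
    · exact caseA R L.flipX A9.flipX A8.flipX A7.flipX A6.flipX c d (d.trans a) HX

/-- The lower bound in abstract form. Up to the two reflections, only the seven patterns of
marked agents treated by `caseA`, …, `caseG` occur. -/
theorem not_below {v z m w : ℝ} {P : ℝ → ℝ → ℝ → Prop} (R : Range v) (L : Worldline v P)
    {t6 t7 t8 t9 : ℝ} (E1 : P z m w) (A6 : Met v P z m 1 1 t6) (A7 : Met v P z m 1 (-1) t7)
    (A8 : Met v P z m (-1) 1 t8) (A9 : Met v P z m (-1) (-1) t9) :
    ¬Below v (t6 + t7 + t8 + t9) := by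
  intro H
  have HY : Below v (t7 + t6 + t9 + t8) := by convert H using 1; ring
  have HX : Below v (t9 + t8 + t7 + t6) := by convert H using 1; ring
  have HXY : Below v (t8 + t9 + t6 + t7) := by convert H using 1; ring
  have EY : (fun t x y => P t x (-y)) z m (-w) := by simpa using E1
  have EX : (fun t x y => P t (-x) y) z (-m) w := by simpa using E1
  have EXY : (fun t x y => P t (-x) (-y)) z (-m) (-w) := by simpa using E1
  have LY := L.flipY
  have LX := L.flipX
  have LXY := L.flipX.flipY
  rcases A6 with A6 | ⟨s6, A6⟩ <;> rcases A7 with A7 | ⟨s7, A7⟩ <;>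
    rcases A8 with A8 | ⟨s8, A8⟩ <;> rcases A9 with A9 | ⟨s9, A9⟩
  · exact not_below_of_unmarked R L A6 A7 A8 A9 H
  · exact caseB R LX EX A9.flipX A8.flipX A7.flipX A6.flipX HX
  · exact caseB R LXY EXY A8.flipXY A9.flipXY A6.flipXY A7.flipXY HXY
  · rcases le_total s8 s9 with h | h
    · exact caseC R LXY EXY A8.flipXY A9.flipXY A6.flipXY A7.flipXY h HXY
    · exact caseC R LX EX A9.flipX A8.flipX A7.flipX A6.flipX h HX
  · exact caseB R LY EY A7.flipY A6.flipY A9.flipY A8.flipY HY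
  · rcases le_total s7 s9 with h | h
    · exact caseD R LY EY A7.flipY A6.flipY A9.flipY A8.flipY h HY
    · exact caseD R LX EX A9.flipX A8.flipX A7.flipX A6.flipX h HX
  · rcases le_total s7 s8 with h | h
    · exact caseE R L E1 A6 A7 A8 A9 h H
    · exact caseE R LX EX A9.flipX A8.flipX A7.flipX A6.flipX h HX
  · exact caseF R LX EX A9.flipX A8.flipX A7.flipX A6.flipX HX
  · exact caseB R L E1 A6 A7 A8 A9 H
  · rcases le_total s6 s9 with h | h
    · exact caseE R LY EY A7.flipY A6.flipY A9.flipY A8.flipY h HY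
    · exact caseE R LXY EXY A8.flipXY A9.flipXY A6.flipXY A7.flipXY h HXY
  · rcases le_total s6 s8 with h | h
    · exact caseD R L E1 A6 A7 A8 A9 h H
    · exact caseD R LXY EXY A8.flipXY A9.flipXY A6.flipXY A7.flipXY h HXY
  · exact caseF R LXY EXY A8.flipXY A9.flipXY A6.flipXY A7.flipXY HXY
  · rcases le_total s6 s7 with h | h
    · exact caseC R L E1 A6 A7 A8 A9 h H
    · exact caseC R LY EY A7.flipY A6.flipY A9.flipY A8.flipY h HY
  · exact caseF R LY EY A7.flipY A6.flipY A9.flipY A8.flipY HY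
  · exact caseF R L E1 A6 A7 A8 A9 H
  · exact caseG R L E1 A6 A7 A8 A9 H

/-! ### From strategies to worldlines -/

/-- `LipUpTo a p T`: on `[0, T]` the trajectory `p` has speed at most `a`. -/
def LipUpTo (a : ℝ) (p : ℝ → ℝ) (T : ℝ) : Prop :=
  ∀ s t, 0 ≤ s → s ≤ t → t ≤ T → |p s - p t| ≤ a * (t - s)

theorem LipUpTo.extend {a c T T' : ℝ} {p : ℝ → ℝ} (h : LipUpTo a p T)
    (hc : |c| ≤ a) (hp : ∀ t, T ≤ t → t ≤ T' → p t = p T + c * (t - T)) : LipUpTo a p T' := by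
  have lin : ∀ s t, T ≤ s → s ≤ t → t ≤ T' → |p s - p t| ≤ a * (t - s) := by
    intro s t h1 h2 h3
    rw [hp s h1 (h2.trans h3), hp t (h1.trans h2) h3,
      show p T + c * (s - T) - (p T + c * (t - T)) = -(c * (t - s)) by ring, abs_neg, abs_mul,
      abs_of_nonneg (sub_nonneg.2 h2)]
    exact mul_le_mul_of_nonneg_right hc (sub_nonneg.2 h2)
  intro s t hs hst ht
  rcases le_total t T with h1 | h1
  · exact h s t hs hst h1
  rcases le_total T s with h2 | h2
  · exact lin s t h2 hst ht
  have := h s T hs h2 le_rfl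
  have := lin T t le_rfl h1 ht
  linarith [abs_sub_le (p s) (p T) (p t)]

theorem LipUpTo.abs_le {a : ℝ} {p : ℝ → ℝ} (h : ∀ T, LipUpTo a p T) {s t : ℝ} (hs : 0 ≤ s)
    (ht : 0 ≤ t) : |p s - p t| ≤ a * |s - t| := by
  rcases le_total s t with hst | hst
  · rw [abs_sub_comm s t, abs_of_nonneg (sub_nonneg.2 hst)]
    exact h t s t hs hst le_rfl
  · rw [abs_sub_comm (p s), abs_of_nonneg (sub_nonneg.2 hst)]
    exact h s t s ht hst le_rfl

theorem lipUpTo_of_abs_le {a : ℝ} {p : ℝ → ℝ}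
    (h : ∀ s t : ℝ, 0 ≤ s → 0 ≤ t → |p s - p t| ≤ a * |s - t|) (T : ℝ) : LipUpTo a p T := by
  intro s t hs hst _
  have := h s t hs (hs.trans hst)
  rwa [abs_sub_comm s t, abs_of_nonneg (sub_nonneg.2 hst)] at this

theorem mem_strat_of_piecewiseLin {a : ℝ} {p : ℝ → ℝ} (h : PiecewiseLin (Icc (-a) a) p) :
    p ∈ Strat a := by
  obtain ⟨h0, n, τ, c, hτ, hmono, hc, hpiece, hlast⟩ := h
  have hc' : ∀ i, i ≤ n → |c i| ≤ a := fun i hi => abs_le.2 (hc i hi)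
  have key : ∀ i, i ≤ n → 0 ≤ τ i ∧ LipUpTo a p (τ i) := by
    intro i
    induction i with
    | zero =>
      intro _
      refine ⟨hτ.ge, fun s t hs hst ht => ?_⟩
      rw [hτ] at ht
      rw [show s = 0 by linarith, show t = 0 by linarith]
      simp
    | succ k ih =>
      intro hk
      obtain ⟨h1, h2⟩ := ih (by omega)
      exact ⟨h1.trans (hmono k (by omega)),
        h2.extend (hc' k (by omega)) (hpiece k (by omega))⟩
  obtain ⟨h1, h2⟩ := key n le_rfl
  exact ⟨h0, fun s t hs ht => LipUpTo.abs_le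
    (fun T => h2.extend (hc' n le_rfl) fun t ht _ => hlast t ht) hs ht⟩

theorem continuousOn_of_lip {a : ℝ} {p : ℝ → ℝ} (h : ∀ T, LipUpTo a p T) :
    ContinuousOn p (Ici 0) := by
  refine (LipschitzOnWith.of_dist_le_mul (K := a.toNNReal) fun s hs t ht => ?_).continuousOn
  rw [Real.dist_eq, Real.dist_eq]
  exact (LipUpTo.abs_le h hs ht).trans
    (mul_le_mul_of_nonneg_right (Real.le_coe_toNNReal a) (abs_nonneg _))

/-- The first rendezvous is attained. -/
theorem rdvTime_mem {f p : ℝ → ℝ} (hf : ContinuousOn f (Ici 0)) (hp : ContinuousOn p (Ici 0))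
    (h : {t | 0 ≤ t ∧ f t = p t}.Nonempty) :
    0 ≤ rdvTime f p ∧ f (rdvTime f p) = p (rdvTime f p) := by
  have hcl : IsClosed {t | 0 ≤ t ∧ f t = p t} := by
    have := (hf.sub hp).preimage_isClosed_of_isClosed isClosed_Ici (isClosed_singleton (x := (0 : ℝ)))
    convert this using 1
    ext t
    simp [sub_eq_zero]
  exact hcl.csInf_mem h ⟨0, fun t ht => ht.1⟩

theorem rdvTime_le {f p : ℝ → ℝ} {t : ℝ} (ht : 0 ≤ t) (h : f t = p t) : rdvTime f p ≤ t :=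
  csInf_le ⟨0, fun _ ht => ht.1⟩ ⟨ht, h⟩

/-- The worldline of a pair of strategies, `f` for the fast and `g` for the slow player. -/
def line (f g : ℝ → ℝ) (t x y : ℝ) : Prop := 0 ≤ t ∧ x = f t ∧ y = g t

theorem line_worldline {v : ℝ} {f g : ℝ → ℝ} (hf : f ∈ Strat 1) (hg : g ∈ Strat v) :
    Worldline v (line f g) where
  origin := ⟨le_rfl, hf.1.symm, hg.1.symm⟩
  nonneg h := h.1
  fast := by
    rintro t _ _ t' _ _ ⟨ht, rfl, rfl⟩ ⟨ht', rfl, rfl⟩ hle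
    simpa [abs_of_nonneg (sub_nonneg.2 hle)] using hf.2 t' t ht' ht
  slow := by
    rintro t _ _ t' _ _ ⟨ht, rfl, rfl⟩ ⟨ht', rfl, rfl⟩ hle
    simpa [abs_of_nonneg (sub_nonneg.2 hle)] using hg.2 t' t ht' ht

theorem pos_of_ne_zero {φ : ℝ → ℝ} {a T : ℝ} (hφ : ContinuousOn φ (Ici a)) (ha : 0 < φ a)
    (h : ∀ t, a ≤ t → t < T → φ t ≠ 0) {t : ℝ} (hat : a ≤ t) (htT : t < T) : 0 < φ t := by
  by_contra! hneg
  obtain ⟨r, hr, hr0⟩ := intermediate_value_Icc' hat (hφ.mono Icc_subset_Ici_self) ⟨hneg, ha.le⟩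
  exact h r hr.1 (hr.2.trans_lt htT) hr0

/-- The rendezvous with an agent, read off the worldline. The point is that an agent finding
the marker strictly after the drop stands, until then, on its own side of player I, hence of
the marker: it passes the marker in the direction `-o`, away from its starting side. -/
theorem met_of_agentTraj {v z o b : ℝ} {f g p : ℝ → ℝ} (hf : f ∈ Strat 1) (hg : g ∈ Strat v)
    (hv : 0 < v) (hz : 0 ≤ z) (ho : o = 1 ∨ o = -1) (hb : b = 1 ∨ b = -1)
    (h : AgentTraj f g z v o b p) (hne : {t | 0 ≤ t ∧ f t = p t}.Nonempty) :
    Met v (line f g) z (f z) o b (rdvTime f p) := by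
  have ho2 : o * o = 1 := by rcases ho with rfl | rfl <;> norm_num
  have hb2 : b * b = 1 := by rcases hb with rfl | rfl <;> norm_num
  have hfc := continuousOn_of_lip (lipUpTo_of_abs_le hf.2)
  have hAc : ContinuousOn (fun t => o + b * g t) (Ici 0) :=
    continuousOn_const.add (continuousOn_const.mul (continuousOn_of_lip (lipUpTo_of_abs_le hg.2)))
  have hAl : ∀ T, LipUpTo v (fun t => o + b * g t) T := by
    intro T s t hs hst ht
    have := lipUpTo_of_abs_le hg.2 T s t hs hst ht
    have hb1 : |b| = 1 := by rcases hb with rfl | rfl <;> norm_num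
    rwa [show o + b * g s - (o + b * g t) = b * (g s - g t) by ring, abs_mul, hb1, one_mul]
  rcases h with ⟨hp, -⟩ | ⟨τ, c, d, hzτ, hτ, hfirst, hmark, hslope, hd, hdc, hdc', hp, hp'⟩
  · obtain rfl : p = fun t => o + b * g t := funext hp
    obtain ⟨hT, hT'⟩ := rdvTime_mem hfc hAc hne
    exact Or.inl ⟨_, hT, hT'.symm, rfl⟩
  have hτ0 : 0 ≤ τ := hz.trans hzτ
  have hpl : ∀ T, LipUpTo v p T := by
    intro T
    refine LipUpTo.extend (T := τ) (c := d) ?_ ?_ fun t ht _ => by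
      rw [hp' t ht, hp τ hτ0 le_rfl]
    · intro s t hs hst ht
      rw [hp s hs (hst.trans ht), hp t (hs.trans hst) ht]
      exact hAl τ s t hs hst ht
    · rcases hd with rfl | rfl <;> simp [abs_of_pos hv]
  obtain ⟨hT, hT'⟩ := rdvTime_mem hfc (continuousOn_of_lip hpl) hne
  rcases le_or_gt (rdvTime f p) τ with hle | hlt
  · exact Or.inl ⟨_, hT, by rw [hT', hp _ hT hle], rfl⟩
  refine Or.inr ⟨τ, f τ, g (rdvTime f p), hzτ, hlt.le, ⟨hτ0, rfl, ?_⟩, ⟨hT, ?_, rfl⟩⟩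
  · rw [← hτ]
    linear_combination g τ * hb2
  have hlt' : z < τ := by
    refine lt_of_le_of_ne hzτ fun h => ?_
    -- a marker found at the drop time is a rendezvous
    have : rdvTime f p ≤ τ := rdvTime_le hτ0 (by rw [hp τ hτ0 le_rfl, hτ, h])
    linarith
  have side : ∀ t, 0 ≤ t → t < τ → 0 < o * (o + b * g t - f t) := fun t ht htτ =>
    pos_of_ne_zero (φ := fun t => o * (o + b * g t - f t)) (a := 0) (T := τ)
      (continuousOn_const.mul (hAc.sub hfc)) (by simp [hf.1, hg.1, ho2]) (fun t ht htτ h0 => by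
        rcases mul_eq_zero.1 h0 with h1 | h1
        · rw [h1] at ho2
          norm_num at ho2
        · exact hfirst t ht htτ (sub_eq_zero.1 h1).symm) ht htτ
  have side' : ∀ t, z ≤ t → t < τ → 0 < o * (o + b * g t - f z) := fun t ht htτ =>
    pos_of_ne_zero (φ := fun t => o * (o + b * g t - f z)) (a := z) (T := τ)
      (continuousOn_const.mul ((hAc.mono (Ici_subset_Ici.2 hz)).sub continuousOn_const))
      (side z hz hlt') (fun t ht htτ h0 => by
        rcases mul_eq_zero.1 h0 with h1 | h1
        · rw [h1] at ho2
          norm_num at ho2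
        · exact hmark t ht htτ (sub_eq_zero.1 h1)) ht htτ
  obtain ⟨ε, hε, hlin⟩ := hslope (hz.trans_lt hlt')
  have hdir : d = -o * v := by
    have h1 : max z (τ - ε) < τ := max_lt hlt' (by linarith)
    obtain ⟨r, hr, hr'⟩ := exists_between h1
    have h2 := side' r ((le_max_left _ _).trans hr.le) hr'
    rw [hlin r ((le_max_right _ _).trans hr.le) hr'.le, hτ] at h2
    have h3 : o * c < 0 := by
      by_contra! h4
      nlinarith [mul_nonneg h4 (sub_nonneg.2 hr'.le)]
    rcases ho with rfl | rfl
    · rw [hdc' (by linarith)]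
      ring
    · rw [hdc (by linarith)]
      ring
  rw [hT', hp' _ hlt.le, hτ, hdir]
  ring

/-- No profile of the marker game does better than all three candidate values. -/
theorem not_below_markerSum {v z : ℝ} (R : Range v) {f g : ℝ → ℝ} {p : ℝ → ℝ → ℝ → ℝ}
    (h : MarkerProfile (Icc (-1) 1) (Icc (-v) v) v f g z p) : ¬Below v (markerSum f p) := by
  obtain ⟨hf, hg, hz, hp⟩ := h
  have hf := mem_strat_of_piecewiseLin hf
  have hg := mem_strat_of_piecewiseLin hg
  have A : ∀ o b : ℝ, (o = 1 ∨ o = -1) → (b = 1 ∨ b = -1) →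
      Met v (line f g) z (f z) o b (rdvTime f (p o b)) := fun o b ho hb =>
    met_of_agentTraj hf hg R.pos hz ho hb (hp o b ho hb).1 (hp o b ho hb).2
  exact not_below R (line_worldline hf hg) ⟨hz, rfl, rfl⟩ (A 1 1 (by simp) (by simp))
    (A 1 (-1) (by simp) (by simp)) (A (-1) 1 (by simp) (by simp))
    (A (-1) (-1) (by simp) (by simp))

/-- The lower bound for the game without marker. Its fast player is player II, so the roles
of the two players are exchanged: `f = o + b * g` means `g = -b * o + b * f`. -/
theorem not_below_sumTimes {v : ℝ} (R : Range v) {f g : ℝ → ℝ} (hf : f ∈ Strat v)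
    (hg : g ∈ Strat 1) (h : AllFinite f g) : ¬Below v (sumTimes f g) := by
  have A : ∀ o b o' : ℝ, b * b = 1 → o' = -b * o → (meetSet f g o b).Nonempty →
      Unmarked (line g f) o' b (meetTime f g o b) := by
    intro o b o' hb ho hne
    obtain ⟨hT, hT'⟩ := rdvTime_mem (p := fun t => o + b * g t)
      (continuousOn_of_lip (lipUpTo_of_abs_le hf.2)) (continuousOn_const.add
        (continuousOn_const.mul (continuousOn_of_lip (lipUpTo_of_abs_le hg.2)))) hne
    change f (meetTime f g o b) = o + b * g (meetTime f g o b) at hT'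
    refine ⟨f (meetTime f g o b), hT, ?_, rfl⟩
    rw [ho, hT']
    linear_combination g (meetTime f g o b) * hb
  obtain ⟨h1, h2, h3, h4⟩ := h
  have := not_below_of_unmarked R (line_worldline hg hf) (A (-1) 1 1 (by norm_num) (by norm_num) h3)
    (A 1 (-1) 1 (by norm_num) (by norm_num) h2) (A 1 1 (-1) (by norm_num) (by norm_num) h1)
    (A (-1) (-1) (-1) (by norm_num) (by norm_num) h4)
  convert this using 2
  unfold sumTimes
  ring

/-! ### Explicit strategies -/

/-- The trajectory from `0` with slopes `c₀`, `c₁`, `c₂`, `c₃` on the intervals cut out by the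
times `a ≤ b ≤ c`. -/
noncomputable def zig (a b c c₀ c₁ c₂ c₃ t : ℝ) : ℝ :=
  c₀ * min t a + c₁ * (min t b - min t a) + c₂ * (min t c - min t b) + c₃ * (t - min t c)

section Zig

variable {a b c c₀ c₁ c₂ c₃ t : ℝ}

theorem zig_first (hab : a ≤ b) (hbc : b ≤ c) (ht : t ≤ a) :
    zig a b c c₀ c₁ c₂ c₃ t = c₀ * t := by
  unfold zig
  rw [min_eq_left ht, min_eq_left (ht.trans hab), min_eq_left (ht.trans (hab.trans hbc))]
  ring

theorem zig_second (hbc : b ≤ c) (ha : a ≤ t) (hb : t ≤ b) :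
    zig a b c c₀ c₁ c₂ c₃ t = c₀ * a + c₁ * (t - a) := by
  unfold zig
  rw [min_eq_right ha, min_eq_left hb, min_eq_left (hb.trans hbc)]
  ring

theorem zig_third (hab : a ≤ b) (hb : b ≤ t) (hc : t ≤ c) :
    zig a b c c₀ c₁ c₂ c₃ t = c₀ * a + c₁ * (b - a) + c₂ * (t - b) := by
  unfold zig
  rw [min_eq_right (hab.trans hb), min_eq_right hb, min_eq_left hc]
  ring

theorem zig_fourth (hab : a ≤ b) (hbc : b ≤ c) (hc : c ≤ t) :
    zig a b c c₀ c₁ c₂ c₃ t = c₀ * a + c₁ * (b - a) + c₂ * (c - b) + c₃ * (t - c) := by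
  unfold zig
  rw [min_eq_right (hab.trans (hbc.trans hc)), min_eq_right (hbc.trans hc), min_eq_right hc]

theorem zig_piecewiseLin {S : Set ℝ} (ha : 0 ≤ a) (hab : a ≤ b) (hbc : b ≤ c) (h₀ : c₀ ∈ S)
    (h₁ : c₁ ∈ S) (h₂ : c₂ ∈ S) (h₃ : c₃ ∈ S) : PiecewiseLin S (zig a b c c₀ c₁ c₂ c₃) := by
  have z0 : zig a b c c₀ c₁ c₂ c₃ 0 = 0 := by rw [zig_first hab hbc ha, mul_zero]
  refine ⟨z0, 3, fun i => if i = 0 then 0 else if i = 1 then a else if i = 2 then b else c,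
    fun i => if i = 0 then c₀ else if i = 1 then c₁ else if i = 2 then c₂ else c₃,
    by simp, ?_, ?_, ?_, ?_⟩
  · intro i hi
    interval_cases i <;> simpa
  · intro i hi
    interval_cases i <;> simpa
  · intro i hi t
    interval_cases i <;> simp <;> intro h h'
    · rw [z0, zig_first hab hbc h']
      ring
    · rw [zig_second hbc h h', zig_first hab hbc le_rfl]
    · rw [zig_third hab h h', zig_second hbc hab le_rfl]
  · intro t h
    simp at h ⊢
    rw [zig_fourth hab hbc h, zig_third hab hbc le_rfl]

end Zig

theorem W_eq {v T : ℝ} (R : Range v) (hT : ∀ S, ¬Below v S → T ≤ S)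
    (h : ∃ f g z p, MarkerProfile (Icc (-1) 1) (Icc (-v) v) v f g z p ∧ markerSum f p ≤ T) :
    W v = T := by
  obtain ⟨f, g, z, p, hp, hle⟩ := h
  have low : ∀ S ∈ {S | ∃ f g z p, MarkerProfile (Icc (-1) 1) (Icc (-v) v) v f g z p ∧
      S = markerSum f p}, T ≤ S := by
    rintro S ⟨f, g, z, p, hp, rfl⟩
    exact hT _ (not_below_markerSum R hp)
  exact le_antisymm ((csInf_le ⟨T, low⟩ ⟨f, g, z, p, hp, rfl⟩).trans hle)
    (le_csInf ⟨_, f, g, z, p, hp, rfl⟩ low)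

theorem V_eq {v T : ℝ} (R : Range v) (hT : ∀ S, ¬Below v S → T ≤ S)
    (h : ∃ f ∈ Strat v, ∃ g ∈ Strat 1, AllFinite f g ∧ sumTimes f g ≤ T) : V v = T := by
  obtain ⟨f, hf, g, hg, hA, hle⟩ := h
  have low : ∀ S ∈ {S | ∃ f ∈ Strat v, ∃ g ∈ Strat 1, AllFinite f g ∧ S = sumTimes f g},
      T ≤ S := by
    rintro S ⟨f, hf, g, hg, hA, rfl⟩
    exact hT _ (not_below_sumTimes R hf hg hA)
  exact le_antisymm ((csInf_le ⟨T, low⟩ ⟨f, hf, g, hg, hA, rfl⟩).trans hle)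
    (le_csInf ⟨_, f, hf, g, hg, hA, rfl⟩ low)

/-- A pair of trajectories meeting all four agents at the times `t₁`, …, `t₄` bounds both
values from above: with the marker dropped after the last rendezvous it is a profile of the
marker game, and with the roles exchanged a pair of strategies for the game without marker. -/
theorem values_eq_of_unmarked {v T : ℝ} (R : Range v) (hT : ∀ S, ¬Below v S → T ≤ S)
    {f g : ℝ → ℝ} (hf : PiecewiseLin (Icc (-1) 1) f) (hg : PiecewiseLin (Icc (-v) v) g)
    {t₁ t₂ t₃ t₄ : ℝ} (h₁ : 0 ≤ t₁) (h₂ : 0 ≤ t₂) (h₃ : 0 ≤ t₃) (h₄ : 0 ≤ t₄)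
    (e₁ : f t₁ = 1 + 1 * g t₁) (e₂ : f t₂ = 1 + -1 * g t₂) (e₃ : f t₃ = -1 + 1 * g t₃)
    (e₄ : f t₄ = -1 + -1 * g t₄) (hsum : t₁ + t₂ + t₃ + t₄ = T) : W v = T ∧ W v = V v := by
  have hW : W v = T := by
    refine W_eq R hT ⟨f, g, T + 1, fun o b t => o + b * g t, ⟨hf, hg, by linarith, ?_⟩, ?_⟩
    · have A : ∀ o b t, 0 ≤ t → t ≤ T → f t = o + b * g t →
          AgentTraj f g (T + 1) v o b (fun t => o + b * g t) ∧
            {t | 0 ≤ t ∧ f t = o + b * g t}.Nonempty := fun o b t ht htT e =>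
        ⟨Or.inl ⟨fun _ => rfl, fun ⟨τ, hτ, _, hfirst⟩ => hfirst t ht (by linarith) e⟩, t, ht, e⟩
      rintro o b (rfl | rfl) (rfl | rfl)
      · exact A _ _ t₁ h₁ (by linarith) e₁
      · exact A _ _ t₂ h₂ (by linarith) e₂
      · exact A _ _ t₃ h₃ (by linarith) e₃
      · exact A _ _ t₄ h₄ (by linarith) e₄
    · unfold markerSum
      linarith [rdvTime_le (p := fun t => 1 + 1 * g t) h₁ e₁,
        rdvTime_le (p := fun t => 1 + -1 * g t) h₂ e₂,
        rdvTime_le (p := fun t => -1 + 1 * g t) h₃ e₃,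
        rdvTime_le (p := fun t => -1 + -1 * g t) h₄ e₄]
  refine ⟨hW, hW.trans (Eq.symm ?_)⟩
  have m₁ : t₁ ∈ meetSet g f (-1) 1 := ⟨h₁, by linarith⟩
  have m₂ : t₂ ∈ meetSet g f 1 (-1) := ⟨h₂, by linarith⟩
  have m₃ : t₃ ∈ meetSet g f 1 1 := ⟨h₃, by linarith⟩
  have m₄ : t₄ ∈ meetSet g f (-1) (-1) := ⟨h₄, by linarith⟩
  have M : ∀ {o b t : ℝ}, t ∈ meetSet g f o b → meetTime g f o b ≤ t := fun h =>
    csInf_le ⟨0, fun _ ht => ht.1⟩ h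
  refine V_eq R hT ⟨g, mem_strat_of_piecewiseLin hg, f, mem_strat_of_piecewiseLin hf,
    ⟨⟨_, m₃⟩, ⟨_, m₂⟩, ⟨_, m₁⟩, ⟨_, m₄⟩⟩, ?_⟩
  unfold sumTimes
  linarith [M m₁, M m₂, M m₃, M m₄]

/-- Both `(1, 1)` and `(1, -1)` are met at time `1`, player II waiting at the origin. -/
theorem values_slow {v : ℝ} (R : Range v)
    (hT : ∀ S, ¬Below v S → (4 * v ^ 2 + 16 * v + 8) / (1 + v) ^ 2 ≤ S) :
    W v = (4 * v ^ 2 + 16 * v + 8) / (1 + v) ^ 2 ∧ W v = V v := by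
  have h0 := R.pos
  obtain ⟨k, hk⟩ : ∃ k, k = 1 / (1 + v) := ⟨_, rfl⟩
  have hk0 : 0 < k := by rw [hk]; positivity
  obtain ⟨l, hl⟩ : ∃ l, l = 4 * v * k ^ 2 := ⟨_, rfl⟩
  have hl0 : 0 < l := by rw [hl]; positivity
  refine values_eq_of_unmarked R hT
    (f := zig 1 1 1 1 1 1 (-1)) (g := zig 1 (1 + 2 * k) (1 + 2 * k) 0 (-v) (-v) v)
    (t₁ := 1) (t₂ := 1) (t₃ := 1 + 2 * k + l) (t₄ := 1 + 2 * k)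
    (zig_piecewiseLin ?_ ?_ ?_ ?_ ?_ ?_ ?_) (zig_piecewiseLin ?_ ?_ ?_ ?_ ?_ ?_ ?_)
    ?_ ?_ ?_ ?_ ?_ ?_ ?_ ?_ ?_
  any_goals first | positivity | linarith | (constructor <;> linarith)
  · rw [zig_first, zig_first] <;> linarith
  · rw [zig_first, zig_first] <;> linarith
  · rw [zig_fourth, zig_fourth] <;> try linarith
    rw [hl, hk]
    field_simp
    ring
  · rw [zig_fourth, zig_second] <;> try linarith
    rw [hk]
    field_simp
    ring
  · rw [hl, hk]
    field_simp
    ring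

/-- The agents are met in the order `(1, 1)`, `(1, -1)`, `(-1, -1)`, `(-1, 1)`, the agent met
next always moving towards player I. -/
theorem values_middle {v : ℝ} (R : Range v)
    (hT : ∀ S, ¬Below v S → (16 * v ^ 2 + 28 * v + 8) / (1 + v) ^ 3 ≤ S) :
    W v = (16 * v ^ 2 + 28 * v + 8) / (1 + v) ^ 3 ∧ W v = V v := by
  have h0 := R.pos
  obtain ⟨k, hk⟩ : ∃ k, k = 1 / (1 + v) := ⟨_, rfl⟩
  have hk0 : 0 < k := by rw [hk]; positivity
  obtain ⟨l, hl⟩ : ∃ l, l = 2 * v * k ^ 2 := ⟨_, rfl⟩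
  have hl0 : 0 < l := by rw [hl]; positivity
  obtain ⟨q, hq⟩ : ∃ q, q = (2 * v ^ 2 + 6 * v) * k ^ 3 := ⟨_, rfl⟩
  have hq0 : 0 < q := by rw [hq]; positivity
  refine values_eq_of_unmarked R hT
    (f := zig (k + l) (k + l) (k + l) 1 1 1 (-1))
    (g := zig k (k + l) (k + l + 2 * k) (-v) v (-v) v)
    (t₁ := k) (t₂ := k + l) (t₃ := k + l + 2 * k + q) (t₄ := k + l + 2 * k)
    (zig_piecewiseLin ?_ ?_ ?_ ?_ ?_ ?_ ?_) (zig_piecewiseLin ?_ ?_ ?_ ?_ ?_ ?_ ?_)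
    ?_ ?_ ?_ ?_ ?_ ?_ ?_ ?_ ?_
  any_goals first | positivity | linarith | (constructor <;> linarith)
  · rw [zig_first, zig_first] <;> try linarith
    rw [hk]
    field_simp
    ring
  · rw [zig_first, zig_second] <;> try linarith
    rw [hl, hk]
    field_simp
    ring
  · rw [zig_fourth, zig_fourth] <;> try linarith
    rw [hq, hl, hk]
    field_simp
    ring
  · rw [zig_fourth, zig_third] <;> try linarith
    rw [hl, hk]
    field_simp
    ring
  · rw [hq, hl, hk]
    field_simp
    ring

/-- Player I drops the marker at `l = 1 / (1 + 3 v)`, turns back, and meets `(-1, -1)` at the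
time `3 l` at which `(1, 1)` finds the marker; `(1, 1)` keeps moving left and is met soon
after, while player II's other agents reverse. -/
theorem value_fast {v : ℝ} (R : Range v)
    (hT : ∀ S, ¬Below v S → (24 * v ^ 2 + 52 * v + 20) / ((v + 1) ^ 2 * (3 * v + 1)) ≤ S) :
    W v = (24 * v ^ 2 + 52 * v + 20) / ((v + 1) ^ 2 * (3 * v + 1)) := by
  have h0 := R.pos
  have hv1 := R.le
  obtain ⟨k, hk⟩ : ∃ k, k = 1 / (1 + v) := ⟨_, rfl⟩
  have hk0 : 0 < k := by rw [hk]; positivity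
  have hk1 : k * (1 + v) = 1 := by rw [hk]; field_simp
  obtain ⟨l, hl⟩ : ∃ l, l = 1 / (1 + 3 * v) := ⟨_, rfl⟩
  have hl0 : 0 < l := by rw [hl]; positivity
  have hl1 : l * (1 + 3 * v) = 1 := by rw [hl]; field_simp
  have hvl : 0 < v * l := mul_pos h0 hl0
  have hvk : 0 < v * k := mul_pos h0 hk0
  have hlk : l < k := by
    rw [hl, hk]
    exact one_div_lt_one_div_of_lt (by linarith) (by linarith)
  obtain ⟨u, hu⟩ : ∃ u, u = 2 * k * l := ⟨_, rfl⟩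
  have hu0 : 0 < u := by rw [hu]; positivity
  have hu1 : u * (1 + v) = 2 * l := by rw [hu]; linear_combination 2 * l * hk1
  have huk : u < 2 * k := by nlinarith
  obtain ⟨q, hq⟩ : ∃ q, q = (2 + 10 * v) * l * k ^ 2 := ⟨_, rfl⟩
  have hq0 : 0 < q := by rw [hq]; positivity
  have hq1 : q * (1 + v) = 1 + (-l + 2 * k) - (-3 * v * l + 2 * v * k) := by
    rw [hq, hl, hk]
    field_simp
    ring
  -- player I meets the last agent to the left of the marker
  have hq2 : -l + 2 * k - q < l := by
    have : 0 < q - 2 * k + 2 * l := by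
      have : q - 2 * k + 2 * l = (2 + 6 * v - 4 * v ^ 2) * (l * k ^ 2) := by
        rw [hq, hl, hk]
        field_simp
        ring
      rw [this]
      have : 0 < 2 + 6 * v - 4 * v ^ 2 := by nlinarith
      positivity
    linarith
  obtain ⟨f, hf⟩ : ∃ f, f = zig l (3 * l) (3 * l + 2 * k) 1 (-1) 1 (-1) := ⟨_, rfl⟩
  obtain ⟨g, hg⟩ : ∃ g, g = zig (3 * l) (3 * l) (3 * l) (-v) (-v) (-v) v := ⟨_, rfl⟩
  have f1 : ∀ t, t ≤ l → f t = t := fun t ht => by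
    rw [hf, zig_first] <;> linarith
  have f2 : ∀ t, l ≤ t → t ≤ 3 * l → f t = 2 * l - t := fun t ht ht' => by
    rw [hf, zig_second] <;> linarith
  have f3 : ∀ t, 3 * l ≤ t → t ≤ 3 * l + 2 * k → f t = t - 4 * l := fun t ht ht' => by
    rw [hf, zig_third] <;> linarith
  have f4 : ∀ t, 3 * l + 2 * k ≤ t → f t = 2 * l + 4 * k - t := fun t ht => by
    rw [hf, zig_fourth] <;> linarith
  have g1 : ∀ t, t ≤ 3 * l → g t = -v * t := fun t ht => by
    rw [hg, zig_first] <;> linarith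
  have g2 : ∀ t, 3 * l ≤ t → g t = v * t - 6 * v * l := fun t ht => by
    rw [hg, zig_fourth] <;> linarith
  have hz : f l = l := f1 l le_rfl
  -- the four rendezvous
  obtain ⟨p, hp⟩ : ∃ p : ℝ → ℝ, p = fun t =>
    if t ≤ 3 * l then 1 + 1 * g t else l + -v * (t - 3 * l) := ⟨_, rfl⟩
  have e₁ : f (3 * l + u) = p (3 * l + u) := by
    rw [f3 _ (by linarith) (by linarith), hp]
    simp only [if_neg (show ¬3 * l + u ≤ 3 * l by linarith)]
    linear_combination hu1
  have e₂ : f (3 * l + 2 * k) = 1 + -1 * g (3 * l + 2 * k) := by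
    rw [f3 _ (by linarith) le_rfl, g2 _ (by linarith)]
    linear_combination 2 * hk1 - hl1
  have e₃ : f (3 * l + 2 * k + q) = -1 + 1 * g (3 * l + 2 * k + q) := by
    rw [f4 _ (by linarith), g2 _ (by linarith)]
    linear_combination -hq1
  have e₄ : f (3 * l) = -1 + -1 * g (3 * l) := by
    rw [f2 _ (by linarith) le_rfl, g1 _ le_rfl]
    linear_combination -hl1
  have A₁ : AgentTraj f g l v 1 1 p := by
    refine Or.inr ⟨3 * l, -v, -v, by linarith, ?_, ?_, ?_, fun _ => ⟨3 * l, by linarith, ?_⟩,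
      Or.inr rfl, fun h => by linarith, fun _ => rfl, ?_, ?_⟩
    · rw [hz, g1 _ le_rfl]
      linear_combination -hl1
    · intro t ht ht'
      rw [g1 t ht'.le]
      have : v * t < v * (3 * l) := mul_lt_mul_of_pos_left ht' h0
      rcases le_total t l with h | h
      · rw [f1 t h]
        intro h'
        linarith
      · rw [f2 t h ht'.le]
        intro h'
        linarith
    · intro t ht ht' h
      rw [hz, g1 t ht'.le] at h
      have : v * t < v * (3 * l) := mul_lt_mul_of_pos_left ht' h0
      linarith
    · intro s hs hs'
      rw [g1 s hs', g1 _ le_rfl]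
      ring
    · intro t _ ht
      rw [hp]
      exact if_pos ht
    · intro t ht
      have e : 1 + 1 * g (3 * l) = l := by
        rw [g1 _ le_rfl]
        linear_combination -hl1
      rw [e, hp]
      rcases ht.eq_or_lt with rfl | ht
      · simp only [le_refl, if_true]
        rw [e]
        ring
      · exact if_neg ht.not_ge
  have A : ∀ o b t, 0 ≤ t → f t = o + b * g t → (∀ r, l ≤ r → r ≤ t → o + b * g r ≠ l) →
      AgentTraj f g l v o b (fun t => o + b * g t) ∧
        {t | 0 ≤ t ∧ f t = o + b * g t}.Nonempty := fun o b t ht e hr =>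
    ⟨Or.inl ⟨fun _ => rfl, fun ⟨τ, hτ, hm, hfirst⟩ => hr τ hτ
      (not_lt.1 fun h => hfirst t ht h e) (by rw [hm, hz])⟩, t, ht, e⟩
  refine W_eq R hT ⟨f, g, l, fun o b => if o = 1 ∧ b = 1 then p else fun t => o + b * g t,
    ⟨?_, ?_, hl0.le, ?_⟩, ?_⟩
  · rw [hf]
    apply zig_piecewiseLin <;> first | linarith | (constructor <;> linarith)
  · rw [hg]
    apply zig_piecewiseLin <;> first | linarith | (constructor <;> linarith)
  · have vm : ∀ {r r' : ℝ}, r ≤ r' → v * r ≤ v * r' := fun h => mul_le_mul_of_nonneg_left h h0.le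
    rintro o b (rfl | rfl) (rfl | rfl)
    · simpa using ⟨A₁, 3 * l + u, by linarith, e₁⟩
    · beta_reduce
      rw [if_neg (by norm_num)]
      refine A _ _ (3 * l + 2 * k) (by linarith) e₂ fun r hr hr' h => ?_
      rcases le_total r (3 * l) with h3 | h3
      · rw [g1 r h3] at h
        linarith [vm hr]
      · rw [g2 r h3] at h
        linarith [vm hr']
    · beta_reduce
      rw [if_neg (by norm_num)]
      refine A _ _ (3 * l + 2 * k + q) (by linarith) e₃ fun r hr hr' h => ?_
      rcases le_total r (3 * l) with h3 | h3
      · rw [g1 r h3] at h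
        linarith [vm hr]
      · rw [g2 r h3] at h
        linarith [vm hr']
    · beta_reduce
      rw [if_neg (by norm_num)]
      refine A _ _ (3 * l) (by linarith) e₄ fun r hr hr' h => ?_
      rw [g1 r hr'] at h
      linarith [vm hr']
  · have s₁ := rdvTime_le (by linarith) e₁
    have s₂ := rdvTime_le (p := fun t => 1 + -1 * g t) (by linarith) e₂
    have s₃ := rdvTime_le (p := fun t => -1 + 1 * g t) (by linarith) e₃
    have s₄ := rdvTime_le (p := fun t => -1 + -1 * g t) (by linarith) e₄
    have : 3 * l + u + (3 * l + 2 * k) + (3 * l + 2 * k + q) + 3 * l =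
        (24 * v ^ 2 + 52 * v + 20) / ((v + 1) ^ 2 * (3 * v + 1)) := by
      rw [hq, hu, hl, hk]
      field_simp
      ring
    unfold markerSum
    norm_num at s₁ s₂ s₃ s₄ ⊢
    linarith

/-! ### The three regimes -/

/-- Passing from `S < N / D` to `S < N' / D'` when `N / D ≤ N' / D'`, with cleared
denominators. -/
theorem lt_num_of_cross {S D N D' N' : ℝ} (hD : 0 < D) (hD' : 0 < D') (h : S * D < N)
    (hc : N * D' ≤ N' * D) : S * D' < N' := by
  refine lt_of_mul_lt_mul_right ?_ hD.le
  nlinarith [mul_lt_mul_of_pos_right h hD']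

/-- On each of the three intervals the respective candidate value is the least of the three. -/
theorem le_of_not_below_slow {v S : ℝ} (h0 : 0 < v) (h : v ≤ 618 / 1000) (H : ¬Below v S) :
    (4 * v ^ 2 + 16 * v + 8) / (1 + v) ^ 2 ≤ S := by
  by_contra! hS
  rw [lt_div_iff₀ (by positivity)] at hS
  have q₁ : 0 ≤ 1 - v - v ^ 2 := by nlinarith
  have q₂ : 0 ≤ 3 + 3 * v - 7 * v ^ 2 - 3 * v ^ 3 := by nlinarith [mul_nonneg h0.le q₁]
  refine H ⟨hS, lt_num_of_cross (by positivity) (by positivity) hS ?_,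
    lt_num_of_cross (by positivity) (by positivity) hS ?_⟩
  · linarith [mul_nonneg (show 0 ≤ v * (1 + v) ^ 2 by positivity) q₁]
  · linarith [mul_nonneg (show 0 ≤ (1 + v) ^ 2 by positivity) q₂]

theorem le_of_not_below_middle {v S : ℝ} (h : 619 / 1000 ≤ v) (h' : v ≤ 805 / 1000)
    (H : ¬Below v S) : (16 * v ^ 2 + 28 * v + 8) / (1 + v) ^ 3 ≤ S := by
  by_contra! hS
  have h0 : 0 < v := by linarith
  rw [lt_div_iff₀ (by positivity)] at hS
  have q₁ : 0 ≤ -1 + v + v ^ 2 := by nlinarith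
  have q₂ : 0 ≤ 3 + 5 * v - 6 * v ^ 2 - 6 * v ^ 3 := by
    nlinarith [mul_nonneg h0.le (sub_nonneg.2 h'), mul_nonneg (sq_nonneg v) (sub_nonneg.2 h')]
  refine H ⟨lt_num_of_cross (by positivity) (by positivity) hS ?_, hS,
    lt_num_of_cross (by positivity) (by positivity) hS ?_⟩
  · linarith [mul_nonneg (show 0 ≤ v * (1 + v) ^ 2 by positivity) q₁]
  · linarith [mul_nonneg (show 0 ≤ (1 + v) ^ 2 by positivity) q₂]

theorem le_of_not_below_fast {v S : ℝ} (h : 807 / 1000 ≤ v) (H : ¬Below v S) :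
    (24 * v ^ 2 + 52 * v + 20) / ((v + 1) ^ 2 * (3 * v + 1)) ≤ S := by
  by_contra! hS
  have h0 : 0 < v := by linarith
  rw [lt_div_iff₀ (by positivity)] at hS
  have hv : 0 ≤ v ^ 2 * (v - 807 / 1000) := mul_nonneg (sq_nonneg v) (sub_nonneg.2 h)
  have q₁ : 0 ≤ -3 - 5 * v + 6 * v ^ 2 + 6 * v ^ 3 := by nlinarith
  have q₂ : 0 ≤ -3 - 3 * v + 7 * v ^ 2 + 3 * v ^ 3 := by nlinarith
  refine H ⟨lt_num_of_cross (by positivity) (by positivity) hS ?_,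
    lt_num_of_cross (by positivity) (by positivity) hS ?_, hS⟩
  · linarith [mul_nonneg (show 0 ≤ (1 + v) ^ 2 by positivity) q₂]
  · linarith [mul_nonneg (show 0 ≤ (1 + v) ^ 2 by positivity) q₁]

end FastMarker

/-- Value of the marker game when the fast player holds the marker: on
`[1/1000, 618/1000]` it equals `(4v²+16v+8)/(1+v)²`, on `[619/1000, 805/1000]` it equals
`(16v²+28v+8)/(1+v)³` — in both cases the marker is not useful and `W v` coincides with
the value `V v` of the game without marker —, and on `[807/1000, 966/1000]` it equals
`(24v²+52v+20)/((v+1)²(3v+1))`. -/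
theorem fast_marker_game_value :
    (∀ v ∈ Icc (1 / 1000 : ℝ) (618 / 1000),
      W v = (4 * v ^ 2 + 16 * v + 8) / (1 + v) ^ 2 ∧ W v = V v) ∧
    (∀ v ∈ Icc (619 / 1000 : ℝ) (805 / 1000),
      W v = (16 * v ^ 2 + 28 * v + 8) / (1 + v) ^ 3 ∧ W v = V v) ∧
    (∀ v ∈ Icc (807 / 1000 : ℝ) (966 / 1000),
      W v = (24 * v ^ 2 + 52 * v + 20) / ((v + 1) ^ 2 * (3 * v + 1))) := by
  refine ⟨fun v hv => ?_, fun v hv => ?_, fun v hv => ?_⟩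
  · have h0 : 0 < v := by linarith [hv.1]
    have R : FastMarker.Range v :=
      ⟨h0, by linarith [hv.2], Or.inl hv.2, Or.inl (by linarith [hv.2])⟩
    exact FastMarker.values_slow R fun S => FastMarker.le_of_not_below_slow h0 hv.2
  · have R : FastMarker.Range v :=
      ⟨by linarith [hv.1], by linarith [hv.2], Or.inr hv.1, Or.inl hv.2⟩
    exact FastMarker.values_middle R fun S => FastMarker.le_of_not_below_middle hv.1 hv.2
  · have R : FastMarker.Range v :=
      ⟨by linarith [hv.1], hv.2, Or.inr (by linarith [hv.1]), Or.inr hv.1⟩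
    exact FastMarker.value_fast R fun S => FastMarker.le_of_not_below_fast hv.1
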